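/- Let n be a positive integer. If there exists at least one strong representative of order n, then the set S of all strong representatives of order n has positive natural density in the set of primes: there exists δ > 0 such that |{p ∈ S : p ≤ x}| / π(x) tends to δ as x → ∞, where π(x) denotes the number of primes at most x. In particular, S is infinite. -/

import Mathlib

/-!
Write `p = kn + 1`. In the cyclic group `(ℤ/p)ˣ` the congruence `i ^ k = j ^ k` means that `i / j`,
or equivalently `i * j ^ (n - 1)`, is an `n`-th power. Hence the strong representatives are the
primes whose Frobenius elements in the Kummer field `L`, generated by a primitive `n`-th root of
unity `z` and the `n`-th roots of all `i * j ^ (n - 1)` with `1 ≤ i < j ≤ n`, fix `z` and move each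
of these radicals. By inclusion–exclusion their density is computed from the densities `1 / [M : ℚ]`
of the primes that split completely in the Kummer subextensions `M` of `L`; the outcome is the
proportion of `σ ∈ Gal(L/ℚ)` that fix `z` and move each radical. The Frobenius element of a single
strong representative is such a `σ`, so this proportion is positive.

The density `1 / [M : ℚ]` comes from the prime ideal theorem. The Wiener–Ikehara theorem yields it
once the Dedekind zeta function has been continued to `Re s ≥ 1` and shown not to vanish there.
For the continuation, a partition of unity replaces the fundamental domain of the unit group, so
that a partial zeta function becomes a sum `Z(s)` of a smoothed power of the norm over a lattice of
rank `d`. Comparing the lattice with its multiple by `q` continues `(1 - q ^ (d (1 - s))) Z(s)`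
across the line `Re s = 1`, and the choices `q = 2, 3` together remove the zeros of the factor.
-/

namespace StrongRepresentative

open MeasureTheory Set Filter Topology NumberField
open NumberField.InfinitePlace NumberField.Units UniqueFactorizationMonoid
open scoped nonZeroDivisors Pointwise
open Complex (I)

/-! ### The Fejér kernel -/

section Fejer

/-- The Fejér kernel `(sin (v / 2) / (v / 2)) ^ 2`, a nonnegative integrable function whose Fourier
transform is supported in `[-1, 1]`; it is the smoothing kernel of the Tauberian argument. -/
noncomputable def fejer (v : ℝ) : ℝ := Real.sinc (v / 2) ^ 2

lemma fejer_nonneg (v : ℝ) : 0 ≤ fejer v := sq_nonneg _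

@[fun_prop]
lemma continuous_fejer : Continuous fejer := by
  unfold fejer
  exact (Real.continuous_sinc.comp (by fun_prop)).pow 2

lemma fejer_zero : fejer 0 = 1 := by simp [fejer]

lemma fejer_neg (v : ℝ) : fejer (-v) = fejer v := by
  unfold fejer
  rw [neg_div, Real.sinc_neg]

lemma fejer_le_one (v : ℝ) : fejer v ≤ 1 := by
  rw [fejer, ← sq_abs]
  exact pow_le_one₀ (abs_nonneg _) (Real.abs_sinc_le_one _)

lemma fejer_of_ne_zero {v : ℝ} (hv : v ≠ 0) : fejer v = (2 - 2 * Real.cos v) / v ^ 2 := by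
  have hcos : Real.cos v = 1 - 2 * Real.sin (v / 2) ^ 2 := by
    have := Real.cos_two_mul (v / 2)
    rw [mul_div_cancel₀ v two_ne_zero] at this
    rw [this, Real.cos_sq']
    ring
  rw [fejer, Real.sinc_of_ne_zero (by positivity), hcos]
  field_simp
  ring

lemma fejer_le_inv_one_add_sq (v : ℝ) : fejer v ≤ 5 * (1 + v ^ 2)⁻¹ := by
  have hsq : v ^ 2 * fejer v ≤ 4 := by
    rcases eq_or_ne v 0 with rfl | hv
    · simp
    · rw [fejer_of_ne_zero hv, mul_div_cancel₀ _ (by positivity)]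
      linarith [Real.neg_one_le_cos v]
  rw [← div_eq_mul_inv, le_div_iff₀ (by positivity)]
  linarith [fejer_le_one v]

lemma integrable_fejer : Integrable fejer :=
  (integrable_inv_one_add_sq.const_mul 5).mono' continuous_fejer.aestronglyMeasurable
    (ae_of_all _ fun v ↦ by
      rw [Real.norm_of_nonneg (fejer_nonneg v)]
      exact fejer_le_inv_one_add_sq v)

lemma integrable_fejer_sub (y : ℝ) : Integrable fun u ↦ fejer (u - y) :=
  integrable_fejer.comp_sub_right y

lemma integral_fejer_pos : 0 < ∫ v, fejer v := by
  rw [integral_pos_iff_support_of_nonneg fejer_nonneg integrable_fejer]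
  exact continuous_fejer.isOpen_support.measure_pos _ ⟨0, by simp [fejer_zero]⟩

lemma tendsto_integral_fejer_atTop :
    Tendsto (fun R : ℝ ↦ ∫ v in -R..R, fejer v) atTop (𝓝 (∫ v, fejer v)) :=
  intervalIntegral_tendsto_integral integrable_fejer tendsto_neg_atTop_atBot tendsto_id

lemma integral_fejer_sub (y R : ℝ) :
    ∫ u in (y - R)..(y + R), fejer (u - y) = ∫ v in -R..R, fejer v := by
  rw [intervalIntegral.integral_comp_sub_right]
  congr 1 <;> ring

lemma tendsto_integral_Ioi_fejer_sub :
    Tendsto (fun y : ℝ ↦ ∫ u in Ioi 0, fejer (u - y)) atTop (𝓝 (∫ v, fejer v)) := by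
  have hshift (y : ℝ) : ∫ u in Ioi 0, fejer (u - y) = ∫ v in Ioi (-y), fejer v := by
    rw [← integral_indicator measurableSet_Ioi, ← integral_indicator measurableSet_Ioi,
      ← integral_sub_right_eq_self ((Ioi (-y)).indicator fejer) y]
    simp [indicator]
  simp_rw [hshift]
  exact (aecover_Ioi tendsto_neg_atTop_atBot).integral_tendsto_of_countably_generated
    integrable_fejer

lemma integral_one_sub_mul_cos {v : ℝ} (hv : v ≠ 0) :
    ∫ t in (0 : ℝ)..1, (1 - t) * Real.cos (t * v) = (1 - Real.cos v) / v ^ 2 := by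
  have hderiv (t : ℝ) : HasDerivAt
      (fun t ↦ (1 - t) * Real.sin (t * v) / v - Real.cos (t * v) / v ^ 2)
      ((1 - t) * Real.cos (t * v)) t := by
    have hmul : HasDerivAt (fun t : ℝ ↦ t * v) v t := by simpa using (hasDerivAt_id t).mul_const v
    have := ((((hasDerivAt_id t).const_sub 1).mul hmul.sin).div_const v).sub
      (hmul.cos.div_const (v ^ 2))
    convert! this using 1
    simp only [id]
    field_simp
    ring
  rw [intervalIntegral.integral_eq_sub_of_hasDerivAt (fun t _ ↦ hderiv t)
    (Continuous.intervalIntegrable (by fun_prop) _ _)]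
  simp
  ring

lemma two_mul_integral_one_sub_mul_cos (v : ℝ) :
    2 * ∫ t in (0 : ℝ)..1, (1 - t) * Real.cos (t * v) = fejer v := by
  rcases eq_or_ne v 0 with rfl | hv
  · have : ∫ t in (0 : ℝ)..1, (1 - t) = 1 / 2 := by
      rw [intervalIntegral.integral_sub (by simp) (by simp)]
      norm_num
    simp [fejer_zero, this]
  · rw [integral_one_sub_mul_cos hv, fejer_of_ne_zero hv]
    ring

lemma integral_triangle_mul_exp (v : ℝ) :
    ∫ t in (-1 : ℝ)..1, ((1 - |t| : ℝ) : ℂ) * Complex.exp (I * t * v) = fejer v := by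
  set f : ℝ → ℂ := fun t ↦ ((1 - |t| : ℝ) : ℂ) * Complex.exp (I * t * v) with hf
  have hint (a b : ℝ) : IntervalIntegrable f volume a b :=
    Continuous.intervalIntegrable (by fun_prop) _ _
  have hint' (a b : ℝ) : IntervalIntegrable (fun t ↦ f (-t)) volume a b :=
    Continuous.intervalIntegrable (by fun_prop) _ _
  have hfold : ∀ t ∈ uIcc (0 : ℝ) 1,
      f (-t) + f t = ((2 * ((1 - t) * Real.cos (t * v)) : ℝ) : ℂ) := by
    intro t ht
    rw [uIcc_of_le zero_le_one] at ht
    simp only [hf, abs_neg, abs_of_nonneg ht.1]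
    push_cast [Complex.cos]
    ring_nf
  have hneg : ∫ t in (0 : ℝ)..1, f (-t) = ∫ t in (-1 : ℝ)..0, f t := by
    simp
  rw [← intervalIntegral.integral_add_adjacent_intervals (hint (-1) 0) (hint 0 1), ← hneg,
    ← intervalIntegral.integral_add (hint' 0 1) (hint 0 1), intervalIntegral.integral_congr hfold,
    intervalIntegral.integral_ofReal, intervalIntegral.integral_const_mul,
    two_mul_integral_one_sub_mul_cos]

end Fejer

/-! ### Fejér averages and the boundary values of a Laplace transform -/

section Laplace

lemma tendsto_integral_mul_exp_neg_mul {f : ℝ → ℝ} (hf : IntegrableOn f (Ioi 0)) :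
    Tendsto (fun ε : ℝ ↦ ∫ u in Ioi 0, f u * Real.exp (-ε * u)) (𝓝[>] 0)
      (𝓝 (∫ u in Ioi 0, f u)) := by
  refine tendsto_integral_filter_of_dominated_convergence (fun u ↦ ‖f u‖)
    (Eventually.of_forall fun ε ↦
      hf.aestronglyMeasurable.mul (Continuous.aestronglyMeasurable (by fun_prop)))
    ?_ hf.norm (ae_of_all _ fun u ↦ ?_)
  · filter_upwards [self_mem_nhdsWithin] with ε (hε : 0 < ε)
    filter_upwards [ae_restrict_mem measurableSet_Ioi] with u (hu : 0 < u)
    rw [norm_mul, Real.norm_of_nonneg (Real.exp_pos _).le]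
    exact mul_le_of_le_one_right (norm_nonneg _) (Real.exp_le_one_iff.2 (by nlinarith))
  · have : Continuous fun ε : ℝ ↦ f u * Real.exp (-ε * u) := by fun_prop
    simpa using (this.tendsto 0).mono_left nhdsWithin_le_nhds

lemma integrableOn_of_tendsto_integral_mul_exp_neg_mul {f : ℝ → ℝ} {L : ℝ} (hf : ∀ u, 0 ≤ f u)
    (hint : ∀ ε > 0, IntegrableOn (fun u ↦ f u * Real.exp (-ε * u)) (Ioi 0))
    (hlim : Tendsto (fun ε : ℝ ↦ ∫ u in Ioi 0, f u * Real.exp (-ε * u)) (𝓝[>] 0) (𝓝 L)) :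
    IntegrableOn f (Ioi 0) := by
  set ε : ℕ → ℝ := fun n ↦ 1 / ((n : ℝ) + 1)
  have hε_pos (n : ℕ) : 0 < ε n := by positivity
  have hε : Tendsto ε atTop (𝓝[>] 0) := tendsto_nhdsWithin_iff.2
    ⟨tendsto_one_div_add_atTop_nhds_zero_nat, Eventually.of_forall hε_pos⟩
  refine integrable_of_tendsto (G := fun n u ↦ f u * Real.exp (-ε n * u)) (ae_of_all _ fun u ↦ ?_)
    (fun n ↦ (hint _ (hε_pos n)).aestronglyMeasurable) ?_
  · have : Continuous fun ε : ℝ ↦ f u * Real.exp (-ε * u) := by fun_prop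
    simpa [Function.comp_def] using (this.tendsto 0).comp (hε.mono_right nhdsWithin_le_nhds)
  · have hnonneg (n : ℕ) (u : ℝ) : 0 ≤ f u * Real.exp (-ε n * u) :=
      mul_nonneg (hf u) (Real.exp_pos _).le
    have hlint (n : ℕ) : ∫⁻ u in Ioi (0 : ℝ), ‖f u * Real.exp (-ε n * u)‖ₑ
        = ENNReal.ofReal (∫ u in Ioi 0, f u * Real.exp (-ε n * u)) := by
      rw [ofReal_integral_eq_lintegral_ofReal (hint _ (hε_pos n)) (ae_of_all _ (hnonneg n))]
      exact lintegral_congr fun u ↦ Real.enorm_of_nonneg (hnonneg n u)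
    simp_rw [hlint]
    exact (ENNReal.tendsto_ofReal (hlim.comp hε)).liminf_eq.trans_ne ENNReal.ofReal_ne_top

/-- The Fourier integral `∫_{-1}^1 (1 - |t|) e^{i t y} G (ε + i t) dt` of a function `G` along the
line `Re z = ε`, cut off by the triangle function. -/
noncomputable def triangleFourier (G : ℂ → ℂ) (ε y : ℝ) : ℂ :=
  ∫ t in (-1 : ℝ)..1, ((1 - |t| : ℝ) : ℂ) * Complex.exp (I * t * y) * G (ε + I * t)

lemma norm_triangle_mul_exp_le_one {t : ℝ} (ht : t ∈ Ioc (-1) 1) (y : ℝ) :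
    ‖((1 - |t| : ℝ) : ℂ) * Complex.exp (I * t * y)‖ ≤ 1 := by
  have hexp : ‖Complex.exp (I * t * y)‖ = 1 := by simp [Complex.norm_exp]
  have habs : |t| ≤ 1 := abs_le.2 ⟨ht.1.le, ht.2⟩
  rw [norm_mul, hexp, mul_one, Complex.norm_real, Real.norm_of_nonneg (by linarith)]
  linarith [abs_nonneg t]

lemma tendsto_triangleFourier_zero {G : ℂ → ℂ} (hG : ContinuousOn G {z | 0 ≤ z.re}) (y : ℝ) :
    Tendsto (triangleFourier G · y) (𝓝[>] 0) (𝓝 (triangleFourier G 0 y)) := by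
  obtain ⟨C, hC⟩ : ∃ C, ∀ ε ∈ Icc (0 : ℝ) 1, ∀ t ∈ Icc (-1 : ℝ) 1, ‖G (ε + I * t)‖ ≤ C := by
    have hcont : ContinuousOn (fun p : ℝ × ℝ ↦ G (p.1 + I * p.2)) (Icc 0 1 ×ˢ Icc (-1) 1) :=
      hG.comp (by fun_prop) fun p hp ↦ by simpa using hp.1.1
    obtain ⟨C, hC⟩ := (isCompact_Icc.prod isCompact_Icc).exists_bound_of_continuousOn hcont
    exact ⟨C, fun ε hε t ht ↦ hC (ε, t) ⟨hε, ht⟩⟩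
  have hmem : ∀ᶠ ε : ℝ in 𝓝[>] 0, ε ∈ Ioo (0 : ℝ) 1 := Ioo_mem_nhdsGT one_pos
  refine intervalIntegral.tendsto_integral_filter_of_dominated_convergence (fun _ ↦ C) ?_ ?_
    (by simp) (ae_of_all _ fun t _ ↦ Tendsto.mul tendsto_const_nhds ?_)
  · filter_upwards [hmem] with ε hε
    refine (Continuous.mul (by fun_prop) ?_).aestronglyMeasurable
    exact hG.comp_continuous (by fun_prop) fun t ↦ by simpa using hε.1.le
  · filter_upwards [hmem] with ε hε
    refine ae_of_all _ fun t ht ↦ ?_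
    rw [uIoc_of_le (by norm_num)] at ht
    rw [norm_mul]
    exact (mul_le_of_le_one_left (norm_nonneg _) (norm_triangle_mul_exp_le_one ht y)).trans
      (hC ε ⟨hε.1.le, hε.2.le⟩ t ⟨ht.1.le, ht.2⟩)
  · have hline : ContinuousWithinAt (fun ε : ℝ ↦ G (ε + I * t)) (Ioi 0) 0 := by
      refine ContinuousWithinAt.comp (g := G) (f := fun ε : ℝ ↦ (ε : ℂ) + I * t)
        (hG _ (by simp)) (by fun_prop) fun ε (hε : 0 < ε) ↦ ?_
      simpa using hε.le
    exact hline.tendsto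

lemma tendsto_triangleFourier_atTop (G : ℂ → ℂ) (ε : ℝ) :
    Tendsto (triangleFourier G ε) atTop (𝓝 0) := by
  have hRL := Real.tendsto_integral_exp_smul_cocompact
    ((Ioc (-1 : ℝ) 1).indicator fun t ↦ ((1 - |t| : ℝ) : ℂ) * G (ε + I * t))
  have hfreq : Tendsto (fun y : ℝ ↦ -y / (2 * Real.pi)) atTop (cocompact ℝ) :=
    (tendsto_neg_atTop_atBot.atBot_div_const (by positivity)).mono_right atBot_le_cocompact
  refine (hRL.comp hfreq).congr fun y ↦ ?_
  rw [triangleFourier, intervalIntegral.integral_of_le (by norm_num),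
    ← integral_indicator measurableSet_Ioc]
  refine integral_congr_ae (ae_of_all _ fun t ↦ ?_)
  by_cases ht : t ∈ Ioc (-1 : ℝ) 1
  · have harg : ((2 * Real.pi * -(t * (-y / (2 * Real.pi))) : ℝ) : ℂ) * I = I * t * y := by
      have hπ : (Real.pi : ℂ) ≠ 0 := by exact_mod_cast Real.pi_ne_zero
      push_cast
      field_simp
    simp only [indicator_of_mem ht, Circle.smul_def, Real.fourierChar_apply, smul_eq_mul, harg]
    ring
  · simp only [indicator_of_notMem ht, smul_zero]

/-- `B` is a nonnegative function whose Laplace transform over `(0, ∞)` converges for `Re z > 0` and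
equals `A / z + G z` there, with `G` continuous up to the boundary line `Re z = 0`. -/
structure HasLaplacePole (B : ℝ → ℝ) (A : ℝ) (G : ℂ → ℂ) : Prop where
  nonneg : ∀ u, 0 ≤ B u
  integrableOn : ∀ ε > 0, IntegrableOn (fun u ↦ B u * Real.exp (-ε * u)) (Ioi 0)
  continuousOn : ContinuousOn G {z | 0 ≤ z.re}
  laplace_eq : ∀ z : ℂ, 0 < z.re →
    ∫ u in Ioi (0 : ℝ), (B u : ℂ) * Complex.exp (-z * u) = A / z + G z

namespace HasLaplacePole

variable {B : ℝ → ℝ} {A : ℝ} {G : ℂ → ℂ}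

lemma comp_mul_left (h : HasLaplacePole B A G) {r : ℝ} (hr : 0 < r) :
    HasLaplacePole (fun u ↦ B (r * u)) A (fun z ↦ r⁻¹ * G (z / r)) where
  nonneg u := h.nonneg _
  integrableOn ε hε := by
    have hscaled := (integrableOn_Ioi_comp_mul_left_iff
      (fun u ↦ B u * Real.exp (-(ε / r) * u)) 0 hr).2
      (by simpa only [mul_zero] using h.integrableOn (ε / r) (by positivity))
    have hexp (u : ℝ) : -(ε / r) * (r * u) = -ε * u := by field_simp
    simpa only [hexp] using hscaled
  continuousOn := by
    refine continuousOn_const.mul (h.continuousOn.comp (by fun_prop) fun z (hz : 0 ≤ z.re) ↦ ?_)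
    rw [Set.mem_ofPred_eq, Complex.div_ofReal_re]
    positivity
  laplace_eq z hz := by
    have hr0 : (r : ℂ) ≠ 0 := by exact_mod_cast hr.ne'
    have hz0 : z ≠ 0 := by
      rintro rfl
      simp at hz
    have hsubst := integral_comp_mul_left_Ioi
      (fun u ↦ (B u : ℂ) * Complex.exp (-(z / r) * u)) 0 hr
    rw [mul_zero, h.laplace_eq _ (by rw [Complex.div_ofReal_re]; positivity)] at hsubst
    have hexp (u : ℝ) : -(z / r) * (r * u : ℝ) = -z * u := by
      push_cast
      field_simp
    simp only [hexp] at hsubst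
    rw [hsubst, Complex.real_smul]
    push_cast
    field_simp

lemma integrableOn_sub_mul_exp (h : HasLaplacePole B A G) {ε : ℝ} (hε : 0 < ε) :
    IntegrableOn (fun u ↦ (B u - A) * Real.exp (-ε * u)) (Ioi 0) := by
  simp only [sub_mul]
  exact (h.integrableOn ε hε).sub ((exp_neg_integrableOn_Ioi 0 hε).const_mul A)

lemma integrableOn_mul_cexp (h : HasLaplacePole B A G) {z : ℂ} (hz : 0 < z.re) :
    IntegrableOn (fun u : ℝ ↦ (B u : ℂ) * Complex.exp (-z * u)) (Ioi 0) := by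
  refine (integrable_norm_iff ?_).1 ((h.integrableOn z.re hz).congr (ae_of_all _ fun u ↦ ?_))
  · have hB : AEStronglyMeasurable B (volume.restrict (Ioi 0)) := by
      have := (h.integrableOn 1 one_pos).aestronglyMeasurable.mul
        (Continuous.aestronglyMeasurable (f := fun u : ℝ ↦ Real.exp u) (by fun_prop))
      refine this.congr (ae_of_all _ fun u ↦ ?_)
      simp [mul_assoc, ← Real.exp_add]
    exact (Complex.continuous_ofReal.comp_aestronglyMeasurable hB).mul
      (Continuous.aestronglyMeasurable (by fun_prop))
  · simp [Complex.norm_exp, abs_of_nonneg (h.nonneg u)]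

lemma integral_sub_mul_exp_eq (h : HasLaplacePole B A G) {z : ℂ} (hz : 0 < z.re) :
    ∫ u in Ioi (0 : ℝ), ((B u - A : ℝ) : ℂ) * Complex.exp (-z * u) = G z := by
  have hA := integral_exp_mul_complex_Ioi (a := -z) (by simpa using hz) 0
  have hAint : IntegrableOn (fun u : ℝ ↦ (A : ℂ) * Complex.exp (-z * u)) (Ioi 0) :=
    (integrableOn_exp_mul_complex_Ioi (a := -z) (by simpa using hz) 0).const_mul _
  simp only [Complex.ofReal_sub, sub_mul]
  rw [integral_sub (h.integrableOn_mul_cexp hz) hAint, h.laplace_eq z hz,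
    integral_const_mul, hA]
  simp [div_eq_mul_inv]

lemma integral_sub_mul_exp_mul_fejer (h : HasLaplacePole B A G) {ε : ℝ} (hε : 0 < ε) (y : ℝ) :
    ((∫ u in Ioi 0, (B u - A) * Real.exp (-ε * u) * fejer (u - y) : ℝ) : ℂ)
      = triangleFourier G ε y := by
  set D : ℝ → ℂ := fun u ↦ (((B u - A) * Real.exp (-ε * u) : ℝ) : ℂ)
  set k : ℝ → ℝ → ℂ := fun t u ↦ ((1 - |t| : ℝ) : ℂ) * Complex.exp (I * t * (y - u : ℝ))
  have hinner (t : ℝ) : ((1 - |t| : ℝ) : ℂ) * Complex.exp (I * t * y) * G (ε + I * t)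
      = ∫ u in Ioi 0, D u * k t u := by
    rw [← h.integral_sub_mul_exp_eq (z := ε + I * t) (by simpa using hε), ← integral_const_mul]
    refine integral_congr_ae (ae_of_all _ fun u ↦ ?_)
    have hexp : Complex.exp (I * t * y) * Complex.exp (-(ε + I * t) * u)
        = Complex.exp (-ε * u) * Complex.exp (I * t * (y - u : ℝ)) := by
      rw [← Complex.exp_add, ← Complex.exp_add]
      push_cast
      ring_nf
    simp only [D, k]
    push_cast at hexp ⊢
    linear_combination (1 - (|t| : ℝ)) * (B u - A) * hexp
  have hint : Integrable (Function.uncurry fun t u ↦ D u * k t u)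
      ((volume.restrict (Ioc (-1) 1)).prod (volume.restrict (Ioi 0))) := by
    have hone : Integrable (fun _ : ℝ ↦ (1 : ℂ)) (volume.restrict (Ioc (-1 : ℝ) 1)) := by simp
    have hbound : ∀ᵐ p ∂((volume.restrict (Ioc (-1 : ℝ) 1)).prod (volume.restrict (Ioi (0 : ℝ)))),
        ‖k p.1 p.2‖ ≤ 1 := by
      rw [Measure.prod_restrict]
      filter_upwards [ae_restrict_mem (measurableSet_Ioc.prod measurableSet_Ioi)] with p hp
      exact norm_triangle_mul_exp_le_one hp.1 _
    have hprod := (hone.mul_prod ((h.integrableOn_sub_mul_exp hε).ofReal (𝕜 := ℂ))).mul_bdd (c := 1)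
      (Continuous.aestronglyMeasurable (by fun_prop)) hbound
    simpa only [Function.uncurry_def, one_mul, D, RCLike.ofReal_eq_complex_ofReal] using hprod
  simp_rw [triangleFourier, hinner]
  rw [intervalIntegral.integral_of_le (by norm_num), integral_integral_swap hint,
    ← integral_complex_ofReal]
  refine integral_congr_ae (ae_of_all _ fun u ↦ ?_)
  simp only [D, k]
  rw [integral_const_mul, ← intervalIntegral.integral_of_le (by norm_num),
    integral_triangle_mul_exp, ← fejer_neg (u - y), neg_sub]
  push_cast
  rfl

lemma integrableOn_mul_fejer_mul_exp (h : HasLaplacePole B A G) (y : ℝ) {ε : ℝ} (hε : 0 < ε) :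
    IntegrableOn (fun u ↦ B u * fejer (u - y) * Real.exp (-ε * u)) (Ioi 0) := by
  simp only [mul_right_comm _ (fejer _)]
  refine (h.integrableOn ε hε).mul_bdd (c := 1)
    (Continuous.aestronglyMeasurable (by fun_prop)) (ae_of_all _ fun u ↦ ?_)
  rw [Real.norm_of_nonneg (fejer_nonneg _)]
  exact fejer_le_one _

lemma tendsto_integral_mul_fejer_mul_exp (h : HasLaplacePole B A G) (y : ℝ) :
    Tendsto (fun ε : ℝ ↦ ∫ u in Ioi 0, B u * fejer (u - y) * Real.exp (-ε * u)) (𝓝[>] 0)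
      (𝓝 (A * (∫ u in Ioi 0, fejer (u - y)) + (triangleFourier G 0 y).re)) := by
  have hAlim := (tendsto_integral_mul_exp_neg_mul
    (integrable_fejer_sub y).integrableOn).const_mul A
  have hGlim := (Complex.continuous_re.tendsto _).comp (tendsto_triangleFourier_zero
    h.continuousOn y)
  refine (hAlim.add hGlim).congr' ?_
  filter_upwards [self_mem_nhdsWithin] with ε (hε : 0 < ε)
  have hAint : IntegrableOn (fun u ↦ A * (fejer (u - y) * Real.exp (-ε * u))) (Ioi 0) := by
    refine Integrable.const_mul ?_ A
    refine (exp_neg_integrableOn_Ioi 0 hε).bdd_mul (c := 1)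
      (Continuous.aestronglyMeasurable (by fun_prop)) (ae_of_all _ fun u ↦ ?_)
    rw [Real.norm_of_nonneg (fejer_nonneg _)]
    exact fejer_le_one _
  rw [Function.comp_apply, ← h.integral_sub_mul_exp_mul_fejer hε, Complex.ofReal_re,
    ← integral_const_mul, ← eq_sub_iff_add_eq',
    ← integral_sub (h.integrableOn_mul_fejer_mul_exp y hε) hAint]
  congr 1 with u
  ring

lemma integrableOn_mul_fejer (h : HasLaplacePole B A G) (y : ℝ) :
    IntegrableOn (fun u ↦ B u * fejer (u - y)) (Ioi 0) :=
  integrableOn_of_tendsto_integral_mul_exp_neg_mul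
    (fun _ ↦ mul_nonneg (h.nonneg _) (fejer_nonneg _))
    (fun _ ↦ h.integrableOn_mul_fejer_mul_exp y) (h.tendsto_integral_mul_fejer_mul_exp y)

theorem tendsto_integral_mul_fejer (h : HasLaplacePole B A G) :
    Tendsto (fun y : ℝ ↦ ∫ u in Ioi 0, B u * fejer (u - y)) atTop (𝓝 (A * ∫ v, fejer v)) := by
  have heq (y : ℝ) : A * (∫ u in Ioi 0, fejer (u - y)) + (triangleFourier G 0 y).re
      = ∫ u in Ioi 0, B u * fejer (u - y) :=
    tendsto_nhds_unique (h.tendsto_integral_mul_fejer_mul_exp y)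
      (tendsto_integral_mul_exp_neg_mul (h.integrableOn_mul_fejer y))
  have hre := (Complex.continuous_re.tendsto _).comp (tendsto_triangleFourier_atTop G 0)
  simpa [Function.comp_def, heq] using (tendsto_integral_Ioi_fejer_sub.const_mul A).add hre

end HasLaplacePole

end Laplace

/-! ### The Wiener–Ikehara theorem -/

section FejerWindow

variable {b : ℝ → ℝ} {y R : ℝ}

lemma mul_integral_fejer_le_of_le_on_window {m : ℝ} (hb : ∀ u, 0 ≤ b u)
    (hint : IntegrableOn (fun u ↦ b u * fejer (u - y)) (Ioi 0)) (hR : 0 ≤ R) (hRy : R < y)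
    (hm : ∀ u ∈ Icc (y - R) (y + R), m ≤ b u) :
    m * ∫ v in -R..R, fejer v ≤ ∫ u in Ioi 0, b u * fejer (u - y) := by
  have hsub : Ioc (y - R) (y + R) ⊆ Ioi 0 := fun u hu ↦ (sub_pos.2 hRy).trans hu.1
  rw [← integral_fejer_sub y R, intervalIntegral.integral_of_le (by linarith),
    ← integral_const_mul]
  calc ∫ u in Ioc (y - R) (y + R), m * fejer (u - y)
      ≤ ∫ u in Ioc (y - R) (y + R), b u * fejer (u - y) :=
        setIntegral_mono_on ((integrable_fejer_sub y).integrableOn.const_mul m)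
          (hint.mono_set hsub) measurableSet_Ioc fun u hu ↦
          mul_le_mul_of_nonneg_right (hm u (Ioc_subset_Icc_self hu)) (fejer_nonneg _)
    _ ≤ ∫ u in Ioi 0, b u * fejer (u - y) :=
        setIntegral_mono_set hint (ae_of_all _ fun u ↦ mul_nonneg (hb u) (fejer_nonneg _))
          hsub.eventuallyLE

lemma integral_mul_fejer_le_of_le_on_window {M C : ℝ}
    (hint : IntegrableOn (fun u ↦ b u * fejer (u - y)) (Ioi 0)) (hR : 0 ≤ R) (hRy : R < y)
    (hM₀ : 0 ≤ M) (hM : ∀ u ∈ Icc (y - R) (y + R), b u ≤ M)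
    (hC₀ : 0 ≤ C) (hC : ∀ u > 0, b u ≤ C) :
    ∫ u in Ioi 0, b u * fejer (u - y)
      ≤ M * (∫ v, fejer v) + C * ((∫ v, fejer v) - ∫ v in -R..R, fejer v) := by
  set W := Ioc (y - R) (y + R)
  have hsub : W ⊆ Ioi 0 := fun u hu ↦ (sub_pos.2 hRy).trans hu.1
  have hfejer (c : ℝ) (s : Set ℝ) : IntegrableOn (fun u ↦ c * fejer (u - y)) s :=
    (integrable_fejer_sub y).integrableOn.const_mul c
  have hnonneg {c : ℝ} (hc : 0 ≤ c) (u : ℝ) : 0 ≤ c * fejer (u - y) :=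
    mul_nonneg hc (fejer_nonneg _)
  have htotal : ∫ u, fejer (u - y) = ∫ v, fejer v := integral_sub_right_eq_self fejer y
  have houter : ∫ u in Wᶜ, fejer (u - y) = (∫ v, fejer v) - ∫ v in -R..R, fejer v := by
    rw [setIntegral_compl measurableSet_Ioc (integrable_fejer_sub y), htotal,
      ← integral_fejer_sub y R, intervalIntegral.integral_of_le (by linarith)]
  rw [← union_sdiff_cancel hsub, setIntegral_union disjoint_sdiff_right
    (measurableSet_Ioi.diff measurableSet_Ioc) (hint.mono_set hsub) (hint.mono_set sdiff_subset)]
  refine add_le_add ?_ ?_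
  · rw [← htotal, ← integral_const_mul]
    refine (setIntegral_mono_on (hint.mono_set hsub) (hfejer M W) measurableSet_Ioc
      fun u hu ↦ ?_).trans (setIntegral_le_integral
        ((integrable_fejer_sub y).const_mul M) (ae_of_all _ (hnonneg hM₀)))
    exact mul_le_mul_of_nonneg_right (hM u (Ioc_subset_Icc_self hu)) (fejer_nonneg _)
  · rw [← houter, ← integral_const_mul]
    refine (setIntegral_mono_on (hint.mono_set sdiff_subset) (hfejer C _)
      (measurableSet_Ioi.diff measurableSet_Ioc) fun u hu ↦ ?_).trans
      (setIntegral_mono_set (hfejer C _) (ae_of_all _ (hnonneg hC₀))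
        (LE.le.eventuallyLE fun u hu ↦ hu.2))
    exact mul_le_mul_of_nonneg_right (hC u hu.1) (fejer_nonneg _)

end FejerWindow

lemma le_exp_sub_mul_of_monotone_exp_mul {B : ℝ → ℝ} (hmono : Monotone fun u ↦ Real.exp u * B u)
    {x x' : ℝ} (h : x ≤ x') : B x ≤ Real.exp (x' - x) * B x' := by
  rw [Real.exp_sub, div_mul_eq_mul_div, le_div_iff₀ (Real.exp_pos _), mul_comm]
  exact hmono h

namespace HasLaplacePole

variable {B : ℝ → ℝ} {A : ℝ} {G : ℂ → ℂ} {r R y : ℝ}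

lemma exp_neg_mul_le_integral_mul_fejer (h : HasLaplacePole B A G)
    (hmono : Monotone fun u ↦ Real.exp u * B u) (hr : 0 < r) (hR : 0 ≤ R) (hRy : R < y) :
    Real.exp (-(2 * (r * R))) * B (r * (y - R)) * ∫ v in -R..R, fejer v
      ≤ ∫ u in Ioi 0, B (r * u) * fejer (u - y) := by
  refine mul_integral_fejer_le_of_le_on_window (fun u ↦ h.nonneg _)
    ((h.comp_mul_left hr).integrableOn_mul_fejer y) hR hRy fun u hu ↦ ?_
  rw [Real.exp_neg, inv_mul_le_iff₀ (Real.exp_pos _)]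
  refine (le_exp_sub_mul_of_monotone_exp_mul hmono
    (mul_le_mul_of_nonneg_left hu.1 hr.le)).trans ?_
  exact mul_le_mul_of_nonneg_right (Real.exp_le_exp.2 (by nlinarith [hu.2])) (h.nonneg _)

lemma integral_mul_fejer_le_exp_mul (h : HasLaplacePole B A G)
    (hmono : Monotone fun u ↦ Real.exp u * B u) {C : ℝ} (hC : ∀ u > 0, B u ≤ C)
    (hr : 0 < r) (hR : 0 ≤ R) (hRy : R < y) :
    ∫ u in Ioi 0, B (r * u) * fejer (u - y)
      ≤ Real.exp (2 * (r * R)) * B (r * (y + R)) * (∫ v, fejer v)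
        + C * ((∫ v, fejer v) - ∫ v in -R..R, fejer v) := by
  refine integral_mul_fejer_le_of_le_on_window ((h.comp_mul_left hr).integrableOn_mul_fejer y)
    hR hRy (mul_nonneg (Real.exp_pos _).le (h.nonneg _)) (fun u hu ↦ ?_)
    ((h.nonneg 1).trans (hC 1 one_pos)) fun u hu ↦ hC _ (mul_pos hr hu)
  refine (le_exp_sub_mul_of_monotone_exp_mul hmono
    (mul_le_mul_of_nonneg_left hu.2 hr.le)).trans ?_
  exact mul_le_mul_of_nonneg_right (Real.exp_le_exp.2 (by nlinarith [hu.1])) (h.nonneg _)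

lemma eventually_lt_of_gt (h : HasLaplacePole B A G)
    (hmono : Monotone fun u ↦ Real.exp u * B u) {A' : ℝ} (hA' : A < A') :
    ∀ᶠ Y in atTop, B Y < A' := by
  set c := ∫ v, fejer v
  have hc : 0 < c := integral_fejer_pos
  -- A window of radius `R` at scale `R⁻²` has radius `R⁻¹ → 0` in the variable of `B`.
  have hlim : Tendsto (fun R : ℝ ↦ Real.exp (2 * R⁻¹) * (A * c + R⁻¹) / ∫ v in -R..R, fejer v)
      atTop (𝓝 A) := by
    have hexp : Tendsto (fun R : ℝ ↦ Real.exp (2 * R⁻¹)) atTop (𝓝 1) := by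
      simpa [Function.comp_def] using
        (Real.continuous_exp.tendsto _).comp (tendsto_inv_atTop_zero.const_mul (2 : ℝ))
    simpa [Pi.div_def, c, hc.ne'] using (hexp.mul (tendsto_inv_atTop_zero.const_add (A * c))).div
      tendsto_integral_fejer_atTop hc.ne'
  obtain ⟨R, hRA, hRpos, hR⟩ := ((hlim.eventually_lt_const hA').and
    ((tendsto_integral_fejer_atTop.eventually_const_lt hc).and (eventually_gt_atTop 0))).exists
  have hr : 0 < (R ^ 2)⁻¹ := by positivity
  have hcenter : Tendsto (fun Y : ℝ ↦ Y * R ^ 2 + R) atTop atTop :=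
    tendsto_atTop_add_const_right _ _ (tendsto_id.atTop_mul_const (by positivity))
  have hsmooth := (h.comp_mul_left hr).tendsto_integral_mul_fejer.eventually_le_const
    (lt_add_of_pos_right (A * c) (inv_pos.2 hR))
  filter_upwards [hcenter.eventually hsmooth, eventually_gt_atTop 0] with Y hY hY₀
  refine lt_of_le_of_lt ?_ hRA
  have hwindow := (h.exp_neg_mul_le_integral_mul_fejer hmono hr hR.le
    (lt_add_of_pos_left R (by positivity : 0 < Y * R ^ 2))).trans hY
  have hpoint : (R ^ 2)⁻¹ * (Y * R ^ 2 + R - R) = Y := by field_simp; ring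
  have hradius : (R ^ 2)⁻¹ * R = R⁻¹ := by field_simp
  rwa [hpoint, hradius, Real.exp_neg, mul_assoc, inv_mul_le_iff₀ (Real.exp_pos _),
    ← le_div_iff₀ hRpos] at hwindow

lemma exists_forall_le (h : HasLaplacePole B A G)
    (hmono : Monotone fun u ↦ Real.exp u * B u) : ∃ C, ∀ u > 0, B u ≤ C := by
  obtain ⟨U, hU⟩ := eventually_atTop.1 (h.eventually_lt_of_gt hmono (lt_add_one A))
  refine ⟨max (A + 1) (Real.exp U * B U), fun u hu ↦ ?_⟩
  rcases le_total U u with hUu | huU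
  · exact le_max_of_le_left (hU u hUu).le
  · refine le_max_of_le_right ((le_exp_sub_mul_of_monotone_exp_mul hmono huU).trans ?_)
    exact mul_le_mul_of_nonneg_right (Real.exp_le_exp.2 (by linarith)) (h.nonneg _)

lemma eventually_gt_of_lt (h : HasLaplacePole B A G)
    (hmono : Monotone fun u ↦ Real.exp u * B u) {A' : ℝ} (hA' : A' < A) :
    ∀ᶠ Y in atTop, A' < B Y := by
  obtain ⟨C, hC⟩ := h.exists_forall_le hmono
  set c := ∫ v, fejer v
  have hc : 0 < c := integral_fejer_pos
  have hlim : Tendsto (fun R : ℝ ↦ Real.exp (-(2 * R⁻¹)) *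
      ((A * c - R⁻¹ - C * (c - ∫ v in -R..R, fejer v)) / c)) atTop (𝓝 A) := by
    have hexp : Tendsto (fun R : ℝ ↦ Real.exp (-(2 * R⁻¹))) atTop (𝓝 1) := by
      simpa [Function.comp_def] using
        (Real.continuous_exp.tendsto _).comp (tendsto_inv_atTop_zero.const_mul (2 : ℝ)).neg
    simpa [c, hc.ne'] using hexp.mul (((tendsto_inv_atTop_zero.const_sub (A * c)).sub
      ((tendsto_integral_fejer_atTop.const_sub c).const_mul C)).div_const c)
  obtain ⟨R, hRA, hR⟩ := ((hlim.eventually_const_lt hA').and (eventually_gt_atTop 0)).exists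
  have hr : 0 < (R ^ 2)⁻¹ := by positivity
  have hcenter : Tendsto (fun Y : ℝ ↦ Y * R ^ 2 - R) atTop atTop :=
    tendsto_atTop_add_const_right _ _ (tendsto_id.atTop_mul_const (by positivity))
  have hsmooth := (h.comp_mul_left hr).tendsto_integral_mul_fejer.eventually_const_le
    (sub_lt_self (A * c) (inv_pos.2 hR))
  filter_upwards [hcenter.eventually hsmooth, hcenter.eventually_gt_atTop R] with Y hY hRY
  refine hRA.trans_le ?_
  have hwindow := hY.trans (h.integral_mul_fejer_le_exp_mul hmono hC hr hR.le hRY)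
  have hpoint : (R ^ 2)⁻¹ * (Y * R ^ 2 - R + R) = Y := by field_simp; ring
  have hradius : (R ^ 2)⁻¹ * R = R⁻¹ := by field_simp
  rw [hpoint, hradius] at hwindow
  rw [Real.exp_neg, inv_mul_le_iff₀ (Real.exp_pos _), div_le_iff₀ hc]
  linarith

theorem tendsto_of_monotone_exp_mul (h : HasLaplacePole B A G)
    (hmono : Monotone fun u ↦ Real.exp u * B u) : Tendsto B atTop (𝓝 A) :=
  tendsto_order.2 ⟨fun _ ↦ h.eventually_gt_of_lt hmono, fun _ ↦ h.eventually_lt_of_gt hmono⟩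

end HasLaplacePole

section WienerIkehara

variable {a : ℕ → ℝ}

lemma sum_Icc_le_tsum_norm_term_mul_rpow (ha : ∀ n, 0 ≤ a n) {r : ℝ} (hr : 0 ≤ r)
    (hsum : LSeriesSummable (fun n ↦ (a n : ℂ)) r) (n : ℕ) :
    ∑ k ∈ Finset.Icc 1 n, a k ≤ (∑' k, ‖LSeries.term (fun n ↦ (a n : ℂ)) r k‖) * (n : ℝ) ^ r := by
  have hterm : ∀ k ∈ Finset.Icc 1 n,
      a k ≤ ‖LSeries.term (fun n ↦ (a n : ℂ)) r k‖ * (n : ℝ) ^ r := by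
    intro k hk
    rw [Finset.mem_Icc] at hk
    have hk₀ : (0 : ℝ) < k := by exact_mod_cast hk.1
    rw [LSeries.norm_term_eq, if_neg (by omega), Complex.ofReal_re, Complex.norm_real,
      Real.norm_of_nonneg (ha k), div_mul_eq_mul_div, le_div_iff₀ (by positivity)]
    gcongr
    exacts [ha k, hk.2]
  refine (Finset.sum_le_sum hterm).trans ?_
  rw [← Finset.sum_mul]
  gcongr
  exact hsum.norm.sum_le_tsum _ fun _ _ ↦ norm_nonneg _

lemma monotone_sum_Icc_floor (ha : ∀ n, 0 ≤ a n) :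
    Monotone fun x : ℝ ↦ ∑ k ∈ Finset.Icc 1 ⌊x⌋₊, a k := fun _ _ hxy ↦
  Finset.sum_le_sum_of_subset_of_nonneg
    (Finset.Icc_subset_Icc_right (Nat.floor_le_floor hxy)) fun k _ _ ↦ ha k

lemma integrableOn_exp_neg_mul_sum_mul_exp (ha : ∀ n, 0 ≤ a n)
    (hsum : ∀ r : ℝ, 1 < r → LSeriesSummable (fun n ↦ (a n : ℂ)) r) {ε : ℝ} (hε : 0 < ε) :
    IntegrableOn (fun u ↦ Real.exp (-u) * (∑ k ∈ Finset.Icc 1 ⌊Real.exp u⌋₊, a k) *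
      Real.exp (-ε * u)) (Ioi 0) := by
  set C := ∑' k, ‖LSeries.term (fun n ↦ (a n : ℂ)) ((1 + ε / 2 : ℝ) : ℂ) k‖
  have hbound (u : ℝ) : ∑ k ∈ Finset.Icc 1 ⌊Real.exp u⌋₊, a k ≤ C * Real.exp ((1 + ε / 2) * u) := by
    refine (sum_Icc_le_tsum_norm_term_mul_rpow ha (by positivity)
      (hsum (1 + ε / 2) (by linarith)) _).trans ?_
    rw [mul_comm (1 + ε / 2), Real.exp_mul]
    gcongr
    exact Nat.floor_le (Real.exp_pos _).le
  have hmeas : Measurable fun u ↦ ∑ k ∈ Finset.Icc 1 ⌊Real.exp u⌋₊, a k :=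
    (monotone_sum_Icc_floor ha).measurable.comp Real.measurable_exp
  refine ((exp_neg_integrableOn_Ioi 0 (half_pos hε)).const_mul C).mono'
    (Measurable.aestronglyMeasurable (by fun_prop)) (ae_of_all _ fun u ↦ ?_)
  have hnonneg : 0 ≤ ∑ k ∈ Finset.Icc 1 ⌊Real.exp u⌋₊, a k := Finset.sum_nonneg fun k _ ↦ ha k
  rw [Real.norm_of_nonneg (by positivity)]
  calc Real.exp (-u) * (∑ k ∈ Finset.Icc 1 ⌊Real.exp u⌋₊, a k) * Real.exp (-ε * u)
      ≤ Real.exp (-u) * (C * Real.exp ((1 + ε / 2) * u)) * Real.exp (-ε * u) := by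
        gcongr
        exact hbound u
    _ = C * Real.exp (-u + (1 + ε / 2) * u + -ε * u) := by
        rw [Real.exp_add, Real.exp_add]
        ring
    _ = C * Real.exp (-(ε / 2) * u) := by ring_nf

lemma LSeries_eq_mul_laplace (ha : ∀ n, 0 ≤ a n)
    (hsum : ∀ r : ℝ, 1 < r → LSeriesSummable (fun n ↦ (a n : ℂ)) r) {z : ℂ} (hz : 0 < z.re) :
    LSeries (fun n ↦ (a n : ℂ)) (1 + z) = (1 + z) * ∫ u in Ioi (0 : ℝ),
      ((Real.exp (-u) * ∑ k ∈ Finset.Icc 1 ⌊Real.exp u⌋₊, a k : ℝ) : ℂ) * Complex.exp (-z * u) := by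
  have hr : 1 < 1 + z.re / 2 := by linarith
  have hbigO : (fun n : ℕ ↦ ∑ k ∈ Finset.Icc 1 n, a k) =O[atTop]
      fun n ↦ (n : ℝ) ^ (1 + z.re / 2) := by
    refine Asymptotics.IsBigO.of_bound
      (∑' k, ‖LSeries.term (fun n ↦ (a n : ℂ)) ((1 + z.re / 2 : ℝ) : ℂ) k‖)
      (Eventually.of_forall fun n ↦ ?_)
    rw [Real.norm_of_nonneg (Finset.sum_nonneg fun k _ ↦ ha k),
      Real.norm_of_nonneg (by positivity)]
    exact sum_Icc_le_tsum_norm_term_mul_rpow ha (by linarith) (hsum _ hr) n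
  rw [LSeries_eq_mul_integral_of_nonneg a (by linarith) (by simp; linarith) hbigO ha,
    ← Real.exp_zero, ← integral_comp_exp_Ioi]
  congr 1
  refine integral_congr_ae (ae_of_all _ fun u ↦ ?_)
  have hcpow : (Real.exp u : ℂ) ^ (-(1 + z + 1)) = Complex.exp (-(1 + z + 1) * u) := by
    rw [Complex.cpow_def_of_ne_zero (by exact_mod_cast (Real.exp_pos u).ne'),
      ← Complex.ofReal_log (Real.exp_pos _).le, Real.log_exp, mul_comm]
  have hexp : Complex.exp u * Complex.exp (-(1 + z + 1) * u)
      = Complex.exp (-u) * Complex.exp (-z * u) := by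
    rw [← Complex.exp_add, ← Complex.exp_add]
    ring_nf
  simp only [Complex.real_smul, hcpow]
  push_cast
  linear_combination (∑ k ∈ Finset.Icc 1 ⌊Real.exp u⌋₊, (a k : ℂ)) * hexp

variable {A : ℝ} {G : ℂ → ℂ}

lemma hasLaplacePole_exp_neg_mul_sum (ha : ∀ n, 0 ≤ a n)
    (hsum : ∀ r : ℝ, 1 < r → LSeriesSummable (fun n ↦ (a n : ℂ)) r)
    (hG : ContinuousOn G {s | 1 ≤ s.re})
    (hL : ∀ s : ℂ, 1 < s.re → LSeries (fun n ↦ (a n : ℂ)) s = A / (s - 1) + G s) :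
    HasLaplacePole (fun u ↦ Real.exp (-u) * ∑ k ∈ Finset.Icc 1 ⌊Real.exp u⌋₊, a k) A
      (fun z ↦ (G (1 + z) - A) / (1 + z)) where
  nonneg u := mul_nonneg (Real.exp_pos _).le (Finset.sum_nonneg fun k _ ↦ ha k)
  integrableOn ε hε := integrableOn_exp_neg_mul_sum_mul_exp ha hsum hε
  continuousOn := by
    have hshift : ContinuousOn (fun z ↦ G (1 + z)) {z | 0 ≤ z.re} :=
      hG.comp (by fun_prop) fun z (hz : 0 ≤ z.re) ↦ by simpa using hz
    refine (hshift.sub continuousOn_const).div (by fun_prop) fun z (hz : 0 ≤ z.re) h ↦ ?_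
    have := congrArg Complex.re h
    simp only [Complex.add_re, Complex.one_re, Complex.zero_re] at this
    linarith
  laplace_eq z hz := by
    have hz₀ : z ≠ 0 := fun h ↦ by simp [h] at hz
    have hz₁ : 1 + z ≠ 0 := fun h ↦ by
      have := congrArg Complex.re h
      simp only [Complex.add_re, Complex.one_re, Complex.zero_re] at this
      linarith
    have hLaplace := LSeries_eq_mul_laplace ha hsum hz
    rw [hL _ (by simpa using hz), add_sub_cancel_left] at hLaplace
    rw [← mul_right_inj' hz₁, ← hLaplace]
    field_simp
    ring

theorem tendsto_sum_div_of_LSeries_eq (ha : ∀ n, 0 ≤ a n)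
    (hsum : ∀ r : ℝ, 1 < r → LSeriesSummable (fun n ↦ (a n : ℂ)) r)
    (hG : ContinuousOn G {s | 1 ≤ s.re})
    (hL : ∀ s : ℂ, 1 < s.re → LSeries (fun n ↦ (a n : ℂ)) s = A / (s - 1) + G s) :
    Tendsto (fun x : ℝ ↦ (∑ k ∈ Finset.Icc 1 ⌊x⌋₊, a k) / x) atTop (𝓝 A) := by
  have hmono : Monotone fun u ↦
      Real.exp u * (Real.exp (-u) * ∑ k ∈ Finset.Icc 1 ⌊Real.exp u⌋₊, a k) := by
    simp only [← mul_assoc, ← Real.exp_add, add_neg_cancel, Real.exp_zero, one_mul]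
    exact (monotone_sum_Icc_floor ha).comp Real.exp_monotone
  have hlim := (hasLaplacePole_exp_neg_mul_sum ha hsum hG hL).tendsto_of_monotone_exp_mul hmono
  refine (hlim.comp Real.tendsto_log_atTop).congr' ?_
  filter_upwards [eventually_gt_atTop 0] with x hx
  rw [Function.comp_apply, Real.exp_neg, Real.exp_log hx, div_eq_inv_mul]

end WienerIkehara

/-! ### Nonvanishing on the line `Re s = 1` -/

section Nonvanishing

lemma tendsto_sub_mul_logDeriv {f : ℂ → ℂ} {s₀ : ℂ} {m : ℕ} (hf : AnalyticAt ℂ f s₀)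
    (hm : analyticOrderAt f s₀ = m) :
    Tendsto (fun s ↦ (s - s₀) * logDeriv f s) (𝓝[≠] s₀) (𝓝 m) := by
  obtain ⟨g, hg, hg₀, hfg⟩ := hf.analyticOrderAt_eq_natCast.1 hm
  have hlim : Tendsto (fun s ↦ m + (s - s₀) * logDeriv g s) (𝓝[≠] s₀) (𝓝 m) := by
    have hcont : ContinuousAt (fun s ↦ m + (s - s₀) * logDeriv g s) s₀ :=
      continuousAt_const.add ((by fun_prop : ContinuousAt (fun s ↦ s - s₀) s₀).mul
        (hg.deriv.continuousAt.div hg.continuousAt hg₀))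
    simpa using hcont.tendsto.mono_left nhdsWithin_le_nhds
  refine hlim.congr' ?_
  filter_upwards [eventually_nhdsWithin_of_eventually_nhds hfg.eventually_nhds,
    eventually_nhdsWithin_of_eventually_nhds hg.eventually_analyticAt,
    eventually_nhdsWithin_of_eventually_nhds (hg.continuousAt.eventually_ne hg₀),
    self_mem_nhdsWithin] with s hs hgs hgs₀ (hne : s ≠ s₀)
  have hsub : s - s₀ ≠ 0 := sub_ne_zero.2 hne
  have hpow : logDeriv (fun z ↦ (z - s₀) ^ m) s = m / (s - s₀) := by
    rw [logDeriv_fun_pow (by fun_prop), logDeriv_apply]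
    simp [div_eq_mul_inv]
  have hlog : logDeriv f s = m / (s - s₀) + logDeriv g s := by
    have heq : f =ᶠ[𝓝 s] fun z ↦ (z - s₀) ^ m * g z := hs
    rw [logDeriv_apply, heq.deriv_eq, heq.eq_of_nhds, ← logDeriv_apply,
      logDeriv_mul (f := fun z ↦ (z - s₀) ^ m) s (pow_ne_zero m hsub) hgs₀ (by fun_prop)
        hgs.differentiableAt, hpow]
  rw [hlog]
  field_simp

lemma tendsto_add_ofReal_nhdsGT (s₀ : ℂ) :
    Tendsto (fun ε : ℝ ↦ s₀ + ε) (𝓝[>] 0) (𝓝[≠] s₀) := by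
  refine tendsto_nhdsWithin_iff.2 ⟨?_, ?_⟩
  · have : Continuous fun ε : ℝ ↦ s₀ + ε := by fun_prop
    simpa using (this.tendsto 0).mono_left nhdsWithin_le_nhds
  · filter_upwards [self_mem_nhdsWithin] with ε (hε : 0 < ε)
    simpa using hε.ne'

lemma re_term_add_mul_I (Λ : ℕ → ℝ) (x y : ℝ) (n : ℕ) :
    (LSeries.term (fun n ↦ (Λ n : ℂ)) (x + y * I) n).re
      = (LSeries.term (fun n ↦ (Λ n : ℂ)) x n).re * Real.cos (y * Real.log n) := by
  rcases eq_or_ne n 0 with rfl | hn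
  · simp
  have hn₀ : (n : ℂ) ≠ 0 := by exact_mod_cast hn
  have hpow : (n : ℂ) ^ (-(x + y * I))
      = ((n : ℝ) ^ (-x) : ℝ) * Complex.exp (↑(-y * Real.log n) * I) := by
    rw [neg_add, Complex.cpow_add _ _ hn₀, Complex.ofReal_cpow (by positivity),
      Complex.cpow_def_of_ne_zero hn₀ (-(y * I)), ← Complex.natCast_log]
    push_cast
    ring_nf
  have hpow' : (n : ℂ) ^ (-(x : ℂ)) = ((n : ℝ) ^ (-x) : ℝ) := by
    rw [Complex.ofReal_cpow (by positivity)]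
    simp
  rw [LSeries.term_of_ne_zero hn, LSeries.term_of_ne_zero hn, div_eq_mul_inv, div_eq_mul_inv,
    ← Complex.cpow_neg, ← Complex.cpow_neg, hpow, hpow', Complex.re_ofReal_mul,
    Complex.re_ofReal_mul, Complex.re_ofReal_mul, Complex.exp_ofReal_mul_I_re, Complex.ofReal_re,
    neg_mul, Real.cos_neg, mul_assoc]

lemma three_mul_re_add_four_mul_re_add_re_LSeries_nonneg {Λ : ℕ → ℝ} (hΛ : ∀ n, 0 ≤ Λ n) {x : ℝ}
    (hsum : LSeriesSummable (fun n ↦ (Λ n : ℂ)) x) (t : ℝ) :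
    0 ≤ 3 * (LSeries (fun n ↦ (Λ n : ℂ)) x).re + 4 * (LSeries (fun n ↦ (Λ n : ℂ)) (x + t * I)).re
      + (LSeries (fun n ↦ (Λ n : ℂ)) (x + (2 * t : ℝ) * I)).re := by
  have hsum' (y : ℝ) : Summable (LSeries.term (fun n ↦ (Λ n : ℂ)) (x + y * I)) :=
    (LSeriesSummable_iff_of_re_eq_re (by simp)).1 hsum
  have hsum_re (y : ℝ) : Summable fun n ↦ (LSeries.term (fun n ↦ (Λ n : ℂ)) (x + y * I) n).re :=
    Complex.reCLM.summable (hsum' y)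
  have hsum₀ : Summable fun n ↦ (LSeries.term (fun n ↦ (Λ n : ℂ)) x n).re :=
    Complex.reCLM.summable hsum
  simp only [LSeries]
  rw [Complex.re_tsum hsum, Complex.re_tsum (hsum' t), Complex.re_tsum (hsum' (2 * t)),
    ← tsum_mul_left, ← tsum_mul_left, ← (hsum₀.mul_left 3).tsum_add ((hsum_re t).mul_left 4),
    ← ((hsum₀.mul_left 3).add ((hsum_re t).mul_left 4)).tsum_add (hsum_re (2 * t))]
  refine tsum_nonneg fun n ↦ ?_
  have hterm : 0 ≤ (LSeries.term (fun n ↦ (Λ n : ℂ)) x n).re :=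
    (Complex.nonneg_iff.1 (LSeries.term_nonneg (by exact_mod_cast hΛ n) x)).1
  rw [re_term_add_mul_I, re_term_add_mul_I, mul_assoc 2 t, Real.cos_two_mul]
  nlinarith [mul_nonneg hterm (sq_nonneg (1 + Real.cos (t * Real.log n)))]

lemma abscissaOfAbsConv_lt_re {f : ℕ → ℂ} (hf : ∀ x : ℝ, 1 < x → LSeriesSummable f x) {s : ℂ}
    (hs : 1 < s.re) : LSeries.abscissaOfAbsConv f < s.re :=
  (LSeries.abscissaOfAbsConv_le_of_forall_lt_LSeriesSummable
    fun y hy ↦ hf y (by exact_mod_cast hy)).trans_lt (by exact_mod_cast hs)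

section DerivEquation

variable {h W : ℂ → ℂ}

lemma logDeriv_eq_of_deriv_eq {s : ℂ} (hs : 1 < s.re)
    (hderiv : (s - 1) * deriv h s = h s * (1 - (s - 1) * W s)) (hne : h s ≠ 0) :
    logDeriv h s = 1 / (s - 1) - W s := by
  have hs₁ : s - 1 ≠ 0 := sub_ne_zero.2 fun heq ↦ by simp [heq] at hs
  rw [logDeriv_apply, div_eq_iff hne]
  field_simp
  linear_combination hderiv

lemma tendsto_ofReal_mul_of_deriv_eq {s₀ : ℂ} {m : ℕ}
    (hderiv : ∀ s : ℂ, 1 < s.re → (s - 1) * deriv h s = h s * (1 - (s - 1) * W s))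
    (hs₀ : 1 ≤ s₀.re) (hh : AnalyticAt ℂ h s₀) (hm : analyticOrderAt h s₀ = m) :
    Tendsto (fun ε : ℝ ↦ (ε : ℂ) * W (s₀ + ε)) (𝓝[>] 0)
      (𝓝 ((if s₀ = 1 then 1 else 0) - m)) := by
  have happroach := tendsto_add_ofReal_nhdsGT s₀
  have hpole : Tendsto (fun ε : ℝ ↦ (ε : ℂ) / (s₀ + ε - 1)) (𝓝[>] 0)
      (𝓝 (if s₀ = 1 then 1 else 0)) := by
    split_ifs with hs₁
    · refine tendsto_const_nhds.congr' ?_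
      filter_upwards [self_mem_nhdsWithin] with ε (hε : 0 < ε)
      have hε₀ : (ε : ℂ) ≠ 0 := by exact_mod_cast hε.ne'
      rw [hs₁, add_sub_cancel_left, div_self hε₀]
    · have hcont : ContinuousAt (fun ε : ℝ ↦ (ε : ℂ) / (s₀ + ε - 1)) 0 :=
        ContinuousAt.div (by fun_prop) (by fun_prop) (by simpa [sub_eq_zero] using hs₁)
      simpa using hcont.tendsto.mono_left nhdsWithin_le_nhds
  have hzero : ∀ᶠ s in 𝓝[≠] s₀, h s ≠ 0 :=
    hh.eventually_eq_zero_or_eventually_ne_zero.resolve_left fun htop ↦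
      ENat.natCast_ne_top m (hm.symm.trans (analyticOrderAt_eq_top.2 htop))
  refine (hpole.sub ((tendsto_sub_mul_logDeriv hh hm).comp happroach)).congr' ?_
  filter_upwards [happroach.eventually hzero, self_mem_nhdsWithin] with ε hne (hε : 0 < ε)
  have hre : 1 < (s₀ + ε).re := by
    simp only [Complex.add_re, Complex.ofReal_re]
    linarith
  rw [Function.comp_apply, logDeriv_eq_of_deriv_eq hre (hderiv _ hre) hne]
  ring

lemma exists_analyticOrderAt_eq_natCast (hh : ∀ s : ℂ, 1 ≤ s.re → AnalyticAt ℂ h s)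
    (hh₁ : h 1 ≠ 0) {s : ℂ} (hs : 1 ≤ s.re) : ∃ m : ℕ, analyticOrderAt h s = m := by
  suffices analyticOrderAt h s ≠ ⊤ by
    obtain ⟨m, hm⟩ := ENat.ne_top_iff_exists.1 this
    exact ⟨m, hm.symm⟩
  intro htop
  refine hh₁ (AnalyticOnNhd.eqOn_zero_of_preconnected_of_eventuallyEq_zero
    (U := {s : ℂ | 1 ≤ s.re}) hh (convex_halfSpace_re_ge 1).isPreconnected hs
    (analyticOrderAt_eq_top.1 htop) ?_)
  simp

lemma ne_zero_of_one_lt_re (hh : ∀ s : ℂ, 1 ≤ s.re → AnalyticAt ℂ h s) (hh₁ : h 1 ≠ 0)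
    (hderiv : ∀ s : ℂ, 1 < s.re → (s - 1) * deriv h s = h s * (1 - (s - 1) * W s))
    {s : ℂ} (hs : 1 < s.re) (hW : ContinuousAt W s) : h s ≠ 0 := by
  obtain ⟨m, hm⟩ := exists_analyticOrderAt_eq_natCast hh hh₁ hs.le
  have hs₁ : s ≠ 1 := by
    rintro rfl
    simp at hs
  have hlim := tendsto_ofReal_mul_of_deriv_eq hderiv hs.le (hh s hs.le) hm
  have hlim₀ : Tendsto (fun ε : ℝ ↦ (ε : ℂ) * W (s + ε)) (𝓝[>] 0) (𝓝 0) := by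
    have hε : Tendsto (fun ε : ℝ ↦ (ε : ℂ)) (𝓝[>] 0) (𝓝 0) := by
      simpa using (Complex.continuous_ofReal.tendsto 0).mono_left nhdsWithin_le_nhds
    simpa using hε.mul (hW.tendsto.comp
      ((tendsto_add_ofReal_nhdsGT s).mono_right nhdsWithin_le_nhds))
  have hm₀ : m = 0 := by simpa [hs₁] using tendsto_nhds_unique hlim hlim₀
  rw [hm₀, Nat.cast_zero, (hh s hs.le).analyticOrderAt_eq_zero] at hm
  exact hm

end DerivEquation

variable {Λ : ℕ → ℝ} {h : ℂ → ℂ}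

-- Mertens: orders `m` at `1 + it` and `m'` at `1 + 2it` would give `3 - 4m - m' ≥ 0`.
lemma ne_zero_of_re_eq_one (hΛ : ∀ n, 0 ≤ Λ n)
    (hsum : ∀ x : ℝ, 1 < x → LSeriesSummable (fun n ↦ (Λ n : ℂ)) x)
    (hh : ∀ s : ℂ, 1 ≤ s.re → AnalyticAt ℂ h s) (hh₁ : h 1 ≠ 0)
    (hderiv : ∀ s : ℂ, 1 < s.re →
      (s - 1) * deriv h s = h s * (1 - (s - 1) * LSeries (fun n ↦ (Λ n : ℂ)) s))
    {t : ℝ} (ht : t ≠ 0) : h (1 + t * I) ≠ 0 := by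
  have hre (y : ℝ) : 1 ≤ (1 + y * I : ℂ).re := by simp
  obtain ⟨m, hm⟩ := exists_analyticOrderAt_eq_natCast hh hh₁ (hre t)
  obtain ⟨m', hm'⟩ := exists_analyticOrderAt_eq_natCast hh hh₁ (hre (2 * t))
  have hm₁ : analyticOrderAt h 1 = (0 : ℕ) := (hh 1 (by simp)).analyticOrderAt_eq_zero.2 hh₁
  have hlim {s₀ : ℂ} {k : ℕ} (hs₀ : 1 ≤ s₀.re) (hk : analyticOrderAt h s₀ = k) :=
    (Complex.continuous_re.tendsto _).comp
      (tendsto_ofReal_mul_of_deriv_eq hderiv hs₀ (hh s₀ hs₀) hk)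
  have hnonneg := ge_of_tendsto (b := 0) ((((hlim (by simp) hm₁).const_mul 3).add
    ((hlim (hre t) hm).const_mul 4)).add (hlim (hre (2 * t)) hm')) (by
      filter_upwards [self_mem_nhdsWithin] with ε (hε : 0 < ε)
      have h341 := three_mul_re_add_four_mul_re_add_re_LSeries_nonneg hΛ
        (hsum (1 + ε) (by linarith)) t
      have hshift (y : ℝ) : (1 + y * I + ε : ℂ) = ((1 + ε : ℝ) : ℂ) + y * I := by
        push_cast
        ring
      have hshift₀ : (1 + ε : ℂ) = ((1 + ε : ℝ) : ℂ) := by push_cast; rfl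
      simp only [Function.comp_apply, Complex.re_ofReal_mul, hshift]
      rw [hshift₀]
      nlinarith [mul_nonneg hε.le h341])
  have horders : (m' : ℝ) ≤ 3 - 4 * m := by simpa [ht, ← sub_eq_add_neg] using hnonneg
  have hm₀ : m = 0 := by
    by_contra hm₀
    have : (1 : ℝ) ≤ m := by exact_mod_cast Nat.one_le_iff_ne_zero.2 hm₀
    linarith [(Nat.cast_nonneg m' : (0 : ℝ) ≤ m')]
  rwa [hm₀, Nat.cast_zero, (hh _ (hre t)).analyticOrderAt_eq_zero] at hm

lemma ne_zero_of_one_le_re (hΛ : ∀ n, 0 ≤ Λ n)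
    (hsum : ∀ x : ℝ, 1 < x → LSeriesSummable (fun n ↦ (Λ n : ℂ)) x)
    (hh : ∀ s : ℂ, 1 ≤ s.re → AnalyticAt ℂ h s) (hh₁ : h 1 ≠ 0)
    (hderiv : ∀ s : ℂ, 1 < s.re →
      (s - 1) * deriv h s = h s * (1 - (s - 1) * LSeries (fun n ↦ (Λ n : ℂ)) s))
    {s : ℂ} (hs : 1 ≤ s.re) : h s ≠ 0 := by
  rcases hs.lt_or_eq with hlt | heq
  · exact ne_zero_of_one_lt_re hh hh₁ hderiv hlt
      (LSeries_hasDerivAt (abscissaOfAbsConv_lt_re hsum hlt)).continuousAt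
  · have hs_eq : s = 1 + s.im * I := Complex.ext (by simp [← heq]) (by simp)
    rcases eq_or_ne s.im 0 with him | him
    · rwa [hs_eq, him, Complex.ofReal_zero, zero_mul, add_zero]
    · rw [hs_eq]
      exact ne_zero_of_re_eq_one hΛ hsum hh hh₁ hderiv him

theorem exists_continuousOn_LSeries_eq_one_div_add {r : ℕ → ℝ} (hΛ : ∀ n, 0 ≤ Λ n)
    (hr : ∀ x : ℝ, 1 < x → LSeriesSummable (fun n ↦ (r n : ℂ)) x)
    (hsum : ∀ x : ℝ, 1 < x → LSeriesSummable (fun n ↦ (Λ n : ℂ)) x)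
    (hh : ∀ s : ℂ, 1 ≤ s.re → AnalyticAt ℂ h s) (hh₁ : h 1 ≠ 0)
    (hhr : ∀ s : ℂ, 1 < s.re → h s = (s - 1) * LSeries (fun n ↦ (r n : ℂ)) s)
    (hlog : ∀ s : ℂ, 1 < s.re → LSeries (LSeries.logMul fun n ↦ (r n : ℂ)) s =
      LSeries (fun n ↦ (r n : ℂ)) s * LSeries (fun n ↦ (Λ n : ℂ)) s) :
    ∃ G : ℂ → ℂ, ContinuousOn G {s | 1 ≤ s.re} ∧
      ∀ s : ℂ, 1 < s.re → LSeries (fun n ↦ (Λ n : ℂ)) s = 1 / (s - 1) + G s := by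
  have hderiv (s : ℂ) (hs : 1 < s.re) :
      (s - 1) * deriv h s = h s * (1 - (s - 1) * LSeries (fun n ↦ (Λ n : ℂ)) s) := by
    have hopen : IsOpen {s : ℂ | 1 < s.re} := isOpen_lt continuous_const Complex.continuous_re
    have hprod := (((hasDerivAt_id s).sub_const 1).mul
      (LSeries_hasDerivAt (abscissaOfAbsConv_lt_re hr hs))).congr_of_eventuallyEq (f₁ := h)
      (by filter_upwards [hopen.mem_nhds hs] with w hw using by simpa using hhr w hw)
    rw [hprod.deriv, hlog s hs, hhr s hs]
    simp only [id]
    ring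
  have hne {s : ℂ} (hs : 1 ≤ s.re) : h s ≠ 0 := ne_zero_of_one_le_re hΛ hsum hh hh₁ hderiv hs
  refine ⟨fun s ↦ -logDeriv h s, fun s hs ↦ ?_, fun s hs ↦ ?_⟩
  · exact ((hh s hs).deriv.continuousAt.div (hh s hs).continuousAt
      (hne hs)).neg.continuousWithinAt
  · dsimp only
    rw [logDeriv_eq_of_deriv_eq hs (hderiv s hs) (hne hs.le)]
    ring

end Nonvanishing

/-! ### Removing the zeros of `1 - q ^ (d (1 - s))` -/

section ScaleFactor

/-- The entire function `1 - q ^ (d (1 - s))`: the factor that multiplication of a rank-`d` lattice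
by `q` produces in its Dirichlet series, cancelling the pole at `s = 1`. -/
noncomputable def scaleFactor (d q : ℕ) (s : ℂ) : ℂ :=
  1 - Complex.exp ((Real.log q : ℝ) * (d * (1 - s)))

lemma differentiable_scaleFactor (d q : ℕ) : Differentiable ℂ (scaleFactor d q) := by
  unfold scaleFactor
  fun_prop

lemma scaleFactor_one (d q : ℕ) : scaleFactor d q 1 = 0 := by simp [scaleFactor]

lemma deriv_scaleFactor_one (d q : ℕ) : deriv (scaleFactor d q) 1 = d * (Real.log q : ℝ) := by
  have hderiv : HasDerivAt (scaleFactor d q) (0 - Complex.exp ((Real.log q : ℝ) * (d * (1 - 1))) *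
      ((Real.log q : ℝ) * (d * (0 - 1)))) 1 :=
    (hasDerivAt_const _ _).sub (HasDerivAt.cexp
      ((((hasDerivAt_const _ _).sub (hasDerivAt_id _)).const_mul _).const_mul _))
  rw [hderiv.deriv]
  simp [mul_comm]

/-- The quotient of `scaleFactor d q` by `s - 1`, with its removable singularity filled in. -/
noncomputable def reducedScaleFactor (d q : ℕ) : ℂ → ℂ := dslope (scaleFactor d q) 1

lemma analyticAt_reducedScaleFactor (d q : ℕ) (s : ℂ) :
    AnalyticAt ℂ (reducedScaleFactor d q) s := by
  have hdiff : DifferentiableOn ℂ (reducedScaleFactor d q) univ :=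
    (Complex.differentiableOn_dslope univ_mem).2 (differentiable_scaleFactor d q).differentiableOn
  exact (differentiableOn_univ.1 hdiff).analyticAt s

lemma sub_one_mul_reducedScaleFactor (d q : ℕ) (s : ℂ) :
    (s - 1) * reducedScaleFactor d q s = scaleFactor d q s := by
  simpa [scaleFactor_one, reducedScaleFactor] using sub_smul_dslope (scaleFactor d q) 1 s

variable {d : ℕ}

lemma ne_one_of_reducedScaleFactor_eq_zero (hd : 0 < d) {q : ℕ} (hq : 2 ≤ q) {s : ℂ}
    (hs : reducedScaleFactor d q s = 0) : s ≠ 1 := by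
  have hlog : Real.log q ≠ 0 := (Real.log_pos (by exact_mod_cast hq)).ne'
  rintro rfl
  rw [reducedScaleFactor, dslope_same, deriv_scaleFactor_one] at hs
  rcases mul_eq_zero.1 hs with h | h
  · exact hd.ne' (by exact_mod_cast h)
  · exact hlog (by exact_mod_cast h)

lemma exists_int_of_reducedScaleFactor_eq_zero {q : ℕ} {s : ℂ}
    (hs : reducedScaleFactor d q s = 0) :
    ∃ k : ℤ, (Real.log q : ℝ) * (d * (1 - s)) = k * (2 * Real.pi * I) := by
  have hfactor := sub_one_mul_reducedScaleFactor d q s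
  rw [hs, mul_zero, scaleFactor, eq_comm, sub_eq_zero, eq_comm, Complex.exp_eq_one_iff] at hfactor
  exact hfactor

lemma eq_zero_of_log_two_mul_eq_log_three_mul {k l : ℤ}
    (h : Real.log 2 * l = Real.log 3 * k) : k = 0 := by
  have hlog₂ : 0 < Real.log 2 := Real.log_pos (by norm_num)
  have hlog₃ : 0 < Real.log 3 := Real.log_pos (by norm_num)
  have habs : Real.log ((2 : ℝ) ^ l.natAbs) = Real.log ((3 : ℝ) ^ k.natAbs) := by
    have := congrArg abs h
    rw [abs_mul, abs_mul, abs_of_pos hlog₂, abs_of_pos hlog₃] at this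
    rw [Real.log_pow, Real.log_pow, Nat.cast_natAbs, Nat.cast_natAbs]
    push_cast
    linarith
  have hpow : 2 ^ l.natAbs = 3 ^ k.natAbs := by
    exact_mod_cast Real.log_injOn_pos (by simp) (by simp) habs
  by_contra hk
  have hdvd : 3 ∣ 2 ^ l.natAbs := hpow ▸ dvd_pow_self 3 (Int.natAbs_ne_zero.2 hk)
  have := Nat.prime_three.dvd_of_dvd_pow hdvd
  omega

-- Zeros of the two factors lie in `(2πi / log 2) ℤ` and `(2πi / log 3) ℤ`, up to `d` and a shift.
lemma reducedScaleFactor_three_ne_zero (hd : 0 < d) {s : ℂ} (h₂ : reducedScaleFactor d 2 s = 0) :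
    reducedScaleFactor d 3 s ≠ 0 := by
  intro h₃
  have hs := ne_one_of_reducedScaleFactor_eq_zero hd le_rfl h₂
  obtain ⟨k, hk⟩ := exists_int_of_reducedScaleFactor_eq_zero h₂
  obtain ⟨l, hl⟩ := exists_int_of_reducedScaleFactor_eq_zero h₃
  have hπ : (2 * Real.pi * I : ℂ) ≠ 0 := by simp [Real.pi_ne_zero]
  have hexp : (d * (1 - s) : ℂ) ≠ 0 :=
    mul_ne_zero (by exact_mod_cast hd.ne') (sub_ne_zero.2 hs.symm)
  have hlog₂ : Real.log 2 ≠ 0 := (Real.log_pos (by norm_num)).ne'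
  have hkl : ((Real.log 2 * l : ℝ) : ℂ) = ((Real.log 3 * k : ℝ) : ℂ) := by
    apply mul_right_cancel₀ (mul_ne_zero hexp hπ)
    push_cast at *
    linear_combination (l * (2 * Real.pi * I)) * hk - (k * (2 * Real.pi * I)) * hl
  have hk₀ : k = 0 := eq_zero_of_log_two_mul_eq_log_three_mul (by exact_mod_cast hkl)
  rw [hk₀, Int.cast_zero, zero_mul, mul_eq_zero] at hk
  rcases hk with hlog | hzero
  · exact hlog₂ (by exact_mod_cast hlog)
  · exact hexp hzero

section Continuation

variable {Z H₂ H₃ : ℂ → ℂ} {c : ℝ}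

lemma isOpen_setOf_lt_re (c : ℝ) : IsOpen {s : ℂ | c < s.re} :=
  isOpen_lt continuous_const Complex.continuous_re

lemma mul_reducedScaleFactor_comm (hc : c < 1) (hH₂ : AnalyticOnNhd ℂ H₂ {s | c < s.re})
    (hH₃ : AnalyticOnNhd ℂ H₃ {s | c < s.re})
    (hZ₂ : ∀ s : ℂ, 1 < s.re → Z s * scaleFactor d 2 s = H₂ s)
    (hZ₃ : ∀ s : ℂ, 1 < s.re → Z s * scaleFactor d 3 s = H₃ s) {s : ℂ} (hs : c < s.re) :
    H₂ s * reducedScaleFactor d 3 s = H₃ s * reducedScaleFactor d 2 s := by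
  refine AnalyticOnNhd.eqOn_of_preconnected_of_eventuallyEq (z₀ := 2)
    (f := fun s ↦ H₂ s * reducedScaleFactor d 3 s) (g := fun s ↦ H₃ s * reducedScaleFactor d 2 s)
    (fun z hz ↦ (hH₂ z hz).mul (analyticAt_reducedScaleFactor d 3 z))
    (fun z hz ↦ (hH₃ z hz).mul (analyticAt_reducedScaleFactor d 2 z))
    (convex_halfSpace_re_gt c).isPreconnected ?_ ?_ hs
  · change c < (2 : ℂ).re
    norm_num
    linarith
  · filter_upwards [(isOpen_setOf_lt_re 1).mem_nhds (by simp : (2 : ℂ) ∈ {s : ℂ | 1 < s.re})]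
      with w hw
    rw [← hZ₂ w hw, ← hZ₃ w hw, ← sub_one_mul_reducedScaleFactor,
      ← sub_one_mul_reducedScaleFactor]
    ring

lemma exists_analyticAt_eq_sub_one_mul (hd : 0 < d) (hc : c < 1)
    (hH₂ : DifferentiableOn ℂ H₂ {s | c < s.re}) (hH₃ : DifferentiableOn ℂ H₃ {s | c < s.re})
    (hZ₂ : ∀ s : ℂ, 1 < s.re → Z s * scaleFactor d 2 s = H₂ s)
    (hZ₃ : ∀ s : ℂ, 1 < s.re → Z s * scaleFactor d 3 s = H₃ s) :
    ∃ h : ℂ → ℂ, (∀ s : ℂ, 1 ≤ s.re → AnalyticAt ℂ h s) ∧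
      ∀ s : ℂ, 1 < s.re → h s = (s - 1) * Z s := by
  classical
  have hA₂ := hH₂.analyticOnNhd (isOpen_setOf_lt_re c)
  have hA₃ := hH₃.analyticOnNhd (isOpen_setOf_lt_re c)
  set E := reducedScaleFactor d
  have hE : ∀ q s, AnalyticAt ℂ (E q) s := analyticAt_reducedScaleFactor d
  set h : ℂ → ℂ := fun s ↦ if E 2 s = 0 then H₃ s / E 3 s else H₂ s / E 2 s with hh
  refine ⟨h, fun s hs ↦ ?_, fun s hs ↦ ?_⟩
  · have hsc : c < s.re := hc.trans_le hs
    by_cases hE₂ : E 2 s = 0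
    · have hE₃ := reducedScaleFactor_three_ne_zero hd hE₂
      refine ((hA₃ s hsc).div (hE 3 s) hE₃).congr ?_
      filter_upwards [(isOpen_setOf_lt_re c).mem_nhds hsc,
        (hE 3 s).continuousAt.eventually_ne hE₃] with w hw hw₃
      simp only [hh, Pi.div_apply]
      split_ifs with hw₂
      · rfl
      · rw [div_eq_div_iff hw₃ hw₂]
        exact (mul_reducedScaleFactor_comm hc hA₂ hA₃ hZ₂ hZ₃ hw).symm
    · refine ((hA₂ s hsc).div (hE 2 s) hE₂).congr ?_
      filter_upwards [(hE 2 s).continuousAt.eventually_ne hE₂] with w hw₂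
      simp only [hh, Pi.div_apply, if_neg hw₂]
  · simp only [hh]
    split_ifs with hE₂
    · rw [div_eq_iff (reducedScaleFactor_three_ne_zero hd hE₂), ← hZ₃ s hs,
        ← sub_one_mul_reducedScaleFactor]
      ring
    · rw [div_eq_iff hE₂, ← hZ₂ s hs, ← sub_one_mul_reducedScaleFactor]
      ring

lemma eq_of_tendsto_sub_one_mul {h : ℂ → ℂ} {κ : ℂ} (hh : ContinuousAt h 1)
    (hZ : ∀ s : ℂ, 1 < s.re → h s = (s - 1) * Z s)
    (hκ : Tendsto (fun s : ℝ ↦ ((s : ℂ) - 1) * Z s) (𝓝[>] 1) (𝓝 κ)) : h 1 = κ := by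
  have happroach : Tendsto (fun s : ℝ ↦ (s : ℂ)) (𝓝[>] 1) (𝓝 1) := by
    simpa using (Complex.continuous_ofReal.tendsto 1).mono_left nhdsWithin_le_nhds
  refine tendsto_nhds_unique (hh.tendsto.comp happroach) (hκ.congr' ?_)
  filter_upwards [self_mem_nhdsWithin] with s (hs : 1 < s)
  exact (hZ s (by simpa using hs)).symm

end Continuation

end ScaleFactor

/-! ### A partition of unity under the action of the unit group -/

section Tent

/-- The tent function `max 0 (1 - |t|)`, whose integer translates sum to `1`. -/
noncomputable def tent (t : ℝ) : ℝ := max 0 (1 - |t|)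

lemma tent_nonneg (t : ℝ) : 0 ≤ tent t := le_max_left _ _

lemma tent_le_one (t : ℝ) : tent t ≤ 1 := max_le zero_le_one (by linarith [abs_nonneg t])

lemma tent_of_abs_le {t : ℝ} (ht : |t| ≤ 1) : tent t = 1 - |t| := max_eq_right (by linarith)

lemma abs_lt_one_of_tent_ne_zero {t : ℝ} (ht : tent t ≠ 0) : |t| < 1 := by
  contrapose! ht
  exact max_eq_left (by linarith)

lemma abs_tent_sub_tent_le (s t : ℝ) : |tent s - tent t| ≤ |s - t| := by
  calc |tent s - tent t| ≤ |(1 - |s|) - (1 - |t|)| := by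
        simpa only [tent, max_comm (0 : ℝ)] using abs_max_sub_max_le_abs (1 - |s|) (1 - |t|) 0
    _ = |(|t| - |s|)| := by rw [sub_sub_sub_cancel_left]
    _ ≤ |t - s| := abs_abs_sub_abs_le t s
    _ = |s - t| := abs_sub_comm t s

lemma tent_add_int_eq_zero {c : ℝ} {a : ℤ} (ha : a ∉ ({-⌊c⌋, -⌊c⌋ - 1} : Finset ℤ)) :
    tent (c + a) = 0 := by
  by_contra hne
  obtain ⟨hlow, hhigh⟩ := abs_lt.1 (abs_lt_one_of_tent_ne_zero hne)
  have hfloor := Int.floor_le c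
  have hlt := Int.lt_floor_add_one c
  have hlow' : -2 < ⌊c⌋ + a := by exact_mod_cast (by linarith : (-2 : ℝ) < ⌊c⌋ + a)
  have hhigh' : ⌊c⌋ + a < 1 := by exact_mod_cast (by linarith : (⌊c⌋ + a : ℝ) < 1)
  simp only [Finset.mem_insert, Finset.mem_singleton, not_or] at ha
  omega

lemma sum_tent_add_int (c : ℝ) :
    ∑ a ∈ ({-⌊c⌋, -⌊c⌋ - 1} : Finset ℤ), tent (c + a) = 1 := by
  have hfloor := Int.floor_le c
  have hlt := Int.lt_floor_add_one c
  rw [Finset.sum_pair (by omega), tent_of_abs_le, tent_of_abs_le]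
  all_goals push_cast
  · rw [abs_of_nonneg (by linarith : 0 ≤ c + -(⌊c⌋ : ℝ)),
      abs_of_nonpos (by linarith : c + (-(⌊c⌋ : ℝ) - 1) ≤ 0)]
    ring
  all_goals exact abs_le.2 ⟨by linarith, by linarith⟩

lemma hasSum_prod_tent_add_int {ι : Type*} [Fintype ι] (c : ι → ℝ) :
    HasSum (fun a : ι → ℤ ↦ ∏ i, tent (c i + a i)) 1 := by
  classical
  set S : ι → Finset ℤ := fun i ↦ {-⌊c i⌋, -⌊c i⌋ - 1}
  have hsum : ∑ a ∈ Fintype.piFinset S, ∏ i, tent (c i + a i) = 1 := by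
    rw [← Finset.prod_univ_sum S fun i (a : ℤ) ↦ tent (c i + a)]
    exact Finset.prod_eq_one fun i _ ↦ sum_tent_add_int (c i)
  rw [← hsum]
  refine hasSum_sum_of_ne_finset_zero fun a ha ↦ ?_
  obtain ⟨i, hi⟩ := not_forall.1 (mt Fintype.mem_piFinset.2 ha)
  exact Finset.prod_eq_zero (Finset.mem_univ i) (tent_add_int_eq_zero hi)

lemma abs_prod_tent_sub_prod_tent_le {ι : Type*} (s : Finset ι) (c c' : ι → ℝ) :
    |∏ i ∈ s, tent (c i) - ∏ i ∈ s, tent (c' i)| ≤ ∑ i ∈ s, |c i - c' i| := by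
  classical
  induction s using Finset.induction_on with
  | empty => simp
  | insert i s hi ih =>
    have hprod : |∏ j ∈ s, tent (c j)| ≤ 1 := by
      rw [abs_of_nonneg (Finset.prod_nonneg fun _ _ ↦ tent_nonneg _)]
      exact Finset.prod_le_one (fun _ _ ↦ tent_nonneg _) fun _ _ ↦ tent_le_one _
    have htent : |tent (c' i)| ≤ 1 := by
      rw [abs_of_nonneg (tent_nonneg _)]
      exact tent_le_one _
    rw [Finset.prod_insert hi, Finset.prod_insert hi, Finset.sum_insert hi]
    calc |tent (c i) * ∏ j ∈ s, tent (c j) - tent (c' i) * ∏ j ∈ s, tent (c' j)|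
        = |(tent (c i) - tent (c' i)) * ∏ j ∈ s, tent (c j) +
            tent (c' i) * (∏ j ∈ s, tent (c j) - ∏ j ∈ s, tent (c' j))| := by ring_nf
      _ ≤ |tent (c i) - tent (c' i)| * |∏ j ∈ s, tent (c j)| +
            |tent (c' i)| * |∏ j ∈ s, tent (c j) - ∏ j ∈ s, tent (c' j)| := by
          rw [← abs_mul, ← abs_mul]
          exact abs_add_le _ _
      _ ≤ |c i - c' i| * 1 + 1 * ∑ j ∈ s, |c j - c' j| := by
          refine add_le_add (mul_le_mul ?_ hprod (abs_nonneg _) (abs_nonneg _))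
            (mul_le_mul htent ih (abs_nonneg _) zero_le_one)
          exact abs_tent_sub_tent_le _ _
      _ = |c i - c' i| + ∑ j ∈ s, |c j - c' j| := by ring

end Tent

open NumberField NumberField.Units NumberField.Units.dirichletUnitTheorem NumberField.InfinitePlace

section LogAbs

variable {K : Type*} [Field K]

/-- The logarithms of the archimedean absolute values of `x`; the value at `x = 0` is junk. -/
noncomputable def logAbs (x : K) : InfinitePlace K → ℝ := fun w ↦ Real.log (w x)

lemma logAbs_mul {x y : K} (hx : x ≠ 0) (hy : y ≠ 0) : logAbs (x * y) = logAbs x + logAbs y := by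
  ext w
  simp only [logAbs, map_mul, Pi.add_apply]
  exact Real.log_mul ((map_ne_zero w).2 hx) ((map_ne_zero w).2 hy)

end LogAbs

section UnitCutoff

variable (K : Type*) [Field K] [NumberField K]

lemma finrank_pos_real : (0 : ℝ) < Module.finrank ℚ K := by exact_mod_cast Module.finrank_pos

lemma sum_mult_real : ∑ v : InfinitePlace K, (mult v : ℝ) = Module.finrank ℚ K := by
  exact_mod_cast sum_mult_eq (K := K)

variable {K} in
/-- The sum of a family indexed by the infinite places, each place weighted by its local degree. -/
noncomputable def placeSum (l : InfinitePlace K → ℝ) : ℝ := ∑ v, (mult v : ℝ) * l v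

/-- The mean of a family indexed by the infinite places, each place weighted by its local degree. -/
noncomputable def placeMean (l : InfinitePlace K → ℝ) : ℝ :=
  placeSum l / (Module.finrank ℚ K)

/-- Projection along the diagonal onto the space in which the logarithmic embedding of the units
takes its values; as in Mathlib's `logSpace`, the coordinate at `w₀` is dropped. -/
noncomputable def logProjection : (InfinitePlace K → ℝ) →ₗ[ℝ] logSpace K where
  toFun l w := (mult w.1 : ℝ) * (l w.1 - placeMean K l)
  map_add' l l' := by
    ext w
    simp [placeMean, placeSum, mul_add, Finset.sum_add_distrib, add_div]
    ring
  map_smul' t l := by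
    ext w
    simp only [placeMean, placeSum, Pi.smul_apply, smul_eq_mul, RingHom.id_apply]
    simp_rw [mul_left_comm _ t, ← Finset.mul_sum, mul_div_assoc]
    ring

open scoped Classical in
/-- The logarithms of a fundamental system of units, as a real basis of the log space. -/
noncomputable def unitLogBasis : Module.Basis (Fin (rank K)) ℝ (logSpace K) :=
  (basisUnitLattice K).ofZLatticeBasis ℝ (unitLattice K)

/-- The coordinates of `logProjection` in the basis `unitLogBasis`: multiplying by a unit
translates them by an integer vector. -/
noncomputable def unitCoordinates : (InfinitePlace K → ℝ) →ₗ[ℝ] (Fin (rank K) → ℝ) :=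
  (unitLogBasis K).equivFun.toLinearMap ∘ₗ logProjection K

/-- A Lipschitz substitute for a fundamental domain of the unit group: a weight whose sum over
every orbit of units is the number of roots of unity. -/
noncomputable def unitCutoff (l : InfinitePlace K → ℝ) : ℝ := ∏ i, tent (unitCoordinates K l i)

variable {K}

lemma unitCutoff_nonneg (l : InfinitePlace K → ℝ) : 0 ≤ unitCutoff K l :=
  Finset.prod_nonneg fun _ _ ↦ tent_nonneg _

lemma unitCutoff_le_one (l : InfinitePlace K → ℝ) : unitCutoff K l ≤ 1 :=
  Finset.prod_le_one (fun _ _ ↦ tent_nonneg _) fun _ _ ↦ tent_le_one _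

lemma exists_abs_unitCutoff_sub_le :
    ∃ C, 0 ≤ C ∧ ∀ l l', |unitCutoff K l - unitCutoff K l'| ≤ C * ‖l - l'‖ := by
  classical
  set L := LinearMap.toContinuousLinearMap (unitCoordinates K)
  refine ⟨∑ _i : Fin (rank K), ‖L‖, by positivity, fun l l' ↦ ?_⟩
  refine (abs_prod_tent_sub_prod_tent_le _ _ _).trans ?_
  rw [Finset.sum_mul]
  refine Finset.sum_le_sum fun i _ ↦ ?_
  calc |unitCoordinates K l i - unitCoordinates K l' i| = ‖L (l - l') i‖ := by
        rw [map_sub]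
        rfl
    _ ≤ ‖L (l - l')‖ := norm_le_pi_norm _ i
    _ ≤ ‖L‖ * ‖l - l'‖ := L.le_opNorm _

lemma placeMean_add_const (l : InfinitePlace K → ℝ) (t : ℝ) :
    placeMean K (fun w ↦ l w + t) = placeMean K l + t := by
  have := (finrank_pos_real K).ne'
  simp only [placeMean, placeSum, mul_add, Finset.sum_add_distrib]
  rw [← Finset.sum_mul, sum_mult_real]
  field_simp

lemma unitCutoff_add_const (l : InfinitePlace K → ℝ) (t : ℝ) :
    unitCutoff K (fun w ↦ l w + t) = unitCutoff K l := by
  have hproj : logProjection K (fun w ↦ l w + t) = logProjection K l := by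
    ext w
    simp [logProjection, placeMean_add_const]
  simp [unitCutoff, unitCoordinates, hproj]

lemma sum_mult_mul_sub_placeMean (l : InfinitePlace K → ℝ) :
    ∑ v, (mult v : ℝ) * (l v - placeMean K l) = 0 := by
  have := (finrank_pos_real K).ne'
  simp only [mul_sub, Finset.sum_sub_distrib]
  rw [← Finset.sum_mul, sum_mult_real, placeMean, placeSum]
  field_simp
  ring

open scoped Classical in
lemma abs_sub_placeMean_le (l : InfinitePlace K → ℝ) (w : InfinitePlace K) :
    |l w - placeMean K l| ≤ (1 + Fintype.card (InfinitePlace K)) * ‖logProjection K l‖ := by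
  set C := ‖logProjection K l‖
  set n : ℝ := (Fintype.card (InfinitePlace K) : ℝ)
  have hnC : 0 ≤ n * C := by positivity
  have hproj (v : {v : InfinitePlace K // v ≠ w₀}) :
      |(mult v.1 : ℝ) * (l v.1 - placeMean K l)| ≤ C := norm_le_pi_norm (logProjection K l) v
  have hmult : |l w - placeMean K l| ≤ |(mult w : ℝ) * (l w - placeMean K l)| := by
    rw [abs_mul, Nat.abs_cast]
    exact le_mul_of_one_le_left (abs_nonneg _) (by exact_mod_cast mult_pos (w := w))
  refine hmult.trans ?_
  by_cases hw : w = w₀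
  · have hsum := sum_mult_mul_sub_placeMean l
    rw [Fintype.sum_eq_add_sum_subtype_ne _ w₀] at hsum
    rw [hw, eq_neg_of_add_eq_zero_left hsum, abs_neg]
    have hcard : (Fintype.card {v : InfinitePlace K // v ≠ w₀} : ℝ) ≤ n := by
      exact Nat.cast_le.2 (Fintype.card_subtype_le _)
    calc |∑ v : {v : InfinitePlace K // v ≠ w₀}, (mult v.1 : ℝ) * (l v.1 - placeMean K l)|
        ≤ ∑ v : {v : InfinitePlace K // v ≠ w₀}, |(mult v.1 : ℝ) * (l v.1 - placeMean K l)| :=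
          Finset.abs_sum_le_sum_abs _ _
      _ ≤ ∑ _v : {v : InfinitePlace K // v ≠ w₀}, C := Finset.sum_le_sum fun v _ ↦ hproj v
      _ = Fintype.card {v : InfinitePlace K // v ≠ w₀} * C := by
          rw [Finset.sum_const, nsmul_eq_mul, Finset.card_univ]
      _ ≤ (1 + n) * C := by gcongr; linarith
  · linarith [hproj ⟨w, hw⟩]

lemma exists_sub_le_of_unitCutoff_ne_zero :
    ∃ C, 0 ≤ C ∧ ∀ l, unitCutoff K l ≠ 0 → ∀ w v, l w - l v ≤ C := by
  classical
  set E := LinearMap.toContinuousLinearMap ((unitLogBasis K).equivFun.symm.toLinearMap)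
  set n : ℝ := (Fintype.card (InfinitePlace K) : ℝ)
  refine ⟨2 * ((1 + n) * ‖E‖), by positivity, fun l hl w v ↦ ?_⟩
  have hcoord : ‖unitCoordinates K l‖ ≤ 1 := (pi_norm_le_iff_of_nonneg zero_le_one).2 fun i ↦
    (abs_lt_one_of_tent_ne_zero (Finset.prod_ne_zero_iff.1 hl i (Finset.mem_univ i))).le
  have hproj : ‖logProjection K l‖ ≤ ‖E‖ := by
    calc ‖logProjection K l‖ = ‖E (unitCoordinates K l)‖ := by simp [E, unitCoordinates]
      _ ≤ ‖E‖ := E.unit_le_opNorm _ hcoord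
  have hmean (u : InfinitePlace K) : |l u - placeMean K l| ≤ (1 + n) * ‖E‖ :=
    (abs_sub_placeMean_le l u).trans (by gcongr)
  linarith [(abs_le.1 (hmean w)).2, (abs_le.1 (hmean v)).1]

lemma logProjection_logAbs_unit (u : (𝓞 K)ˣ) :
    logProjection K (logAbs (u : K)) = logEmbedding K (Additive.ofMul u) := by
  have hmean : placeMean K (logAbs (u : K)) = 0 := by
    simp only [placeMean, placeSum, logAbs]
    rw [sum_mult_mul_log u, zero_div]
  ext w
  simp [logProjection, hmean, logAbs]

lemma unitCoordinates_logAbs_unit (z : torsion K) (a : Fin (rank K) → ℤ) :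
    unitCoordinates K (logAbs (((z : (𝓞 K)ˣ) * ∏ i, fundSystem K i ^ a i : (𝓞 K)ˣ) : K)) =
      fun i ↦ (a i : ℝ) := by
  classical
  have hlog : logEmbedding K (Additive.ofMul ((z : (𝓞 K)ˣ) * ∏ i, fundSystem K i ^ a i)) =
      ∑ i, (a i : ℝ) • unitLogBasis K i := by
    rw [ofMul_mul, map_add, logEmbedding_eq_zero_iff.2 z.2, zero_add, ofMul_prod, map_sum]
    refine Finset.sum_congr rfl fun i _ ↦ ?_
    rw [ofMul_zpow, map_zsmul, logEmbedding_fundSystem, unitLogBasis,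
      Module.Basis.ofZLatticeBasis_apply, Int.cast_smul_eq_zsmul]
  ext i
  simp only [unitCoordinates, LinearMap.comp_apply, logProjection_logAbs_unit, hlog]
  simp [Finset.sum_apply, Module.Basis.repr_self, Finsupp.single_apply]

lemma bijective_torsion_mul_prod_fundSystem : Function.Bijective
    fun p : torsion K × (Fin (rank K) → ℤ) ↦ (p.1 : (𝓞 K)ˣ) * ∏ i, fundSystem K i ^ p.2 i := by
  refine (Function.bijective_iff_existsUnique _).2 fun u ↦ ?_
  obtain ⟨p, hp, hunique⟩ := exist_unique_eq_mul_prod K u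
  exact ⟨p, hp.symm, fun q hq ↦ hunique q hq.symm⟩

lemma hasSum_unitCutoff_units {x : K} (hx : x ≠ 0) :
    HasSum (fun u : (𝓞 K)ˣ ↦ unitCutoff K (logAbs ((u : K) * x))) (torsionOrder K) := by
  set c := unitCoordinates K (logAbs x)
  have htent := hasSum_prod_tent_add_int c
  have hsummable : Summable fun p : torsion K × (Fin (rank K) → ℤ) ↦ ∏ i, tent (c i + p.2 i) :=
    (summable_prod_of_nonneg fun _ ↦ Finset.prod_nonneg fun _ _ ↦ tent_nonneg _).2
      ⟨fun _ ↦ htent.summable, Summable.of_finite⟩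
  have htsum : ∑' p : torsion K × (Fin (rank K) → ℤ), ∏ i, tent (c i + p.2 i) =
      torsionOrder K := by
    rw [hsummable.tsum_prod]
    simp [htent.tsum_eq, torsionOrder]
  rw [← (Equiv.ofBijective _ bijective_torsion_mul_prod_fundSystem).hasSum_iff, ← htsum]
  refine hsummable.hasSum.congr_fun fun p ↦ ?_
  simp only [Function.comp_apply, Equiv.ofBijective_apply]
  rw [logAbs_mul (coe_ne_zero _) hx, unitCutoff, map_add, unitCoordinates_logAbs_unit]
  exact Finset.prod_congr rfl fun i _ ↦ by rw [Pi.add_apply, add_comm]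

end UnitCutoff

/-! ### The smoothed norm power -/

section SmoothedNorm

variable {K : Type*} [Field K] [NumberField K]

open scoped Classical in
/-- The largest archimedean absolute value of `x`. -/
noncomputable def maxAbs (x : K) : ℝ := ‖mixedEmbedding K x‖

open scoped Classical in
lemma maxAbs_eq_sup' (x : K) :
    maxAbs x = Finset.univ.sup' Finset.univ_nonempty fun w : InfinitePlace K ↦ w x := by
  simpa only [maxAbs, mixedEmbedding.normAtPlace_apply] using
    mixedEmbedding.norm_eq_sup'_normAtPlace (mixedEmbedding K x)

lemma apply_le_maxAbs (w : InfinitePlace K) (x : K) : w x ≤ maxAbs x := by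
  rw [maxAbs_eq_sup']
  exact Finset.le_sup' (fun w : InfinitePlace K ↦ w x) (Finset.mem_univ w)

lemma exists_apply_eq_maxAbs (x : K) : ∃ w : InfinitePlace K, w x = maxAbs x := by
  obtain ⟨w, -, hw⟩ :=
    Finset.exists_mem_eq_sup' Finset.univ_nonempty fun w : InfinitePlace K ↦ w x
  exact ⟨w, by rw [maxAbs_eq_sup', hw]⟩

open scoped Classical in
lemma maxAbs_add_le (x y : K) : maxAbs (x + y) ≤ maxAbs x + maxAbs y := by
  simpa only [maxAbs, map_add] using norm_add_le (mixedEmbedding K x) (mixedEmbedding K y)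

open scoped Classical in
lemma maxAbs_nonneg (x : K) : 0 ≤ maxAbs x := norm_nonneg (mixedEmbedding K x)

open scoped Classical in
lemma maxAbs_zero : maxAbs (0 : K) = 0 := by simp [maxAbs]

lemma maxAbs_pos {x : K} (hx : x ≠ 0) : 0 < maxAbs x := by
  obtain ⟨w, hw⟩ := exists_apply_eq_maxAbs x
  rw [← hw]
  exact InfinitePlace.pos_iff.2 hx

open scoped Classical in
lemma maxAbs_neg (x : K) : maxAbs (-x) = maxAbs x := by
  rw [maxAbs, map_neg, norm_neg, maxAbs]

lemma sub_maxAbs_le_maxAbs_add (x e : K) : maxAbs x - maxAbs e ≤ maxAbs (x + e) := by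
  have hsub := maxAbs_add_le (x + e) (-e)
  rw [add_neg_cancel_right, maxAbs_neg] at hsub
  linarith

lemma abs_apply_add_sub_apply_le (w : InfinitePlace K) (x e : K) :
    |w (x + e) - w x| ≤ maxAbs e := by
  have hadd : w (x + e) ≤ w x + w e := w.1.add_le x e
  have hsub : w x ≤ w (x + e) + w e := by
    have := w.1.add_le (x + e) (-e)
    rwa [add_neg_cancel_right, AbsoluteValue.map_neg] at this
  have he := apply_le_maxAbs w e
  exact abs_le.2 ⟨by linarith, by linarith⟩

lemma exists_mul_maxAbs_le_of_unitCutoff_ne_zero : ∃ κ : ℝ, 0 < κ ∧ κ ≤ 1 ∧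
    ∀ x : K, x ≠ 0 → unitCutoff K (logAbs x) ≠ 0 → ∀ w : InfinitePlace K, κ * maxAbs x ≤ w x := by
  obtain ⟨C, hC, hsupp⟩ := exists_sub_le_of_unitCutoff_ne_zero (K := K)
  refine ⟨Real.exp (-C), Real.exp_pos _, Real.exp_le_one_iff.2 (by linarith), fun x hx hφ w ↦ ?_⟩
  obtain ⟨v, hv⟩ := exists_apply_eq_maxAbs x
  have hv₀ : 0 < v x := InfinitePlace.pos_iff.2 hx
  have hdiff : Real.log (v x) - Real.log (w x) ≤ C := hsupp _ hφ v w
  rw [← hv, ← Real.log_le_log_iff (by positivity) (InfinitePlace.pos_iff.2 hx),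
    Real.log_mul (Real.exp_ne_zero _) hv₀.ne', Real.log_exp]
  linarith

lemma exists_mul_maxAbs_le_apply_add : ∃ κ : ℝ, 0 < κ ∧ κ ≤ 1 ∧ ∀ x e : K, x ≠ 0 → x + e ≠ 0 →
    4 * maxAbs e ≤ κ * maxAbs x →
    unitCutoff K (logAbs x) ≠ 0 ∨ unitCutoff K (logAbs (x + e)) ≠ 0 →
    ∀ w : InfinitePlace K, κ * maxAbs x ≤ w x ∧ κ * maxAbs x ≤ w (x + e) := by
  obtain ⟨κ, hκ₀, hκ₁, hκ⟩ := exists_mul_maxAbs_le_of_unitCutoff_ne_zero (K := K)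
  refine ⟨κ / 2, by positivity, by linarith, fun x e hx hxe he hφ w ↦ ?_⟩
  obtain ⟨hlow, hhigh⟩ := abs_le.1 (abs_apply_add_sub_apply_le w x e)
  have he₀ := maxAbs_nonneg e
  rcases hφ with hφ | hφ
  · have hw := hκ x hx hφ w
    constructor <;> linarith
  · have hw := hκ (x + e) hxe hφ w
    have hmax : κ * (maxAbs x - maxAbs e) ≤ κ * maxAbs (x + e) := by
      gcongr
      exact sub_maxAbs_le_maxAbs_add x e
    have hκe : κ * maxAbs e ≤ maxAbs e := mul_le_of_le_one_left he₀ hκ₁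
    constructor <;> linarith

lemma mul_le_placeSum {l : InfinitePlace K → ℝ} {t : ℝ} (h : ∀ w, t ≤ l w) :
    Module.finrank ℚ K * t ≤ placeSum l := by
  rw [← sum_mult_real, Finset.sum_mul]
  exact Finset.sum_le_sum fun w _ ↦ mul_le_mul_of_nonneg_left (h w) (by positivity)

lemma abs_placeSum_sub_le {l l' : InfinitePlace K → ℝ} {η : ℝ} (h : ∀ w, |l w - l' w| ≤ η) :
    |placeSum l - placeSum l'| ≤ Module.finrank ℚ K * η := by
  rw [placeSum, placeSum, ← Finset.sum_sub_distrib, ← sum_mult_real, Finset.sum_mul]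
  refine (Finset.abs_sum_le_sum_abs _ _).trans (Finset.sum_le_sum fun w _ ↦ ?_)
  rw [← mul_sub, abs_mul, Nat.abs_cast]
  exact mul_le_mul_of_nonneg_left (h w) (by positivity)

/-- The exponential `exp (-s * placeSum l)`, which is `|N x| ^ (-s)` for `l = logAbs x`. -/
noncomputable def normPow (s : ℂ) (l : InfinitePlace K → ℝ) : ℂ :=
  Complex.exp (-s * (placeSum l : ℝ))

lemma norm_normPow_le {l : InfinitePlace K → ℝ} {k : ℝ} (hk : 0 < k)
    (hl : ∀ w, Real.log k ≤ l w) {s : ℂ} (hs : 0 ≤ s.re) :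
    ‖normPow s l‖ ≤ k ^ (-(Module.finrank ℚ K * s.re)) := by
  have hsum := mul_le_placeSum hl
  have hnorm : ‖normPow s l‖ = Real.exp (-s.re * placeSum l) := by simp [normPow, Complex.norm_exp]
  rw [hnorm, Real.rpow_def_of_pos hk]
  exact Real.exp_le_exp.2 (by nlinarith)

lemma norm_normPow_sub_le {l l' : InfinitePlace K → ℝ} {η R : ℝ} {s : ℂ}
    (h : ∀ w, |l w - l' w| ≤ η) (hs : ‖s‖ ≤ R) (hη : R * (Module.finrank ℚ K * η) ≤ 1) :
    ‖normPow s l - normPow s l'‖ ≤ ‖normPow s l'‖ * (2 * (R * (Module.finrank ℚ K * η))) := by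
  set δ : ℝ := placeSum l - placeSum l'
  have hfactor : normPow s l - normPow s l' = normPow s l' * (Complex.exp (-s * (δ : ℝ)) - 1) := by
    rw [mul_sub, mul_one, normPow, normPow, ← Complex.exp_add]
    congr 2
    simp only [δ]
    push_cast
    ring
  have hexp : ‖-s * (δ : ℂ)‖ ≤ R * (Module.finrank ℚ K * η) := by
    rw [norm_mul, norm_neg, Complex.norm_real]
    exact mul_le_mul hs (abs_placeSum_sub_le h) (norm_nonneg _) ((norm_nonneg s).trans hs)
  rw [hfactor, norm_mul]
  gcongr
  exact (Complex.norm_exp_sub_one_le (hexp.trans hη)).trans (by gcongr)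

open scoped Classical in
/-- The summand `φ(x) |N x| ^ (-s)` of the smoothed partial zeta functions, where `φ` is the unit
cutoff; it is `0` at `x = 0`. -/
noncomputable def smoothedNormPow (s : ℂ) (x : K) : ℂ :=
  if x = 0 then 0 else (unitCutoff K (logAbs x) : ℂ) * normPow s (logAbs x)

lemma smoothedNormPow_zero (s : ℂ) : smoothedNormPow s (0 : K) = 0 := if_pos rfl

lemma smoothedNormPow_of_ne_zero (s : ℂ) {x : K} (hx : x ≠ 0) :
    smoothedNormPow s x = (unitCutoff K (logAbs x) : ℂ) * normPow s (logAbs x) := if_neg hx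

lemma exists_norm_smoothedNormPow_le : ∃ κ : ℝ, 0 < κ ∧ ∀ (s : ℂ) (x : K), 0 ≤ s.re → x ≠ 0 →
    ‖smoothedNormPow s x‖ ≤ (κ * maxAbs x) ^ (-(Module.finrank ℚ K * s.re)) := by
  obtain ⟨κ, hκ₀, -, hκ⟩ := exists_mul_maxAbs_le_of_unitCutoff_ne_zero (K := K)
  refine ⟨κ, hκ₀, fun s x hs hx ↦ ?_⟩
  have hpos : 0 < κ * maxAbs x := mul_pos hκ₀ (maxAbs_pos hx)
  rw [smoothedNormPow_of_ne_zero s hx]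
  by_cases hφ : unitCutoff K (logAbs x) = 0
  · rw [hφ, Complex.ofReal_zero, zero_mul, norm_zero]
    positivity
  · rw [norm_mul, Complex.norm_real, Real.norm_of_nonneg (unitCutoff_nonneg _)]
    exact (mul_le_of_le_one_left (norm_nonneg _) (unitCutoff_le_one _)).trans
      (norm_normPow_le hpos (fun w ↦ Real.log_le_log hpos (hκ x hx hφ w)) hs)

lemma abs_log_sub_log_le {y z k b : ℝ} (hk : 0 < k) (hy : k ≤ y) (hz : k ≤ z)
    (h : |y - z| ≤ b) : |Real.log y - Real.log z| ≤ b / k := by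
  have hone_sided {y z : ℝ} (hy : k ≤ y) (hz : k ≤ z) (h : |y - z| ≤ b) :
      Real.log y - Real.log z ≤ b / k := by
    have hy₀ : 0 < y := hk.trans_le hy
    have hz₀ : 0 < z := hk.trans_le hz
    calc Real.log y - Real.log z = Real.log (y / z) := (Real.log_div hy₀.ne' hz₀.ne').symm
      _ ≤ y / z - 1 := Real.log_le_sub_one_of_pos (by positivity)
      _ = (y - z) / z := div_sub_one hz₀.ne'
      _ ≤ |y - z| / z := by gcongr; exact le_abs_self _
      _ ≤ b / k := by gcongr; exact (abs_nonneg _).trans h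
  exact abs_sub_le_iff.2 ⟨hone_sided hy hz h, hone_sided hz hy (by rwa [abs_sub_comm])⟩

lemma exists_norm_unitCutoff_mul_normPow_sub_le {R : ℝ} (hR : 0 ≤ R) : ∃ C : ℝ, 0 ≤ C ∧
    ∀ (s : ℂ) (l l' : InfinitePlace K → ℝ) (η M : ℝ), ‖s‖ ≤ R → 0 ≤ η →
    (∀ w, |l w - l' w| ≤ η) → R * (Module.finrank ℚ K * η) ≤ 1 →
    ‖normPow s l‖ ≤ M → ‖normPow s l'‖ ≤ M →
    ‖(unitCutoff K l : ℂ) * normPow s l - (unitCutoff K l' : ℂ) * normPow s l'‖ ≤ C * η * M := by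
  obtain ⟨L, hL, hlip⟩ := exists_abs_unitCutoff_sub_le (K := K)
  refine ⟨L + 2 * R * Module.finrank ℚ K, by positivity,
    fun s l l' η M hs hη hl hRη hM hM' ↦ ?_⟩
  have hcutoff : |unitCutoff K l - unitCutoff K l'| ≤ L * η := (hlip _ _).trans <| by
    gcongr
    exact (pi_norm_le_iff_of_nonneg hη).2 hl
  have hpow := norm_normPow_sub_le hl hs hRη
  calc ‖(unitCutoff K l : ℂ) * normPow s l - (unitCutoff K l' : ℂ) * normPow s l'‖
      = ‖((unitCutoff K l - unitCutoff K l' : ℝ) : ℂ) * normPow s l +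
          (unitCutoff K l' : ℂ) * (normPow s l - normPow s l')‖ := by
        push_cast
        ring_nf
    _ ≤ |unitCutoff K l - unitCutoff K l'| * ‖normPow s l‖ +
          |unitCutoff K l'| * ‖normPow s l - normPow s l'‖ := by
        refine (norm_add_le _ _).trans_eq ?_
        rw [norm_mul, norm_mul, Complex.norm_real, Complex.norm_real, Real.norm_eq_abs,
          Real.norm_eq_abs]
    _ ≤ L * η * M + 1 * (M * (2 * (R * (Module.finrank ℚ K * η)))) := by
        rw [abs_of_nonneg (unitCutoff_nonneg l')]
        gcongr
        · exact unitCutoff_le_one l'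
        · exact hpow.trans (by gcongr)
    _ = (L + 2 * R * Module.finrank ℚ K) * η * M := by ring

lemma exists_norm_smoothedNormPow_add_sub_le_of_le {R : ℝ} (hR : 0 ≤ R) :
    ∃ C κ : ℝ, 0 ≤ C ∧ 0 < κ ∧ κ ≤ 1 ∧ ∀ x e : K, 0 < maxAbs x →
      4 * maxAbs e ≤ κ * maxAbs x → R * Module.finrank ℚ K * maxAbs e ≤ κ * maxAbs x →
      ∀ s : ℂ, 0 ≤ s.re → ‖s‖ ≤ R → ‖smoothedNormPow s (x + e) - smoothedNormPow s x‖ ≤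
        C * (maxAbs e / (κ * maxAbs x)) * (κ * maxAbs x) ^ (-(Module.finrank ℚ K * s.re)) := by
  obtain ⟨κ, hκ₀, hκ₁, hκ⟩ := exists_mul_maxAbs_le_apply_add (K := K)
  obtain ⟨C, hC, hdiff⟩ := exists_norm_unitCutoff_mul_normPow_sub_le (K := K) hR
  refine ⟨C, κ, hC, hκ₀, hκ₁, fun x e ha he hRe s hs hsR ↦ ?_⟩
  have he₀ := maxAbs_nonneg e
  have hκa : 0 < κ * maxAbs x := mul_pos hκ₀ ha
  have hx₀ : x ≠ 0 := by
    rintro rfl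
    exact ha.ne' maxAbs_zero
  have hxe₀ : x + e ≠ 0 := fun h ↦ by
    have hle := sub_maxAbs_le_maxAbs_add x e
    rw [h, maxAbs_zero] at hle
    nlinarith
  rw [smoothedNormPow_of_ne_zero s hx₀, smoothedNormPow_of_ne_zero s hxe₀]
  by_cases hφ : unitCutoff K (logAbs x) ≠ 0 ∨ unitCutoff K (logAbs (x + e)) ≠ 0
  · have hlow := hκ x e hx₀ hxe₀ he hφ
    have hlog (w : InfinitePlace K) :
        |logAbs (x + e) w - logAbs x w| ≤ maxAbs e / (κ * maxAbs x) :=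
      abs_log_sub_log_le hκa (hlow w).2 (hlow w).1 (abs_apply_add_sub_apply_le w x e)
    refine hdiff s _ _ _ _ hsR (by positivity) hlog ?_
      (norm_normPow_le hκa (fun w ↦ Real.log_le_log hκa (hlow w).2) hs)
      (norm_normPow_le hκa (fun w ↦ Real.log_le_log hκa (hlow w).1) hs)
    rwa [← mul_assoc, ← mul_div_assoc, div_le_one hκa]
  · push Not at hφ
    rw [hφ.1, hφ.2]
    simp only [Complex.ofReal_zero, zero_mul, sub_self, norm_zero]
    positivity

lemma exists_norm_smoothedNormPow_add_sub_le (e : K) {R : ℝ} (hR : 0 ≤ R) :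
    ∃ C X : ℝ, 0 ≤ C ∧ 1 ≤ X ∧ ∀ x : K, X ≤ maxAbs x → ∀ s : ℂ, 0 ≤ s.re → ‖s‖ ≤ R →
      ‖smoothedNormPow s (x + e) - smoothedNormPow s x‖ ≤
        C * maxAbs x ^ (-(Module.finrank ℚ K * s.re) - 1) := by
  obtain ⟨C, κ, hC, hκ₀, hκ₁, hdiff⟩ := exists_norm_smoothedNormPow_add_sub_le_of_le (K := K) hR
  set d : ℝ := (Module.finrank ℚ K : ℝ)
  have he := maxAbs_nonneg e
  refine ⟨C * (maxAbs e / κ) * κ ^ (-(d * R)),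
    max 1 (max (4 * maxAbs e / κ) (R * d * maxAbs e / κ)), by positivity, le_max_left _ _,
    fun x hx s hs hsR ↦ ?_⟩
  obtain ⟨hx₁, hx'⟩ := max_le_iff.1 hx
  obtain ⟨hx₄, hxR⟩ := max_le_iff.1 hx'
  rw [div_le_iff₀' hκ₀] at hx₄ hxR
  have ha : 0 < maxAbs x := by linarith
  have hκpow : κ ^ (-(d * s.re)) ≤ κ ^ (-(d * R)) := by
    refine Real.rpow_le_rpow_of_exponent_ge hκ₀ hκ₁ ?_
    gcongr
    exact (Complex.re_le_norm s).trans hsR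
  calc ‖smoothedNormPow s (x + e) - smoothedNormPow s x‖
      ≤ C * (maxAbs e / (κ * maxAbs x)) * (κ * maxAbs x) ^ (-(d * s.re)) :=
        hdiff x e ha hx₄ hxR s hs hsR
    _ = C * (maxAbs e / κ) * κ ^ (-(d * s.re)) * maxAbs x ^ (-(d * s.re) - 1) := by
        rw [Real.mul_rpow hκ₀.le ha.le, Real.rpow_sub ha, Real.rpow_one]
        ring
    _ ≤ C * (maxAbs e / κ) * κ ^ (-(d * R)) * maxAbs x ^ (-(d * s.re) - 1) := by gcongr

end SmoothedNorm

/-! ### Lattice sums of the smoothed norm power -/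

section LatticeSum

variable {K : Type*} [Field K] [NumberField K]

open scoped Classical in
lemma summable_maxAbs_rpow {r : ℝ} (hr : r < -(Module.finrank ℚ K : ℝ)) :
    Summable fun y : 𝓞 K ↦ maxAbs (y : K) ^ r := by
  have hrank : Module.finrank ℤ (mixedEmbedding.integerLattice K) = Module.finrank ℚ K := by
    rw [ZLattice.rank ℝ, mixedEmbedding.finrank]
  let f : 𝓞 K → mixedEmbedding.integerLattice K := fun y ↦ ⟨mixedEmbedding K (y : K), ⟨y, rfl⟩⟩
  have hf : Function.Injective f := fun x y h ↦
    RingOfIntegers.ext (mixedEmbedding_injective K (congrArg Subtype.val h))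
  have hsum := (ZLattice.summable_norm_rpow (mixedEmbedding.integerLattice K) r
    (by rwa [hrank])).comp_injective hf
  refine hsum.congr fun y ↦ ?_
  simp only [Function.comp_apply, f, maxAbs]
  rfl

lemma placeSum_logAbs {x : K} (hx : x ≠ 0) :
    placeSum (logAbs x) = Real.log |((Algebra.norm ℚ x : ℚ) : ℝ)| := by
  rw [← Rat.cast_abs, ← InfinitePlace.prod_eq_abs_norm, Real.log_prod]
  · simp [placeSum, logAbs]
  · exact fun w _ ↦ pow_ne_zero _ (InfinitePlace.pos_iff.2 hx).ne'

lemma one_le_abs_norm {y : 𝓞 K} (hy : y ≠ 0) :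
    (1 : ℝ) ≤ |((Algebra.norm ℚ (y : K) : ℚ) : ℝ)| := by
  rw [← Algebra.coe_norm_int]
  exact_mod_cast Int.one_le_abs (Algebra.norm_ne_zero_iff.2 hy)

lemma norm_smoothedNormPow_le_one {s : ℂ} (hs : 0 ≤ s.re) (y : 𝓞 K) :
    ‖smoothedNormPow s (y : K)‖ ≤ 1 := by
  by_cases hy : y = 0
  · simp [hy, smoothedNormPow_zero]
  have hy' : (y : K) ≠ 0 := by simpa using hy
  have hlog := Real.log_nonneg (one_le_abs_norm hy)
  rw [smoothedNormPow_of_ne_zero s hy', norm_mul, Complex.norm_real,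
    Real.norm_of_nonneg (unitCutoff_nonneg _)]
  refine mul_le_one₀ (unitCutoff_le_one _) (norm_nonneg _) ?_
  rw [normPow, Complex.norm_exp, Real.exp_le_one_iff, placeSum_logAbs hy']
  simp only [Complex.mul_re, Complex.neg_re, Complex.ofReal_re, Complex.ofReal_im, mul_zero,
    sub_zero]
  nlinarith

lemma differentiable_smoothedNormPow (x : K) : Differentiable ℂ fun s ↦ smoothedNormPow s x := by
  by_cases hx : x = 0
  · simp [hx, smoothedNormPow_zero]
  · simp only [smoothedNormPow_of_ne_zero _ hx, normPow]
    fun_prop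

lemma smoothedNormPow_natCast_mul {q : ℕ} (hq : q ≠ 0) (s : ℂ) (x : K) :
    smoothedNormPow s ((q : K) * x) =
      Complex.exp (-s * (Module.finrank ℚ K * Real.log q : ℝ)) * smoothedNormPow s x := by
  by_cases hx : x = 0
  · simp [hx, smoothedNormPow_zero]
  have hq' : (q : K) ≠ 0 := by exact_mod_cast hq
  have hlog : logAbs ((q : K) * x) = fun w ↦ logAbs x w + Real.log q := by
    rw [logAbs_mul hq' hx, add_comm]
    ext w
    simp [logAbs]
  have hsum : placeSum (fun w ↦ logAbs x w + Real.log q) =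
      placeSum (logAbs x) + Module.finrank ℚ K * Real.log q := by
    simp only [placeSum, mul_add, Finset.sum_add_distrib]
    rw [← Finset.sum_mul, sum_mult_real]
  rw [smoothedNormPow_of_ne_zero s hx, smoothedNormPow_of_ne_zero s (mul_ne_zero hq' hx), hlog,
    unitCutoff_add_const, normPow, normPow, hsum, mul_left_comm, ← Complex.exp_add]
  congr 2
  push_cast
  ring

lemma summable_norm_smoothedNormPow {s : ℂ} (hs : 1 < s.re) :
    Summable fun y : 𝓞 K ↦ ‖smoothedNormPow s (y : K)‖ := by
  obtain ⟨κ, hκ, hbound⟩ := exists_norm_smoothedNormPow_le (K := K)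
  set r : ℝ := -(Module.finrank ℚ K * s.re)
  have hr : r < -(Module.finrank ℚ K : ℝ) := by
    have := finrank_pos_real K
    simp only [r]
    nlinarith
  refine Summable.of_nonneg_of_le (fun _ ↦ norm_nonneg _) (fun y ↦ ?_)
    ((summable_maxAbs_rpow hr).mul_left (κ ^ r))
  by_cases hy : (y : K) = 0
  · rw [hy, smoothedNormPow_zero, norm_zero]
    exact mul_nonneg (Real.rpow_nonneg hκ.le _) (Real.rpow_nonneg (maxAbs_nonneg _) _)
  · rw [← Real.mul_rpow hκ.le (maxAbs_nonneg _)]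
    exact hbound s y (by linarith) hy

lemma norm_smoothedNormPow_add_sub_le_two {s : ℂ} (hs : 0 ≤ s.re) (y e : 𝓞 K) :
    ‖smoothedNormPow s ((y + e : 𝓞 K) : K) - smoothedNormPow s (y : K)‖ ≤ 2 := by
  refine (norm_sub_le _ _).trans ?_
  linarith [norm_smoothedNormPow_le_one hs (y + e), norm_smoothedNormPow_le_one hs y]

lemma exists_norm_smoothedNormPow_add_sub_le_mul_rpow {σ R : ℝ} (hσ : 0 ≤ σ) (hR : 0 ≤ R)
    (e : 𝓞 K) :
    ∃ C : ℝ, 0 ≤ C ∧ ∀ y : 𝓞 K, y ≠ 0 → ∀ s : ℂ, σ ≤ s.re → ‖s‖ ≤ R →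
      ‖smoothedNormPow s ((y + e : 𝓞 K) : K) - smoothedNormPow s (y : K)‖ ≤
        C * maxAbs (y : K) ^ (-(Module.finrank ℚ K * σ) - 1) := by
  obtain ⟨C, X, hC, hX, hdiff⟩ := exists_norm_smoothedNormPow_add_sub_le (e : K) hR
  have hd := finrank_pos_real K
  set ρ := -(Module.finrank ℚ K * σ) - 1
  have hρ : ρ ≤ 0 := by
    have : 0 ≤ Module.finrank ℚ K * σ := by positivity
    simp only [ρ]
    linarith
  have hX₀ : 0 < X := by linarith
  refine ⟨C + 2 * X ^ (-ρ), by positivity, fun y hy s hs hsR ↦ ?_⟩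
  have hs₀ : 0 ≤ s.re := hσ.trans hs
  have hpos : 0 < maxAbs (y : K) := maxAbs_pos (by simpa using hy)
  rw [add_mul]
  rcases le_or_gt X (maxAbs (y : K)) with hyX | hyX
  · have hpow : maxAbs (y : K) ^ (-(Module.finrank ℚ K * s.re) - 1) ≤ maxAbs (y : K) ^ ρ :=
      Real.rpow_le_rpow_of_exponent_le (hX.trans hyX) (by simp only [ρ]; gcongr)
    refine (hdiff y hyX s hs₀ hsR).trans (le_add_of_le_of_nonneg ?_ (by positivity))
    gcongr
  · have hpow : 1 ≤ X ^ (-ρ) * maxAbs (y : K) ^ ρ := by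
      calc (1 : ℝ) = X ^ (-ρ) * X ^ ρ := by rw [← Real.rpow_add hX₀]; simp
        _ ≤ X ^ (-ρ) * maxAbs (y : K) ^ ρ :=
          mul_le_mul_of_nonneg_left (Real.rpow_le_rpow_of_nonpos hpos hyX.le hρ) (by positivity)
    refine (norm_smoothedNormPow_add_sub_le_two hs₀ y e).trans
      (le_add_of_nonneg_of_le (by positivity) ?_)
    linarith

lemma exists_summable_norm_smoothedNormPow_add_sub_le {σ R : ℝ}
    (hσ : 1 - 1 / (Module.finrank ℚ K : ℝ) < σ) (hR : 0 ≤ R) (e : 𝓞 K) :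
    ∃ u : 𝓞 K → ℝ, Summable u ∧ ∀ (y : 𝓞 K) (s : ℂ), σ ≤ s.re → ‖s‖ ≤ R →
      ‖smoothedNormPow s ((y + e : 𝓞 K) : K) - smoothedNormPow s (y : K)‖ ≤ u y := by
  classical
  set d : ℝ := (Module.finrank ℚ K : ℝ)
  have hd : 0 < d := finrank_pos_real K
  have hσ₀ : 0 ≤ σ := by
    have : 1 / d ≤ 1 := (div_le_one hd).2 (Nat.one_le_cast.2 Module.finrank_pos)
    linarith
  have hρ : -(d * σ) - 1 < -d := by
    have : d * (1 - 1 / d) < d * σ := by gcongr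
    rw [mul_sub, mul_one_div_cancel hd.ne'] at this
    linarith
  obtain ⟨C, hC, hbound⟩ := exists_norm_smoothedNormPow_add_sub_le_mul_rpow hσ₀ hR e
  have hzero : Summable fun y : 𝓞 K ↦ if y = 0 then (2 : ℝ) else 0 :=
    summable_of_ne_finset_zero (s := {0}) fun y hy ↦ if_neg (by simpa using hy)
  refine ⟨_, ((summable_maxAbs_rpow hρ).mul_left C).add hzero, fun y s hs hsR ↦ ?_⟩
  by_cases hy : y = 0
  · rw [if_pos hy]
    exact (norm_smoothedNormPow_add_sub_le_two (hσ₀.trans hs) y e).trans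
      (le_add_of_nonneg_left (mul_nonneg hC (Real.rpow_nonneg (maxAbs_nonneg _) _)))
  · rw [if_neg hy, add_zero]
    exact hbound y hy s hs hsR

lemma differentiableOn_tsum_smoothedNormPow_add_sub {α : Type*} {f : α → 𝓞 K}
    (hf : Function.Injective f) (e : 𝓞 K) :
    DifferentiableOn ℂ (fun s ↦ ∑' a, (smoothedNormPow s ((f a + e : 𝓞 K) : K) -
      smoothedNormPow s (f a : K))) {s | 1 - 1 / (Module.finrank ℚ K : ℝ) < s.re} := by
  intro s (hs : _ < s.re)
  obtain ⟨σ, hσ, hσs⟩ := exists_between hs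
  obtain ⟨u, hu, hbound⟩ := exists_summable_norm_smoothedNormPow_add_sub_le hσ
    (by positivity : 0 ≤ ‖s‖ + 1) e
  set U : Set ℂ := {z | σ < z.re} ∩ {z | ‖z‖ < ‖s‖ + 1}
  have hU : IsOpen U :=
    (isOpen_setOf_lt_re σ).inter (isOpen_lt continuous_norm continuous_const)
  have hdiff := Complex.differentiableOn_tsum_of_summable_norm (hu.comp_injective hf)
    (fun a ↦ ((differentiable_smoothedNormPow ((f a + e : 𝓞 K) : K)).sub
      (differentiable_smoothedNormPow (f a : K))).differentiableOn) hU
    (fun a z hz ↦ hbound (f a) z hz.1.le hz.2.le)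
  exact (hdiff.differentiableAt (hU.mem_nhds ⟨hσs, by simp⟩)).differentiableWithinAt

end LatticeSum

section Residue

variable {ι : Type*} [Fintype ι] [DecidableEq ι]

lemma tsum_eq_sum_tsum_nsmul_add (q : ℕ) [NeZero q] {f : (ι → ℤ) → ℂ} (hf : Summable f) :
    ∑' a, f a = ∑ e : ι → Fin q, ∑' a : ι → ℤ, f (q • a + fun i ↦ ((e i : ℕ) : ℤ)) := by
  let E : (ι → ℤ) ≃ (ι → ℤ) × (ι → Fin q) :=
    (Equiv.piCongrRight fun _ ↦ Int.divModEquiv q).trans (Equiv.arrowProdEquivProdArrow ι _ _)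
  have hE (a : ι → ℤ) (e : ι → Fin q) : E.symm (a, e) = q • a + fun i ↦ ((e i : ℕ) : ℤ) := by
    ext i
    simp [E, Equiv.arrowProdEquivProdArrow, mul_comm]
  let E' := (Equiv.prodComm (ι → Fin q) (ι → ℤ)).trans E.symm
  have hf' : Summable fun p ↦ f (E' p) := E'.summable_iff.2 hf
  rw [← E'.tsum_eq, hf'.tsum_prod, tsum_fintype]
  simp [E', hE]

end Residue

section LatticeSeries

variable {K : Type*} [Field K] [NumberField K] {ι : Type*} [Fintype ι]

lemma exp_natCast_mul_log {d q : ℕ} (hq : q ≠ 0) :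
    Complex.exp (d * Real.log q : ℝ) = (q : ℂ) ^ d := by
  rw [← Complex.ofReal_exp, mul_comm, Real.exp_mul, Real.exp_log (by positivity),
    Real.rpow_natCast]
  push_cast
  rfl

-- Split the lattice into classes modulo `q`; each class sum differs from that of `q * lattice`,
-- a multiple of the full sum, by a series converging beyond `s = 1`.
lemma exists_differentiableOn_tsum_mul_scaleFactor (hι : Fintype.card ι = Module.finrank ℚ K)
    {F : (ι → ℤ) →+ 𝓞 K} (hF : Function.Injective F) {q : ℕ} (hq : q ≠ 0) :
    ∃ H : ℂ → ℂ, DifferentiableOn ℂ H {s | 1 - 1 / (Module.finrank ℚ K : ℝ) < s.re} ∧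
      ∀ s : ℂ, 1 < s.re →
        (∑' a, smoothedNormPow s (F a : K)) * scaleFactor (Module.finrank ℚ K) q s = H s := by
  classical
  have : NeZero q := ⟨hq⟩
  set d := Module.finrank ℚ K
  have hqinj : Function.Injective fun a : ι → ℤ ↦ F (q • a) :=
    hF.comp fun a b h ↦ by simpa [hq, funext_iff] using h
  let E (e : ι → Fin q) : 𝓞 K := F fun i ↦ ((e i : ℕ) : ℤ)
  refine ⟨fun s ↦ ∑ e : ι → Fin q, ∑' a, (smoothedNormPow s ((F (q • a) + E e : 𝓞 K) : K) -
    smoothedNormPow s (F (q • a) : K)), DifferentiableOn.fun_sum fun e _ ↦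
      differentiableOn_tsum_smoothedNormPow_add_sub hqinj (E e), fun s hs ↦ ?_⟩
  set T := ∑' a, smoothedNormPow s (F a : K) with hT
  have hsum : Summable fun y : 𝓞 K ↦ smoothedNormPow s (y : K) :=
    (summable_norm_smoothedNormPow hs).of_norm
  have hclasses : T = ∑ e : ι → Fin q, ∑' a, smoothedNormPow s ((F (q • a) + E e : 𝓞 K) : K) := by
    have hFsum : Summable fun a ↦ smoothedNormPow s (F a : K) := hsum.comp_injective hF
    rw [hT, tsum_eq_sum_tsum_nsmul_add q hFsum]
    simp only [map_add, E]
  have hmultiple : ∑' a, smoothedNormPow s (F (q • a) : K) =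
      Complex.exp (-s * (d * Real.log q : ℝ)) * T := by
    rw [hT, ← tsum_mul_left]
    refine tsum_congr fun a ↦ ?_
    rw [← smoothedNormPow_natCast_mul hq, map_nsmul, nsmul_eq_mul]
    simp
  have hdiff (e : ι → Fin q) : ∑' a, (smoothedNormPow s ((F (q • a) + E e : 𝓞 K) : K) -
      smoothedNormPow s (F (q • a) : K)) =
        ∑' a, smoothedNormPow s ((F (q • a) + E e : 𝓞 K) : K) -
          Complex.exp (-s * (d * Real.log q : ℝ)) * T := by
    rw [← hmultiple]
    exact (hsum.comp_injective ((add_left_injective (E e)).comp hqinj)).tsum_sub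
      (hsum.comp_injective hqinj)
  simp only [hdiff]
  rw [Finset.sum_sub_distrib, ← hclasses, Finset.sum_const, Finset.card_univ, Fintype.card_fun,
    hι, Fintype.card_fin, nsmul_eq_mul, Nat.cast_pow, ← exp_natCast_mul_log hq, ← mul_assoc,
    ← Complex.exp_add, scaleFactor, mul_sub, mul_one, mul_comm T]
  congr 3
  push_cast
  ring

end LatticeSeries

/-! ### Analytic continuation of the Dedekind zeta function -/

section ClassSeries

variable {K : Type*} [Field K] [NumberField K]

/-- The absolute norm of a nonzero integral ideal. -/
noncomputable def idealNorm (I : (Ideal (𝓞 K))⁰) : ℕ := Ideal.absNorm (I : Ideal (𝓞 K))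

lemma idealNorm_ne_zero (I : (Ideal (𝓞 K))⁰) : idealNorm I ≠ 0 :=
  Ideal.absNorm_ne_zero_of_nonZeroDivisors I

lemma norm_idealNorm_cpow_neg (I : (Ideal (𝓞 K))⁰) (s : ℂ) :
    ‖(idealNorm I : ℂ) ^ (-s)‖ = (idealNorm I : ℝ) ^ (-s.re) := by
  rw [Complex.norm_natCast_cpow_of_pos (Nat.pos_of_ne_zero (idealNorm_ne_zero I)),
    Complex.neg_re]

/-- The ideals `I` for which `I * J` is principal, that is, the ideals in the class inverse to that
of `J`. -/
abbrev ComplementaryIdeal (J : (Ideal (𝓞 K))⁰) : Type _ :=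
  {I : (Ideal (𝓞 K))⁰ // ClassGroup.mk0 (I * J) = 1}

variable {J : (Ideal (𝓞 K))⁰}

lemma exists_mul_eq_span_singleton (I : ComplementaryIdeal J) :
    ∃ γ : 𝓞 K, γ ≠ 0 ∧ (I.1 : Ideal (𝓞 K)) * J = Ideal.span {γ} := by
  obtain ⟨γ, hγ⟩ := ((ClassGroup.mk0_eq_one_iff (I.1 * J).2).1 I.2).principal
  refine ⟨γ, ?_, hγ⟩
  rintro rfl
  exact nonZeroDivisors.coe_ne_zero (I.1 * J) (hγ.trans (by simp))

/-- A chosen generator of the principal ideal `I * J`. -/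
noncomputable def generator (I : ComplementaryIdeal J) : 𝓞 K :=
  (exists_mul_eq_span_singleton I).choose

lemma generator_ne_zero (I : ComplementaryIdeal J) : generator I ≠ 0 :=
  (exists_mul_eq_span_singleton I).choose_spec.1

lemma span_generator (I : ComplementaryIdeal J) :
    Ideal.span {generator I} = (I.1 : Ideal (𝓞 K)) * J :=
  (exists_mul_eq_span_singleton I).choose_spec.2.symm

lemma generator_mem (I : ComplementaryIdeal J) : generator I ∈ (J : Ideal (𝓞 K)) :=
  Ideal.mul_le_right ((span_generator I).le (Ideal.mem_span_singleton_self _))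

lemma span_unit_mul_generator (I : ComplementaryIdeal J) (u : (𝓞 K)ˣ) :
    Ideal.span {(u : 𝓞 K) * generator I} = (I.1 : Ideal (𝓞 K)) * J := by
  rw [Ideal.span_singleton_mul_left_unit u.isUnit, span_generator]

variable (J) in
/-- Every nonzero element of `J` is a unit multiple of exactly one chosen generator; this is the
parametrization of `J \ {0}` by pairs of an ideal and a unit. -/
noncomputable def unitMulGenerator (p : ComplementaryIdeal J × (𝓞 K)ˣ) :
    {y : 𝓞 K // y ∈ (J : Ideal (𝓞 K)) ∧ y ≠ 0} :=
  ⟨p.2 * generator p.1, Ideal.mul_mem_left _ _ (generator_mem p.1),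
    mul_ne_zero p.2.ne_zero (generator_ne_zero p.1)⟩

lemma injective_unitMulGenerator : Function.Injective (unitMulGenerator J) := by
  rintro ⟨I, u⟩ ⟨I', u'⟩ h
  have hmul : (u : 𝓞 K) * generator I = u' * generator I' := congrArg Subtype.val h
  have hideal : (I.1 : Ideal (𝓞 K)) * J = (I'.1 : Ideal (𝓞 K)) * J := by
    rw [← span_unit_mul_generator I u, hmul, span_unit_mul_generator]
  obtain rfl : I = I' :=
    Subtype.ext (Subtype.ext (mul_right_cancel₀ (nonZeroDivisors.coe_ne_zero J) hideal))
  exact Prod.ext rfl (Units.ext (mul_right_cancel₀ (generator_ne_zero I) hmul))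

lemma surjective_unitMulGenerator : Function.Surjective (unitMulGenerator J) := by
  rintro ⟨y, hyJ, hy⟩
  obtain ⟨I, hI⟩ := Ideal.dvd_iff_le.2 ((Ideal.span_singleton_le_iff_mem _).2 hyJ)
  have hI₀ : I ≠ 0 := by
    rintro rfl
    rw [mul_zero] at hI
    exact hy (Ideal.span_singleton_eq_bot.1 hI)
  let I' : (Ideal (𝓞 K))⁰ := ⟨I, mem_nonZeroDivisors_of_ne_zero hI₀⟩
  have hspan : ((I' * J : (Ideal (𝓞 K))⁰) : Ideal (𝓞 K)) = Ideal.span {y} := by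
    rw [hI, mul_comm]
    rfl
  let I'' : ComplementaryIdeal J := ⟨I', (ClassGroup.mk0_eq_one_iff (I' * J).2).2 ⟨⟨y, hspan⟩⟩⟩
  obtain ⟨u, hu⟩ := Ideal.span_singleton_eq_span_singleton.1 ((span_generator I'').trans hspan)
  exact ⟨(I'', u), Subtype.ext ((mul_comm _ _).trans hu)⟩

lemma placeSum_logAbs_eq_log_absNorm_span {y : 𝓞 K} (hy : y ≠ 0) :
    placeSum (logAbs (y : K)) = Real.log (Ideal.absNorm (Ideal.span {y}) : ℕ) := by
  rw [placeSum_logAbs (by simpa using hy), Ideal.absNorm_span_singleton, ← Algebra.coe_norm_int,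
    Nat.cast_natAbs]
  simp

lemma smoothedNormPow_unitMulGenerator (s : ℂ) (p : ComplementaryIdeal J × (𝓞 K)ˣ) :
    smoothedNormPow s (((unitMulGenerator J p : 𝓞 K)) : K) =
      (unitCutoff K (logAbs ((p.2 : K) * generator p.1)) : ℂ) *
        ((idealNorm p.1.1 : ℂ) ^ (-s) * (idealNorm J : ℂ) ^ (-s)) := by
  obtain ⟨I, u⟩ := p
  have hne := (unitMulGenerator J (I, u)).2.2
  have hnorm : Ideal.absNorm (Ideal.span {(u : 𝓞 K) * generator I}) =
      idealNorm I.1 * idealNorm J := by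
    rw [span_unit_mul_generator, map_mul]
    rfl
  have hpos : ((idealNorm I.1 * idealNorm J : ℕ) : ℂ) ≠ 0 := by
    exact_mod_cast mul_ne_zero (idealNorm_ne_zero _) (idealNorm_ne_zero _)
  rw [smoothedNormPow_of_ne_zero s (by simpa using hne), normPow,
    placeSum_logAbs_eq_log_absNorm_span hne]
  change _ * Complex.exp (-s * (Real.log (Ideal.absNorm (Ideal.span {(u : 𝓞 K) * generator I})) :
    ℝ)) = _
  rw [hnorm, ← Complex.natCast_mul_natCast_cpow, ← Nat.cast_mul,
    Complex.cpow_def_of_ne_zero hpos, Complex.natCast_log, mul_comm (-s)]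
  rfl

lemma hasSum_smoothedNormPow_unitMulGenerator (s : ℂ) (I : ComplementaryIdeal J) :
    HasSum (fun u ↦ smoothedNormPow s ((unitMulGenerator J (I, u) : 𝓞 K) : K))
      (torsionOrder K * ((idealNorm I.1 : ℂ) ^ (-s) * (idealNorm J : ℂ) ^ (-s))) := by
  simp only [smoothedNormPow_unitMulGenerator]
  have hcutoff := Complex.hasSum_ofReal.2 (hasSum_unitCutoff_units
    (show (generator I : K) ≠ 0 by simpa using generator_ne_zero I))
  rw [Complex.ofReal_natCast] at hcutoff
  exact hcutoff.mul_right _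

-- Each ideal contributes the total mass of the cutoff on its unit orbit of generators, which is
-- the number of roots of unity.
lemma hasSum_smoothedNormPow_complementaryIdeal (J : (Ideal (𝓞 K))⁰) {s : ℂ} (hs : 1 < s.re) :
    HasSum (fun I : ComplementaryIdeal J ↦
        (torsionOrder K : ℂ) * ((idealNorm I.1 : ℂ) ^ (-s) * (idealNorm J : ℂ) ^ (-s)))
      (∑' y : (J : Ideal (𝓞 K)), smoothedNormPow s ((y : 𝓞 K) : K)) := by
  classical
  have hsum : Summable fun y : 𝓞 K ↦ smoothedNormPow s (y : K) :=
    (summable_norm_smoothedNormPow hs).of_norm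
  have hnonzero : ∑' y : (J : Ideal (𝓞 K)), smoothedNormPow s ((y : 𝓞 K) : K) =
      ∑' y : {y : 𝓞 K // y ∈ (J : Ideal (𝓞 K)) ∧ y ≠ 0}, smoothedNormPow s (y.1 : K) := by
    let f : 𝓞 K → ℂ := fun y ↦ smoothedNormPow s (y : K)
    refine (tsum_subtype {y : 𝓞 K | y ∈ (J : Ideal (𝓞 K))} f).trans (.trans (tsum_congr fun y ↦ ?_)
      (tsum_subtype {y : 𝓞 K | y ∈ (J : Ideal (𝓞 K)) ∧ y ≠ 0} f).symm)
    rcases eq_or_ne y 0 with rfl | hy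
    · simp [f, indicator, smoothedNormPow_zero]
    · simp only [indicator_apply, mem_ofPred_eq, hy, ne_eq, not_false_eq_true, and_true]
  let e := Equiv.ofBijective _ ⟨injective_unitMulGenerator (J := J), surjective_unitMulGenerator⟩
  rw [hnonzero]
  exact (e.hasSum_iff.2 (hsum.comp_injective Subtype.val_injective).hasSum).prod_fiberwise
    (hasSum_smoothedNormPow_unitMulGenerator s)

lemma exists_differentiableOn_tsum_ideal_mul_scaleFactor {J : Ideal (𝓞 K)} (hJ : J ≠ ⊥) {q : ℕ}
    (hq : q ≠ 0) :
    ∃ H : ℂ → ℂ, DifferentiableOn ℂ H {s | 1 - 1 / (Module.finrank ℚ K : ℝ) < s.re} ∧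
      ∀ s : ℂ, 1 < s.re → (∑' y : J, smoothedNormPow s ((y : 𝓞 K) : K)) *
        scaleFactor (Module.finrank ℚ K) q s = H s := by
  let b := Ideal.selfBasis (RingOfIntegers.basis K) J hJ
  let F : (Module.Free.ChooseBasisIndex ℤ (𝓞 K) → ℤ) →+ 𝓞 K :=
    ((J.restrictScalars ℤ).subtype.toAddMonoidHom).comp b.equivFun.symm.toAddEquiv.toAddMonoidHom
  have hF : Function.Injective F := fun x y h ↦ b.equivFun.symm.injective (Subtype.ext h)
  have hcard : Fintype.card (Module.Free.ChooseBasisIndex ℤ (𝓞 K)) = Module.finrank ℚ K := by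
    rw [← Module.finrank_eq_card_chooseBasisIndex, RingOfIntegers.rank]
  obtain ⟨H, hH, heq⟩ := exists_differentiableOn_tsum_mul_scaleFactor hcard hF hq
  refine ⟨H, hH, fun s hs ↦ ?_⟩
  rw [← heq s hs, ← b.equivFun.symm.toEquiv.tsum_eq]
  rfl

lemma torsionOrder_mul_idealNorm_cpow_ne_zero (J : (Ideal (𝓞 K))⁰) (s : ℂ) :
    (torsionOrder K : ℂ) * (idealNorm J : ℂ) ^ s ≠ 0 := by
  refine mul_ne_zero (by exact_mod_cast (torsionOrder_pos K).ne') ?_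
  rw [Ne, Complex.cpow_eq_zero_iff, not_and_or]
  exact Or.inl (by exact_mod_cast idealNorm_ne_zero J)

lemma hasSum_idealNorm_cpow_complementaryIdeal (J : (Ideal (𝓞 K))⁰) {s : ℂ} (hs : 1 < s.re) :
    HasSum (fun I : ComplementaryIdeal J ↦ (idealNorm I.1 : ℂ) ^ (-s))
      ((∑' y : (J : Ideal (𝓞 K)), smoothedNormPow s ((y : 𝓞 K) : K)) /
        (torsionOrder K * (idealNorm J : ℂ) ^ (-s))) := by
  simpa only [mul_left_comm (torsionOrder K : ℂ), mul_div_assoc,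
    div_self (torsionOrder_mul_idealNorm_cpow_ne_zero J (-s)), mul_one] using
    (hasSum_smoothedNormPow_complementaryIdeal J hs).div_const
      (torsionOrder K * (idealNorm J : ℂ) ^ (-s))

/-- The nonzero ideals in the class `C`. -/
abbrev IdealOfClass (C : ClassGroup (𝓞 K)) : Type _ :=
  {I : (Ideal (𝓞 K))⁰ // ClassGroup.mk0 I = C}

lemma exists_hasSum_idealNorm_cpow_class (C : ClassGroup (𝓞 K)) :
    ∃ J : (Ideal (𝓞 K))⁰, ∀ s : ℂ, 1 < s.re →
      HasSum (fun I : IdealOfClass C ↦ (idealNorm I.1 : ℂ) ^ (-s))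
        ((∑' y : (J : Ideal (𝓞 K)), smoothedNormPow s ((y : 𝓞 K) : K)) /
          (torsionOrder K * (idealNorm J : ℂ) ^ (-s))) := by
  obtain ⟨J, hJ⟩ := ClassGroup.mk0_surjective C⁻¹
  have hiff (I : (Ideal (𝓞 K))⁰) : ClassGroup.mk0 I = C ↔ ClassGroup.mk0 (I * J) = 1 := by
    rw [map_mul, hJ, mul_inv_eq_one]
  exact ⟨J, fun s hs ↦ (Equiv.subtypeEquivRight hiff).hasSum_iff.2
    (hasSum_idealNorm_cpow_complementaryIdeal J hs)⟩

lemma exists_differentiableOn_tsum_class_mul_scaleFactor (C : ClassGroup (𝓞 K)) {q : ℕ}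
    (hq : q ≠ 0) :
    ∃ H : ℂ → ℂ, DifferentiableOn ℂ H {s | 1 - 1 / (Module.finrank ℚ K : ℝ) < s.re} ∧
      ∀ s : ℂ, 1 < s.re → (∑' I : IdealOfClass C, (idealNorm I.1 : ℂ) ^ (-s)) *
        scaleFactor (Module.finrank ℚ K) q s = H s := by
  obtain ⟨J, hJ⟩ := exists_hasSum_idealNorm_cpow_class C
  obtain ⟨H, hH, heq⟩ := exists_differentiableOn_tsum_ideal_mul_scaleFactor
    (nonZeroDivisors.coe_ne_zero J) hq
  have hJ₀ : (idealNorm J : ℂ) ≠ 0 := by exact_mod_cast idealNorm_ne_zero J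
  refine ⟨fun s ↦ H s / (torsionOrder K * (idealNorm J : ℂ) ^ (-s)),
    hH.div (Differentiable.differentiableOn fun s ↦ ?_)
      fun s _ ↦ torsionOrder_mul_idealNorm_cpow_ne_zero J (-s), fun s hs ↦ ?_⟩
  · exact (differentiableAt_id.neg.const_cpow (Or.inl hJ₀)).const_mul _
  · beta_reduce
    rw [(hJ s hs).tsum_eq, ← heq s hs, div_mul_eq_mul_div]

lemma summable_idealNorm_rpow {σ : ℝ} (hσ : 1 < σ) :
    Summable fun I : (Ideal (𝓞 K))⁰ ↦ (idealNorm I : ℝ) ^ (-σ) := by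
  suffices h : Summable fun p : Σ C : ClassGroup (𝓞 K), IdealOfClass C ↦
      (idealNorm p.2.1 : ℝ) ^ (-σ) from (Equiv.sigmaFiberEquiv _).summable_iff.1 h
  rw [summable_sigma_of_nonneg fun _ ↦ by positivity]
  refine ⟨fun C ↦ ?_, Summable.of_finite⟩
  obtain ⟨J, hJ⟩ := exists_hasSum_idealNorm_cpow_class C
  exact (hJ σ (by simpa using hσ)).summable.norm.congr fun I ↦ norm_idealNorm_cpow_neg _ _

lemma summable_idealNorm_cpow {s : ℂ} (hs : 1 < s.re) :
    Summable fun I : (Ideal (𝓞 K))⁰ ↦ (idealNorm I : ℂ) ^ (-s) :=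
  .of_norm ((summable_idealNorm_rpow hs).congr fun I ↦ (norm_idealNorm_cpow_neg I s).symm)

variable (K) in
lemma exists_differentiableOn_tsum_idealNorm_mul_scaleFactor {q : ℕ} (hq : q ≠ 0) :
    ∃ H : ℂ → ℂ, DifferentiableOn ℂ H {s | 1 - 1 / (Module.finrank ℚ K : ℝ) < s.re} ∧
      ∀ s : ℂ, 1 < s.re → (∑' I : (Ideal (𝓞 K))⁰, (idealNorm I : ℂ) ^ (-s)) *
        scaleFactor (Module.finrank ℚ K) q s = H s := by
  choose H hH heq using fun C : ClassGroup (𝓞 K) ↦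
    exists_differentiableOn_tsum_class_mul_scaleFactor C hq
  refine ⟨fun s ↦ ∑ C, H C s, DifferentiableOn.fun_sum fun C _ ↦ hH C, fun s hs ↦ ?_⟩
  let e := Equiv.sigmaFiberEquiv (ClassGroup.mk0 : (Ideal (𝓞 K))⁰ → ClassGroup (𝓞 K))
  have hsigma := (e.summable_iff.2 (summable_idealNorm_cpow hs)).tsum_sigma
  simp only [← heq _ s hs]
  rw [← Finset.sum_mul, ← e.tsum_eq]
  exact congrArg (· * _) (hsigma.trans (tsum_fintype _))

end ClassSeries

section FiberSum

variable {X : Type*} {N : X → ℕ} {f : X → ℝ}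

/-- The sum of `f` over the elements of size `n`, as measured by `N`. Grouping the terms of the
generalized Dirichlet series `∑ f x * N x ^ (-s)` by size gives the L-series of `fiberSum N f`. -/
noncomputable def fiberSum (N : X → ℕ) (f : X → ℝ) (n : ℕ) : ℝ := ∑' x : {x : X // N x = n}, f x

lemma fiberSum_nonneg (hf : ∀ x, 0 ≤ f x) (n : ℕ) : 0 ≤ fiberSum N f n :=
  tsum_nonneg fun x ↦ hf x.1

variable (N f) in
lemma fiberSum_mul_log (n : ℕ) :
    fiberSum N (fun x ↦ f x * Real.log (N x)) n = fiberSum N f n * Real.log n := by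
  unfold fiberSum
  rw [← tsum_mul_right]
  exact tsum_congr fun x ↦ by simp only [x.2]

lemma hasSum_fiber_term (hN : ∀ x, N x ≠ 0) {s : ℂ}
    (hsum : Summable fun x ↦ (f x : ℂ) * (N x : ℂ) ^ (-s)) (n : ℕ) :
    HasSum (fun x : {x : X // N x = n} ↦ (f x : ℂ) * (N x : ℂ) ^ (-s))
      (LSeries.term (fun n ↦ (fiberSum N f n : ℂ)) s n) := by
  rcases eq_or_ne n 0 with rfl | hn
  · have : IsEmpty {x : X // N x = 0} := ⟨fun x ↦ hN _ x.2⟩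
    rw [LSeries.term_zero]
    exact hasSum_empty
  · have hfiber : Summable fun x : {x : X // N x = n} ↦ (f x : ℂ) * (N x : ℂ) ^ (-s) :=
      hsum.comp_injective Subtype.val_injective
    have hterm : LSeries.term (fun n ↦ (fiberSum N f n : ℂ)) s n =
        ∑' x : {x : X // N x = n}, (f x : ℂ) * (N x : ℂ) ^ (-s) := by
      rw [LSeries.term_of_ne_zero hn, fiberSum, Complex.ofReal_tsum, div_eq_mul_inv,
        ← Complex.cpow_neg, ← tsum_mul_right]
      exact tsum_congr fun x ↦ by rw [x.2]
    rw [hterm]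
    exact hfiber.hasSum

lemma summable_mul_natCast_cpow (hN : ∀ x, N x ≠ 0) (hf : ∀ x, 0 ≤ f x)
    (hsum : ∀ σ : ℝ, 1 < σ → Summable fun x ↦ f x * (N x : ℝ) ^ (-σ)) {s : ℂ} (hs : 1 < s.re) :
    Summable fun x ↦ (f x : ℂ) * (N x : ℂ) ^ (-s) := by
  refine Summable.of_norm ((hsum s.re hs).congr fun x ↦ ?_)
  rw [norm_mul, Complex.norm_real, Real.norm_of_nonneg (hf x),
    Complex.norm_natCast_cpow_of_pos (Nat.pos_of_ne_zero (hN x)), Complex.neg_re]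

lemma hasSum_term_fiberSum (hN : ∀ x, N x ≠ 0) (hf : ∀ x, 0 ≤ f x)
    (hsum : ∀ σ : ℝ, 1 < σ → Summable fun x ↦ f x * (N x : ℝ) ^ (-σ)) {s : ℂ} (hs : 1 < s.re) :
    HasSum (LSeries.term (fun n ↦ (fiberSum N f n : ℂ)) s)
      (∑' x, (f x : ℂ) * (N x : ℂ) ^ (-s)) := by
  have hsummable := summable_mul_natCast_cpow hN hf hsum hs
  exact ((Equiv.sigmaFiberEquiv N).hasSum_iff.2 hsummable.hasSum).sigma
    (hasSum_fiber_term hN hsummable)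

lemma LSeriesSummable_fiberSum (hN : ∀ x, N x ≠ 0) (hf : ∀ x, 0 ≤ f x)
    (hsum : ∀ σ : ℝ, 1 < σ → Summable fun x ↦ f x * (N x : ℝ) ^ (-σ)) {s : ℂ} (hs : 1 < s.re) :
    LSeriesSummable (fun n ↦ (fiberSum N f n : ℂ)) s :=
  (hasSum_term_fiberSum hN hf hsum hs).summable

lemma LSeries_fiberSum (hN : ∀ x, N x ≠ 0) (hf : ∀ x, 0 ≤ f x)
    (hsum : ∀ σ : ℝ, 1 < σ → Summable fun x ↦ f x * (N x : ℝ) ^ (-σ)) {s : ℂ} (hs : 1 < s.re) :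
    LSeries (fun n ↦ (fiberSum N f n : ℂ)) s = ∑' x, (f x : ℂ) * (N x : ℂ) ^ (-s) :=
  (hasSum_term_fiberSum hN hf hsum hs).tsum_eq

end FiberSum

section DedekindZeta

variable (K : Type*) [Field K] [NumberField K]

/-- The number of integral ideals of norm `n`, with value `0` at `n = 0`; these are the
coefficients of the Dedekind zeta function. -/
noncomputable def idealCount (n : ℕ) : ℝ := fiberSum (idealNorm (K := K)) (fun _ ↦ 1) n

variable {K}

lemma summable_one_mul_idealNorm_rpow {σ : ℝ} (hσ : 1 < σ) :
    Summable fun I : (Ideal (𝓞 K))⁰ ↦ 1 * (idealNorm I : ℝ) ^ (-σ) := by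
  simpa using summable_idealNorm_rpow hσ

lemma LSeriesSummable_idealCount {s : ℂ} (hs : 1 < s.re) :
    LSeriesSummable (fun n ↦ (idealCount K n : ℂ)) s :=
  LSeriesSummable_fiberSum idealNorm_ne_zero (fun _ ↦ zero_le_one)
    (fun _ ↦ summable_one_mul_idealNorm_rpow) hs

lemma LSeries_idealCount {s : ℂ} (hs : 1 < s.re) :
    LSeries (fun n ↦ (idealCount K n : ℂ)) s =
      ∑' I : (Ideal (𝓞 K))⁰, (idealNorm I : ℂ) ^ (-s) := by
  simpa [idealCount] using LSeries_fiberSum idealNorm_ne_zero (fun _ ↦ zero_le_one)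
    (fun _ ↦ summable_one_mul_idealNorm_rpow (K := K)) hs

lemma idealCount_eq_card {n : ℕ} (hn : n ≠ 0) :
    idealCount K n = Nat.card {I : Ideal (𝓞 K) // Ideal.absNorm I = n} := by
  have hcard : Nat.card {I : (Ideal (𝓞 K))⁰ // idealNorm I = n} =
      Nat.card {I : Ideal (𝓞 K) // Ideal.absNorm I = n} := by
    refine Nat.card_congr ⟨fun I ↦ ⟨I.1.1, I.2⟩, fun I ↦ ⟨⟨I.1, ?_⟩, I.2⟩, fun _ ↦ rfl,
      fun _ ↦ rfl⟩
    exact mem_nonZeroDivisors_of_ne_zero fun h ↦ hn (by rw [← I.2, h]; simp)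
  rw [← hcard]
  simp [idealCount, fiberSum, tsum_const]

lemma LSeries_idealCount_eq_dedekindZeta (s : ℂ) :
    LSeries (fun n ↦ (idealCount K n : ℂ)) s = dedekindZeta K s :=
  LSeries_congr (fun {n} hn ↦ by simp [idealCount_eq_card hn]) s

variable (K) in
theorem exists_analyticAt_eq_sub_one_mul_LSeries_idealCount :
    ∃ h : ℂ → ℂ, (∀ s, 1 ≤ s.re → AnalyticAt ℂ h s) ∧ h 1 ≠ 0 ∧
      ∀ s, 1 < s.re → h s = (s - 1) * LSeries (fun n ↦ (idealCount K n : ℂ)) s := by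
  obtain ⟨H₂, hH₂, heq₂⟩ :=
    exists_differentiableOn_tsum_idealNorm_mul_scaleFactor K two_ne_zero
  obtain ⟨H₃, hH₃, heq₃⟩ :=
    exists_differentiableOn_tsum_idealNorm_mul_scaleFactor K three_ne_zero
  have habscissa : 1 - 1 / (Module.finrank ℚ K : ℝ) < 1 := by
    linarith [one_div_pos.2 (finrank_pos_real K)]
  obtain ⟨h, hh, hhZ⟩ := exists_analyticAt_eq_sub_one_mul
    (Z := fun s ↦ LSeries (fun n ↦ (idealCount K n : ℂ)) s) Module.finrank_pos habscissa hH₂ hH₃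
    (fun s hs ↦ by rw [LSeries_idealCount hs, heq₂ s hs])
    (fun s hs ↦ by rw [LSeries_idealCount hs, heq₃ s hs])
  refine ⟨h, hh, ?_, hhZ⟩
  have hresidue : Tendsto (fun s : ℝ ↦ ((s : ℂ) - 1) *
      LSeries (fun n ↦ (idealCount K n : ℂ)) s) (𝓝[>] 1) (𝓝 (dedekindZeta_residue K : ℂ)) := by
    simp only [LSeries_idealCount_eq_dedekindZeta]
    exact_mod_cast tendsto_sub_one_mul_dedekindZeta_nhdsGT K
  rw [eq_of_tendsto_sub_one_mul (hh 1 (by simp)).continuousAt hhZ hresidue]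
  exact_mod_cast (dedekindZeta_residue_pos K).ne'

end DedekindZeta

/-! ### The logarithmic derivative of the Dedekind zeta function -/

section VonMangoldt

/-- The nonzero prime ideals of the ring of integers of `K`. -/
abbrev PrimeIdeal (K : Type*) [Field K] : Type _ := {P : Ideal (𝓞 K) // Prime P}

/-- The powers of prime ideals other than the unit ideal; the pair `(P, k)` stands for
`P ^ (k + 1)`. -/
abbrev PrimePower (K : Type*) [Field K] : Type _ := PrimeIdeal K × ℕ

/-- The ideal `P ^ (k + 1)` represented by the pair `(P, k)`. -/
def primePowerIdeal {K : Type*} [Field K] (t : PrimePower K) : Ideal (𝓞 K) := t.1.1 ^ (t.2 + 1)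

variable {K : Type*} [Field K] [NumberField K]

/-- The absolute norm of a nonzero prime ideal. -/
noncomputable def primeNorm (P : PrimeIdeal K) : ℕ := Ideal.absNorm P.1

/-- The absolute norm of a prime power. -/
noncomputable def primePowerNorm (t : PrimePower K) : ℕ := primeNorm t.1 ^ (t.2 + 1)

/-- The value `log N(P)` at a power of `P` of the von Mangoldt function for ideals. -/
noncomputable def primePowerWeight (t : PrimePower K) : ℝ := Real.log (primeNorm t.1)

lemma one_lt_primeNorm (P : PrimeIdeal K) : 1 < primeNorm P := by
  have hne_zero : primeNorm P ≠ 0 := Ideal.absNorm_eq_zero_iff.not.2 P.2.ne_zero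
  have hne_one : primeNorm P ≠ 1 := fun h ↦ P.2.not_isUnit <| by
    rw [Ideal.absNorm_eq_one_iff.1 h, ← Ideal.one_eq_top]
    exact isUnit_one
  omega

lemma primeNorm_ne_zero (P : PrimeIdeal K) : primeNorm P ≠ 0 :=
  (zero_lt_one.trans (one_lt_primeNorm P)).ne'

lemma primePowerNorm_ne_zero (t : PrimePower K) : primePowerNorm t ≠ 0 :=
  pow_ne_zero _ (primeNorm_ne_zero t.1)

lemma primePowerWeight_nonneg (t : PrimePower K) : 0 ≤ primePowerWeight t :=
  Real.log_natCast_nonneg _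

open scoped Classical in
lemma primePowerIdeal_dvd_iff (t : PrimePower K) {I : Ideal (𝓞 K)} (hI : I ≠ ⊥) :
    primePowerIdeal t ∣ I ↔ t.2 < (normalizedFactors I).count t.1.1 := by
  rw [primePowerIdeal, pow_dvd_iff_le_emultiplicity,
    emultiplicity_eq_count_normalizedFactors t.1.2.irreducible hI, normalize_eq]
  norm_cast

open scoped Classical in
lemma log_absNorm_eq_sum_normalizedFactors {I : Ideal (𝓞 K)} (hI : I ≠ ⊥) :
    Real.log (Ideal.absNorm I) = ∑ P ∈ (normalizedFactors I).toFinset,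
      (normalizedFactors I).count P * Real.log (Ideal.absNorm P) := by
  have hne : ∀ P ∈ normalizedFactors I, Ideal.absNorm P ≠ 0 := fun P hP ↦
    Ideal.absNorm_eq_zero_iff.not.2 (prime_of_normalized_factor P hP).ne_zero
  conv_lhs => rw [← Ideal.prod_normalizedFactors_eq_self hI, map_multiset_prod,
    Finset.prod_multiset_map_count, Nat.cast_prod]
  rw [Real.log_prod fun P hP ↦ ?_]
  · simp
  · exact_mod_cast pow_ne_zero _ (hne P (Multiset.mem_toFinset.1 hP))

lemma sum_range_ite_lt {m n : ℕ} (hmn : m ≤ n) (x : ℝ) :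
    ∑ k ∈ Finset.range n, (if k < m then x else 0) = m * x := by
  have hfilter : {k ∈ Finset.range n | k < m} = Finset.range m := by
    ext k
    simp only [Finset.mem_filter, Finset.mem_range]
    omega
  rw [← Finset.sum_filter, hfilter, Finset.sum_const, Finset.card_range, nsmul_eq_mul]

open scoped Classical in
lemma hasSum_primePowerWeight_of_dvd (I : (Ideal (𝓞 K))⁰) :
    HasSum (fun t : PrimePower K ↦ if primePowerIdeal t ∣ (I : Ideal (𝓞 K)) then
      primePowerWeight t else 0) (Real.log (idealNorm I)) := by
  have hI : (I : Ideal (𝓞 K)) ≠ ⊥ := nonZeroDivisors.coe_ne_zero I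
  set m := normalizedFactors (I : Ideal (𝓞 K)) with hm
  have hsum : ∑ t ∈ m.toFinset.subtype Prime ×ˢ Finset.range m.card,
      (if t.2 < m.count t.1.1 then primePowerWeight t else 0) = Real.log (idealNorm I) := by
    rw [idealNorm, log_absNorm_eq_sum_normalizedFactors hI, Finset.sum_product,
      ← Finset.sum_subtype_of_mem _ fun P hP ↦
        prime_of_normalized_factor P (Multiset.mem_toFinset.1 hP)]
    exact Finset.sum_congr rfl fun P _ ↦
      sum_range_ite_lt (Multiset.count_le_card P.1 m) (Real.log (primeNorm P))
  simp only [primePowerIdeal_dvd_iff _ hI, ← hm]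
  rw [← hsum]
  refine hasSum_sum_of_ne_finset_zero fun t ht ↦ if_neg fun hlt ↦ ht ?_
  rw [Finset.mem_product, Finset.mem_subtype, Multiset.mem_toFinset, Finset.mem_range]
  exact ⟨Multiset.count_pos.1 (Nat.zero_lt_of_lt hlt), hlt.trans_le (Multiset.count_le_card _ _)⟩

open scoped Classical in
lemma hasSum_idealNorm_cpow_of_dvd (t : PrimePower K) {s : ℂ} (hs : 1 < s.re) :
    HasSum (fun I : (Ideal (𝓞 K))⁰ ↦ if primePowerIdeal t ∣ (I : Ideal (𝓞 K)) then
        (idealNorm I : ℂ) ^ (-s) else 0)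
      ((primePowerNorm t : ℂ) ^ (-s) * ∑' I : (Ideal (𝓞 K))⁰, (idealNorm I : ℂ) ^ (-s)) := by
  let Q : (Ideal (𝓞 K))⁰ :=
    ⟨primePowerIdeal t, mem_nonZeroDivisors_of_ne_zero (pow_ne_zero _ t.1.2.ne_zero)⟩
  have hinj : Function.Injective fun I : (Ideal (𝓞 K))⁰ ↦ Q * I := mul_right_injective Q
  refine (hinj.hasSum_iff fun I hI ↦ if_neg ?_).1 ?_
  · rintro ⟨J, hJ⟩
    have hJ₀ : J ≠ 0 := by
      rintro rfl
      exact nonZeroDivisors.coe_ne_zero I (hJ.trans (mul_zero _))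
    exact hI ⟨⟨J, mem_nonZeroDivisors_of_ne_zero hJ₀⟩, Subtype.ext hJ.symm⟩
  · refine ((summable_idealNorm_cpow hs).hasSum.mul_left _).congr_fun fun I ↦ ?_
    have hnorm : idealNorm (Q * I) = primePowerNorm t * idealNorm I := by
      simp [idealNorm, Q, primePowerIdeal, primePowerNorm, primeNorm]
    have hdvd : primePowerIdeal t ∣ ((Q * I : (Ideal (𝓞 K))⁰) : Ideal (𝓞 K)) := Dvd.intro _ rfl
    rw [Function.comp_apply, if_pos hdvd, hnorm, Nat.cast_mul,
      Complex.natCast_mul_natCast_cpow]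

lemma summable_log_mul_idealNorm_rpow {σ : ℝ} (hσ : 1 < σ) :
    Summable fun I : (Ideal (𝓞 K))⁰ ↦ Real.log (idealNorm I) * (idealNorm I : ℝ) ^ (-σ) := by
  set ε := (σ - 1) / 2 with hε
  have hε₀ : 0 < ε := by linarith
  refine Summable.of_nonneg_of_le
    (fun I ↦ mul_nonneg (Real.log_natCast_nonneg _) (by positivity)) (fun I ↦ ?_)
    ((summable_idealNorm_rpow (K := K) (σ := σ - ε) (by linarith)).mul_left ε⁻¹)
  have hpos : (0 : ℝ) < idealNorm I := by exact_mod_cast Nat.pos_of_ne_zero (idealNorm_ne_zero I)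
  calc Real.log (idealNorm I) * (idealNorm I : ℝ) ^ (-σ)
      ≤ (idealNorm I : ℝ) ^ ε / ε * (idealNorm I : ℝ) ^ (-σ) := by
        gcongr
        exact Real.log_le_rpow_div hpos.le hε₀
    _ = ε⁻¹ * (idealNorm I : ℝ) ^ (-(σ - ε)) := by
        rw [div_mul_eq_mul_div, ← Real.rpow_add hpos, div_eq_inv_mul]
        ring_nf

open scoped Classical in
/-- The terms of the double series over ideals `I` and prime powers `t` dividing `I`, whose two
iterated sums express that `-ζ_K'` is `ζ_K` times the von Mangoldt series. -/
noncomputable def divisorTerm (s : ℂ) (p : (Ideal (𝓞 K))⁰ × PrimePower K) : ℂ :=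
  if primePowerIdeal p.2 ∣ (p.1 : Ideal (𝓞 K)) then
    (primePowerWeight p.2 : ℂ) * (idealNorm p.1 : ℂ) ^ (-s) else 0

lemma hasSum_divisorTerm_left (s : ℂ) (I : (Ideal (𝓞 K))⁰) :
    HasSum (fun t ↦ divisorTerm s (I, t))
      ((Real.log (idealNorm I) : ℂ) * (idealNorm I : ℂ) ^ (-s)) := by
  classical
  refine ((Complex.hasSum_ofReal.2 (hasSum_primePowerWeight_of_dvd I)).mul_right
    ((idealNorm I : ℂ) ^ (-s))).congr_fun fun t ↦ ?_
  unfold divisorTerm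
  split_ifs <;> simp

lemma hasSum_norm_divisorTerm_left (s : ℂ) (I : (Ideal (𝓞 K))⁰) :
    HasSum (fun t ↦ ‖divisorTerm s (I, t)‖)
      (Real.log (idealNorm I) * (idealNorm I : ℝ) ^ (-s.re)) := by
  classical
  refine ((hasSum_primePowerWeight_of_dvd I).mul_right
    ((idealNorm I : ℝ) ^ (-s.re))).congr_fun fun t ↦ ?_
  unfold divisorTerm
  split_ifs
  · rw [norm_mul, Complex.norm_real, Real.norm_of_nonneg (primePowerWeight_nonneg t),
      norm_idealNorm_cpow_neg]
  · simp

lemma hasSum_divisorTerm_right {s : ℂ} (hs : 1 < s.re) (t : PrimePower K) :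
    HasSum (fun I ↦ divisorTerm s (I, t))
      ((primePowerWeight t : ℂ) * (primePowerNorm t : ℂ) ^ (-s) *
        ∑' I : (Ideal (𝓞 K))⁰, (idealNorm I : ℂ) ^ (-s)) := by
  classical
  rw [mul_assoc]
  refine ((hasSum_idealNorm_cpow_of_dvd t hs).mul_left (primePowerWeight t : ℂ)).congr_fun
    fun I ↦ ?_
  unfold divisorTerm
  split_ifs <;> simp

lemma summable_divisorTerm {s : ℂ} (hs : 1 < s.re) : Summable (divisorTerm (K := K) s) := by
  refine Summable.of_norm ((summable_prod_of_nonneg fun _ ↦ norm_nonneg _).2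
    ⟨fun I ↦ (hasSum_norm_divisorTerm_left s I).summable, ?_⟩)
  simp only [(hasSum_norm_divisorTerm_left s _).tsum_eq]
  exact summable_log_mul_idealNorm_rpow hs

lemma hasSum_divisorTerm_primePower {s : ℂ} (hs : 1 < s.re) :
    HasSum (fun t : PrimePower K ↦ (primePowerWeight t : ℂ) * (primePowerNorm t : ℂ) ^ (-s) *
      ∑' I : (Ideal (𝓞 K))⁰, (idealNorm I : ℂ) ^ (-s)) (∑' p, divisorTerm (K := K) s p) :=
  ((Equiv.prodComm _ _).hasSum_iff.2 (summable_divisorTerm hs).hasSum).prod_fiberwise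
    (hasSum_divisorTerm_right hs)

lemma tsum_log_mul_idealNorm_cpow {s : ℂ} (hs : 1 < s.re) :
    ∑' I : (Ideal (𝓞 K))⁰, (Real.log (idealNorm I) : ℂ) * (idealNorm I : ℂ) ^ (-s) =
      (∑' I : (Ideal (𝓞 K))⁰, (idealNorm I : ℂ) ^ (-s)) *
        ∑' t : PrimePower K, (primePowerWeight t : ℂ) * (primePowerNorm t : ℂ) ^ (-s) := by
  rw [((summable_divisorTerm hs).hasSum.prod_fiberwise (hasSum_divisorTerm_left s)).tsum_eq,
    ← (hasSum_divisorTerm_primePower hs).tsum_eq, tsum_mul_right, mul_comm]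

lemma tsum_idealNorm_cpow_ofReal_ne_zero {σ : ℝ} (hσ : 1 < σ) :
    ∑' I : (Ideal (𝓞 K))⁰, (idealNorm I : ℂ) ^ (-(σ : ℂ)) ≠ 0 := by
  have hreal (I : (Ideal (𝓞 K))⁰) :
      (idealNorm I : ℂ) ^ (-(σ : ℂ)) = (((idealNorm I : ℝ) ^ (-σ) : ℝ) : ℂ) := by
    rw [Complex.ofReal_cpow (by positivity), Complex.ofReal_natCast, Complex.ofReal_neg]
  simp only [hreal]
  rw [← Complex.ofReal_tsum, Complex.ofReal_ne_zero]
  refine ((summable_idealNorm_rpow hσ).tsum_pos (fun _ ↦ by positivity) 1 ?_).ne'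
  exact Real.rpow_pos_of_pos (by exact_mod_cast Nat.pos_of_ne_zero (idealNorm_ne_zero _)) _

lemma summable_primePowerWeight_mul_rpow {σ : ℝ} (hσ : 1 < σ) :
    Summable fun t : PrimePower K ↦ primePowerWeight t * (primePowerNorm t : ℝ) ^ (-σ) := by
  have hsum := (hasSum_divisorTerm_primePower (K := K) (s := σ) (by simpa using hσ)).summable
  rw [summable_mul_right_iff (tsum_idealNorm_cpow_ofReal_ne_zero hσ)] at hsum
  refine hsum.norm.congr fun t ↦ ?_
  rw [norm_mul, Complex.norm_real, Real.norm_of_nonneg (primePowerWeight_nonneg t),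
    Complex.norm_natCast_cpow_of_pos (Nat.pos_of_ne_zero (primePowerNorm_ne_zero t)),
    Complex.neg_re, Complex.ofReal_re]

variable (K) in
/-- The von Mangoldt function of `K`: the sum of `log N(P)` over the prime powers of norm `n`. -/
noncomputable def idealVonMangoldt (n : ℕ) : ℝ :=
  fiberSum (primePowerNorm (K := K)) primePowerWeight n

lemma idealVonMangoldt_nonneg (n : ℕ) : 0 ≤ idealVonMangoldt K n :=
  fiberSum_nonneg primePowerWeight_nonneg n

lemma LSeriesSummable_idealVonMangoldt {s : ℂ} (hs : 1 < s.re) :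
    LSeriesSummable (fun n ↦ (idealVonMangoldt K n : ℂ)) s :=
  LSeriesSummable_fiberSum primePowerNorm_ne_zero primePowerWeight_nonneg
    (fun _ ↦ summable_primePowerWeight_mul_rpow) hs

lemma LSeries_logMul_idealCount {s : ℂ} (hs : 1 < s.re) :
    LSeries (LSeries.logMul fun n ↦ (idealCount K n : ℂ)) s =
      LSeries (fun n ↦ (idealCount K n : ℂ)) s *
        LSeries (fun n ↦ (idealVonMangoldt K n : ℂ)) s := by
  have hlogMul : LSeries (LSeries.logMul fun n ↦ (idealCount K n : ℂ)) s =
      LSeries (fun n ↦ (fiberSum (idealNorm (K := K))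
        (fun I ↦ 1 * Real.log (idealNorm I)) n : ℂ)) s := by
    refine LSeries_congr (fun {n} _ ↦ ?_) s
    rw [fiberSum_mul_log, LSeries.logMul, ← Complex.natCast_log, idealCount, Complex.ofReal_mul,
      mul_comm]
  simp only [one_mul] at hlogMul
  rw [hlogMul, LSeries_fiberSum idealNorm_ne_zero (fun I ↦ Real.log_natCast_nonneg _)
    (fun _ ↦ summable_log_mul_idealNorm_rpow) hs, tsum_log_mul_idealNorm_cpow hs,
    LSeries_idealCount hs]
  exact congrArg _ (LSeries_fiberSum primePowerNorm_ne_zero primePowerWeight_nonneg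
    (fun _ ↦ summable_primePowerWeight_mul_rpow) hs).symm

variable (K) in
theorem exists_continuousOn_LSeries_idealVonMangoldt :
    ∃ G : ℂ → ℂ, ContinuousOn G {s | 1 ≤ s.re} ∧
      ∀ s, 1 < s.re → LSeries (fun n ↦ (idealVonMangoldt K n : ℂ)) s = 1 / (s - 1) + G s := by
  obtain ⟨h, hh, hh₁, hhζ⟩ := exists_analyticAt_eq_sub_one_mul_LSeries_idealCount K
  exact exists_continuousOn_LSeries_eq_one_div_add idealVonMangoldt_nonneg
    (fun r hr ↦ LSeriesSummable_idealCount (by simpa using hr))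
    (fun r hr ↦ LSeriesSummable_idealVonMangoldt (by simpa using hr)) hh hh₁ hhζ
    fun s hs ↦ LSeries_logMul_idealCount hs

end VonMangoldt

/-! ### The prime ideal theorem -/

section PrimeIdealTheorem

open ArithmeticFunction

variable {K : Type*} [Field K] [NumberField K]

variable (K) in
/-- The number of prime ideals of norm `n`. -/
noncomputable def primeIdealCount (n : ℕ) : ℕ := Nat.card {P : PrimeIdeal K // primeNorm P = n}

instance (P : PrimeIdeal K) : P.1.IsPrime := Ideal.isPrime_of_prime P.2

instance (P : PrimeIdeal K) : P.1.IsMaximal :=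
  Ideal.IsPrime.isMaximal inferInstance P.2.ne_zero

lemma natCard_quotient (P : PrimeIdeal K) : Nat.card (𝓞 K ⧸ P.1) = primeNorm P := by
  rw [primeNorm, Ideal.absNorm_apply, Submodule.cardQuot_apply]

instance (P : PrimeIdeal K) : Finite (𝓞 K ⧸ P.1) :=
  Nat.finite_of_card_ne_zero (natCard_quotient P ▸ primeNorm_ne_zero P)

noncomputable instance (P : PrimeIdeal K) : Field (𝓞 K ⧸ P.1) := Ideal.Quotient.field P.1

lemma isPrimePow_primeNorm (P : PrimeIdeal K) : IsPrimePow (primeNorm P) := by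
  let _ := Fintype.ofFinite (𝓞 K ⧸ P.1)
  rw [← natCard_quotient, Nat.card_eq_fintype_card]
  exact FiniteField.isPrimePow_card _

lemma natCast_primeNorm_mem (P : PrimeIdeal K) : (primeNorm P : 𝓞 K) ∈ P.1 := Ideal.absNorm_mem _

lemma minFac_primePowerNorm_mem (t : PrimePower K) : ((primePowerNorm t).minFac : 𝓞 K) ∈ t.1.1 := by
  have hnorm := natCast_primeNorm_mem t.1
  rw [← (isPrimePow_primeNorm t.1).minFac_pow_factorization_eq, Nat.cast_pow] at hnorm
  rw [primePowerNorm, Nat.pow_minFac t.2.succ_ne_zero]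
  exact Ideal.IsPrime.mem_of_pow_mem inferInstance _ hnorm

lemma sum_log_primeNorm_le {F : Finset (PrimeIdeal K)} {p : ℕ} (hp : 0 < p)
    (hmem : ∀ P ∈ F, (p : 𝓞 K) ∈ P.1) :
    ∑ P ∈ F, Real.log (primeNorm P) ≤ Module.finrank ℤ (𝓞 K) * Real.log p := by
  have hdvd : ∏ P ∈ F.map (Function.Embedding.subtype _), P ∣ Ideal.span {(p : 𝓞 K)} := by
    refine Finset.prod_primes_dvd _ (fun Q hQ ↦ ?_) fun Q hQ ↦ ?_ <;>
      obtain ⟨P, hP, rfl⟩ := Finset.mem_map.1 hQ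
    · exact P.2
    · exact Ideal.dvd_span_singleton.2 (hmem P hP)
  have hnorm_dvd := map_dvd Ideal.absNorm hdvd
  rw [Ideal.absNorm_span_natCast, map_prod, Finset.prod_map] at hnorm_dvd
  have hle : ∏ P ∈ F, (primeNorm P : ℝ) ≤ (p : ℝ) ^ Module.finrank ℤ (𝓞 K) := by
    exact_mod_cast Nat.le_of_dvd (pow_pos hp _) hnorm_dvd
  have hpos : ∀ P ∈ F, (0 : ℝ) < primeNorm P := fun P _ ↦ by
    exact_mod_cast Nat.pos_of_ne_zero (primeNorm_ne_zero P)
  rw [← Real.log_prod fun P hP ↦ (hpos P hP).ne', ← Real.log_pow]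
  exact Real.log_le_log (Finset.prod_pos hpos) hle

lemma eq_of_primePowerNorm_eq {t u : PrimePower K} (hnorm : primePowerNorm t = primePowerNorm u)
    (hfst : t.1 = u.1) : t = u := by
  rw [primePowerNorm, primePowerNorm, hfst] at hnorm
  exact Prod.ext hfst (Nat.succ_injective (Nat.pow_right_injective (one_lt_primeNorm u.1) hnorm))

lemma idealVonMangoldt_le (n : ℕ) :
    idealVonMangoldt K n ≤ Module.finrank ℤ (𝓞 K) * vonMangoldt n := by
  classical
  refine Real.tsum_le_of_sum_le (fun _ ↦ primePowerWeight_nonneg _) fun u ↦ ?_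
  rcases u.eq_empty_or_nonempty with rfl | ⟨t₀, -⟩
  · rw [Finset.sum_empty]
    exact mul_nonneg (by positivity) vonMangoldt_nonneg
  have hn : IsPrimePow n := t₀.2 ▸ (isPrimePow_primeNorm _).pow t₀.1.2.succ_ne_zero
  have hinj : Set.InjOn (fun t : {t : PrimePower K // primePowerNorm t = n} ↦ t.1.1) u :=
    fun t _ t' _ h ↦ Subtype.ext (eq_of_primePowerNorm_eq (t.2.trans t'.2.symm) h)
  have hmem : ∀ P ∈ u.image fun t ↦ t.1.1, (n.minFac : 𝓞 K) ∈ P.1 := by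
    intro P hP
    obtain ⟨t, -, rfl⟩ := Finset.mem_image.1 hP
    simpa only [t.2] using minFac_primePowerNorm_mem t.1
  rw [vonMangoldt_apply, if_pos hn]
  exact (Finset.sum_image hinj).symm.trans_le (sum_log_primeNorm_le n.minFac_pos hmem)

lemma primePowerNorm_eq_prime_iff {p : ℕ} (hp : p.Prime) (t : PrimePower K) :
    primePowerNorm t = p ↔ primeNorm t.1 = p ∧ t.2 = 0 := by
  refine ⟨fun h ↦ ?_, fun ⟨hnorm, hexp⟩ ↦ by rw [primePowerNorm, hnorm, hexp, zero_add, pow_one]⟩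
  have hexp : t.2 = 0 := by
    by_contra hne
    exact Nat.Prime.not_prime_pow (by omega) (h.symm ▸ hp : (primePowerNorm t).Prime)
  rw [primePowerNorm, hexp, zero_add, pow_one] at h
  exact ⟨h, hexp⟩

lemma idealVonMangoldt_prime {p : ℕ} (hp : p.Prime) :
    idealVonMangoldt K p = primeIdealCount K p * Real.log p := by
  have hweight (t : {t : PrimePower K // primePowerNorm t = p}) :
      primePowerWeight t.1 = Real.log p := by
    rw [primePowerWeight, ((primePowerNorm_eq_prime_iff hp _).1 t.2).1]
  let e : {t : PrimePower K // primePowerNorm t = p} ≃ {P : PrimeIdeal K // primeNorm P = p} :=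
    { toFun := fun t ↦ ⟨t.1.1, ((primePowerNorm_eq_prime_iff hp _).1 t.2).1⟩
      invFun := fun P ↦ ⟨(P.1, 0), (primePowerNorm_eq_prime_iff hp _).2 ⟨P.2, rfl⟩⟩
      left_inv := fun t ↦
        Subtype.ext (Prod.ext rfl ((primePowerNorm_eq_prime_iff hp _).1 t.2).2.symm)
      right_inv := fun _ ↦ rfl }
  rw [idealVonMangoldt, fiberSum, tsum_congr hweight, tsum_const, nsmul_eq_mul, Nat.card_congr e,
    primeIdealCount]

variable (K) in
/-- The contribution of the non-prime `n` to the von Mangoldt function of `K`. -/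
noncomputable def nonprimeVonMangoldt (n : ℕ) : ℝ := if n.Prime then 0 else idealVonMangoldt K n

variable (K) in
/-- The contribution of the prime ideals of prime norm to the von Mangoldt function of `K`. -/
noncomputable def primeVonMangoldt (n : ℕ) : ℝ :=
  if n.Prime then primeIdealCount K n * Real.log n else 0

lemma primeVonMangoldt_eq_sub (n : ℕ) :
    primeVonMangoldt K n = idealVonMangoldt K n - nonprimeVonMangoldt K n := by
  rw [primeVonMangoldt, nonprimeVonMangoldt]
  split_ifs with hn
  · rw [idealVonMangoldt_prime hn, sub_zero]
  · rw [sub_self]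

lemma primeVonMangoldt_nonneg (n : ℕ) : 0 ≤ primeVonMangoldt K n := by
  rw [primeVonMangoldt]
  split_ifs
  · exact mul_nonneg (Nat.cast_nonneg _) (Real.log_natCast_nonneg _)
  · exact le_rfl

lemma nonprimeVonMangoldt_nonneg (n : ℕ) : 0 ≤ nonprimeVonMangoldt K n := by
  rw [nonprimeVonMangoldt]
  split_ifs
  · exact le_rfl
  · exact idealVonMangoldt_nonneg n

variable (K) in
lemma summable_nonprimeVonMangoldt_div : Summable fun n : ℕ ↦ nonprimeVonMangoldt K n / n := by
  refine Summable.of_nonneg_of_le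
    (fun n ↦ div_nonneg (nonprimeVonMangoldt_nonneg n) n.cast_nonneg) (fun n ↦ ?_)
    ((vonMangoldt.summable_residueClass_non_primes_div (q := 1) 0).mul_left
      (Module.finrank ℤ (𝓞 K) : ℝ))
  have hresidue : vonMangoldt.residueClass (q := 1) 0 n = vonMangoldt n :=
    Set.indicator_of_mem (s := {n : ℕ | (n : ZMod 1) = 0}) (Subsingleton.elim _ _) _
  rw [← mul_div_assoc, nonprimeVonMangoldt]
  gcongr
  split_ifs
  · simp
  · exact hresidue ▸ idealVonMangoldt_le n

lemma norm_term_nonprimeVonMangoldt_le {s : ℂ} (hs : 1 ≤ s.re) (n : ℕ) :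
    ‖LSeries.term (fun n ↦ (nonprimeVonMangoldt K n : ℂ)) s n‖ ≤ nonprimeVonMangoldt K n / n := by
  rcases eq_or_ne n 0 with rfl | hn
  · simp
  have hone : (1 : ℝ) ≤ n := by exact_mod_cast Nat.one_le_iff_ne_zero.2 hn
  rw [LSeries.norm_term_eq, if_neg hn, Complex.norm_real,
    Real.norm_of_nonneg (nonprimeVonMangoldt_nonneg n)]
  refine div_le_div_of_nonneg_left (nonprimeVonMangoldt_nonneg n) (by positivity) ?_
  simpa using Real.rpow_le_rpow_of_exponent_le hone hs

lemma LSeriesSummable_nonprimeVonMangoldt {s : ℂ} (hs : 1 ≤ s.re) :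
    LSeriesSummable (fun n ↦ (nonprimeVonMangoldt K n : ℂ)) s :=
  .of_norm_bounded (summable_nonprimeVonMangoldt_div K) (norm_term_nonprimeVonMangoldt_le hs)

lemma continuous_term (f : ℕ → ℂ) (n : ℕ) : Continuous fun s ↦ LSeries.term f s n := by
  rcases eq_or_ne n 0 with rfl | hn
  · simp only [LSeries.term_zero]
    exact continuous_const
  · simp only [LSeries.term_of_ne_zero hn]
    have hn' : (n : ℂ) ≠ 0 := by exact_mod_cast hn
    exact continuous_const.div (continuous_id.const_cpow (Or.inl hn'))
      fun s ↦ by simp [Complex.cpow_eq_zero_iff, hn']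

variable (K) in
lemma continuousOn_LSeries_nonprimeVonMangoldt :
    ContinuousOn (LSeries fun n ↦ (nonprimeVonMangoldt K n : ℂ)) {s | 1 ≤ s.re} :=
  continuousOn_tsum (fun n ↦ (continuous_term _ n).continuousOn)
    (summable_nonprimeVonMangoldt_div K) fun n _ hs ↦ norm_term_nonprimeVonMangoldt_le hs n

variable (K) in
theorem tendsto_sum_primeVonMangoldt_div :
    Tendsto (fun x : ℝ ↦ (∑ k ∈ Finset.Icc 1 ⌊x⌋₊, primeVonMangoldt K k) / x) atTop (𝓝 1) := by
  obtain ⟨G, hG, hGΛ⟩ := exists_continuousOn_LSeries_idealVonMangoldt K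
  have hsub : (fun n ↦ (primeVonMangoldt K n : ℂ)) =
      (fun n ↦ (idealVonMangoldt K n : ℂ)) - fun n ↦ (nonprimeVonMangoldt K n : ℂ) := by
    funext n
    simp [primeVonMangoldt_eq_sub n]
  refine tendsto_sum_div_of_LSeries_eq primeVonMangoldt_nonneg (fun r hr ↦ ?_)
    (hG.sub (continuousOn_LSeries_nonprimeVonMangoldt K)) fun s hs ↦ ?_
  · rw [hsub]
    exact (LSeriesSummable_idealVonMangoldt (by simpa using hr)).sub
      (LSeriesSummable_nonprimeVonMangoldt (by simpa using hr.le))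
  · rw [hsub, LSeries_sub (LSeriesSummable_idealVonMangoldt hs)
      (LSeriesSummable_nonprimeVonMangoldt hs.le), hGΛ s hs, Complex.ofReal_one, add_sub_assoc,
      Pi.sub_apply]

end PrimeIdealTheorem

/-! ### Splitting of primes in Kummer extensions -/

section PrimesBelow

variable {R : Type*} [CommRing R] {P : Ideal R} [hP : P.IsPrime] {p : ℕ}

lemma intCast_mem_iff_dvd (hp : p.Prime) (hpP : (p : R) ∈ P) (m : ℤ) :
    (m : R) ∈ P ↔ (p : ℤ) ∣ m := by
  refine ⟨fun hm ↦ ?_, ?_⟩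
  · by_contra hdvd
    obtain ⟨a, c, hac⟩ := (Nat.prime_iff_prime_int.1 hp).coprime_iff_not_dvd.2 hdvd
    refine hP.ne_top (P.eq_top_iff_one.2 ?_)
    have hone : (1 : R) = a * p + c * m := by exact_mod_cast congrArg (Int.cast : ℤ → R) hac.symm
    exact hone ▸ P.add_mem (P.mul_mem_left _ hpP) (P.mul_mem_left _ hm)
  · rintro ⟨c, rfl⟩
    push_cast
    exact P.mul_mem_right _ hpP

lemma natCast_mem_iff_dvd (hp : p.Prime) (hpP : (p : R) ∈ P) (m : ℕ) : (m : R) ∈ P ↔ p ∣ m := by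
  rw [← Int.natCast_dvd_natCast, ← intCast_mem_iff_dvd hp hpP, Int.cast_natCast]

lemma under_int_eq_span (hp : p.Prime) (hpP : (p : R) ∈ P) : P.under ℤ = Ideal.span {(p : ℤ)} := by
  ext m
  simp [Ideal.under_def, Ideal.mem_span_singleton, ← intCast_mem_iff_dvd hp hpP m]

lemma natCast_pow_sub_one_mem_iff (hp : p.Prime) (hpP : (p : R) ∈ P) (b k : ℕ) :
    (b : R) ^ k - 1 ∈ P ↔ (b : ZMod p) ^ k = 1 := by
  have h := intCast_mem_iff_dvd hp hpP ((b : ℤ) ^ k - 1)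
  rw [← ZMod.intCast_zmod_eq_zero_iff_dvd] at h
  push_cast at h
  rw [h, sub_eq_zero]

/-- If `u ≠ v`, then `∑ u ^ i * v ^ (n - 1 - i) = 0`, whose residue is `n * v ^ (n - 1)`. -/
lemma eq_of_pow_eq_pow_of_sub_mem [IsDomain R] {n : ℕ} (hn : (n : R) ∉ P) {u v : R}
    (hpow : u ^ n = v ^ n) (hv : v ∉ P) (hsub : u - v ∈ P) : u = v := by
  by_contra hne
  have hsum : ∑ i ∈ Finset.range n, u ^ i * v ^ (n - 1 - i) = 0 :=
    (mul_eq_zero.1 (geom_sum₂_mul u v n ▸ sub_eq_zero.2 hpow)).resolve_right (sub_ne_zero.2 hne)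
  have hres : ∀ i ∈ Finset.range n,
      Ideal.Quotient.mk P (u ^ i * v ^ (n - 1 - i)) = Ideal.Quotient.mk P (v ^ (n - 1)) := by
    intro i hi
    rw [map_mul, map_pow, map_pow, Ideal.Quotient.eq.2 hsub, ← pow_add, map_pow]
    congr 1
    have := Finset.mem_range.1 hi
    omega
  have hmem : (n : R) * v ^ (n - 1) ∈ P := by
    rw [← Ideal.Quotient.eq_zero_iff_mem, map_mul, map_natCast, ← nsmul_eq_mul,
      ← map_zero (Ideal.Quotient.mk P), ← hsum, map_sum, Finset.sum_congr rfl hres,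
      Finset.sum_const, Finset.card_range]
  exact (hP.mem_or_mem hmem).elim hn fun h ↦ hv (hP.mem_of_pow_mem _ h)

end PrimesBelow

section Frobenius

variable {R G : Type*} [CommRing R] [Group G] [MulSemiringAction G R] {P : Ideal R} {p : ℕ} {σ : G}

/-- `σ` acts modulo the ideal `P` as the `p`-th power map. For a prime ideal `P` containing the
rational prime `p`, this says that `σ` is a Frobenius element at `P`. -/
def IsFrobenius (P : Ideal R) (p : ℕ) (σ : G) : Prop := ∀ x : R, σ • x - x ^ p ∈ P

lemma isFrobenius_one_iff : IsFrobenius P p (1 : G) ↔ ∀ x : R, x ^ p - x ∈ P :=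
  forall_congr' fun x ↦ by rw [one_smul, ← neg_sub, neg_mem_iff]

lemma smul_natCast_eq (σ : G) (m : ℕ) : σ • (m : R) = m :=
  map_natCast (MulSemiringAction.toRingHom G R σ) m

lemma not_dvd_of_eq_mul_add_one {n k : ℕ} (hp : p.Prime) (hpk : p = k * n + 1) : ¬ p ∣ n := fun h ↦
  hp.not_dvd_one ((Nat.dvd_add_right (h.mul_left k)).1 (dvd_of_eq hpk))

lemma IsFrobenius.smul_eq_self_iff [IsDomain R] [hP : P.IsPrime] (hσ : IsFrobenius P p σ)
    (hp : p.Prime) (hpP : (p : R) ∈ P) {n k : ℕ} (hpk : p = k * n + 1) {β : R} {b : ℕ}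
    (hβ : β ^ n = b) (hb : ¬ p ∣ b) : σ • β = β ↔ (b : ZMod p) ^ k = 1 := by
  have hpn := not_dvd_of_eq_mul_add_one hp hpk
  have hβP : β ∉ P := fun h ↦ hb <| (natCast_mem_iff_dvd hp hpP b).1 <|
    hβ ▸ P.pow_mem_of_mem h n (Nat.pos_of_ne_zero fun h0 ↦ hpn (h0 ▸ dvd_zero p))
  have hpow : β ^ p = β * (b : R) ^ k := by
    rw [hpk, pow_succ, mul_comm k n, pow_mul, hβ, mul_comm]
  have hsplit : σ • β - β = (σ • β - β ^ p) + β * ((b : R) ^ k - 1) := by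
    rw [hpow]
    ring
  have hmem : σ • β - β ∈ P ↔ (b : ZMod p) ^ k = 1 := by
    rw [hsplit, P.add_mem_iff_right (hσ β), hP.mul_mem_iff_mem_or_mem, or_iff_right hβP,
      natCast_pow_sub_one_mem_iff hp hpP]
  rw [← hmem]
  refine ⟨fun h ↦ by rw [h, sub_self]; exact P.zero_mem, ?_⟩
  refine eq_of_pow_eq_pow_of_sub_mem ((natCast_mem_iff_dvd hp hpP n).not.2 hpn) ?_ hβP
  rw [← smul_pow', hβ, smul_natCast_eq]

end Frobenius

section KummerSystem

variable {ι A : Type*} [CommRing A]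

/-- `z` is a primitive `n`-th root of unity and the `β i` are `n`-th roots of the positive
integers `b i`, in a ring that is either a number field or its ring of integers. -/
structure IsKummerSystem (n : ℕ) (z : A) (β : ι → A) (b : ι → ℕ) : Prop where
  pos : 0 < n
  isPrimitiveRoot : IsPrimitiveRoot z n
  pow_eq : ∀ i, β i ^ n = b i
  radicand_pos : ∀ i, 0 < b i

/-- The prime `p` is congruent to `1` modulo `n` and every `b i` is an `n`-th power residue
modulo `p`; the latter is expressed by Euler's criterion. -/
def AllPowerResidues (n : ℕ) (b : ι → ℕ) (p : ℕ) : Prop :=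
  ∃ k, p = k * n + 1 ∧ ∀ i, (b i : ZMod p) ^ k = 1

variable {n p : ℕ} {z : A} {β : ι → A} {b : ι → ℕ}

lemma IsKummerSystem.comp {κ : Type*} (h : IsKummerSystem n z β b) (f : κ → ι) :
    IsKummerSystem n z (fun i ↦ β (f i)) (fun i ↦ b (f i)) where
  pos := h.pos
  isPrimitiveRoot := h.isPrimitiveRoot
  pow_eq i := h.pow_eq (f i)
  radicand_pos i := h.radicand_pos (f i)

lemma IsKummerSystem.of_map {A' : Type*} [CommRing A'] (f : A →+* A') (hf : Function.Injective f)
    (h : IsKummerSystem n (f z) (fun i ↦ f (β i)) b) : IsKummerSystem n z β b where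
  pos := h.pos
  isPrimitiveRoot := h.isPrimitiveRoot.of_map_of_injective hf
  pow_eq i := hf (by rw [map_pow, map_natCast, h.pow_eq])
  radicand_pos := h.radicand_pos

variable {G : Type*} [Group G] [MulSemiringAction G A] {P : Ideal A} {σ : G} [IsDomain A]

lemma IsKummerSystem.smul_root_of_unity_eq [P.IsPrime] (h : IsKummerSystem n z β b)
    (hσ : IsFrobenius P p σ) (hp : p.Prime) (hpP : (p : A) ∈ P) {k : ℕ} (hpk : p = k * n + 1) :
    σ • z = z :=
  (hσ.smul_eq_self_iff hp hpP hpk (b := 1) (by simp [h.isPrimitiveRoot.pow_eq_one])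
    hp.not_dvd_one).2 (by simp)

lemma IsKummerSystem.eq_one_of_isFrobenius [P.IsPrime] (h : IsKummerSystem n z β b)
    (hfaithful : ∀ σ : G, σ • z = z → (∀ i, σ • β i = β i) → σ = 1) (hp : p.Prime)
    (hpP : (p : A) ∈ P) (hpb : ∀ i, ¬ p ∣ b i) (hres : AllPowerResidues n b p)
    (hσ : IsFrobenius P p σ) : σ = 1 := by
  obtain ⟨k, hpk, hk⟩ := hres
  exact hfaithful σ (h.smul_root_of_unity_eq hσ hp hpP hpk) fun i ↦
    (hσ.smul_eq_self_iff hp hpP hpk (h.pow_eq i) (hpb i)).2 (hk i)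

lemma IsKummerSystem.allPowerResidues_of_isFrobenius_one [hP : P.IsPrime]
    (h : IsKummerSystem n z β b) (hp : p.Prime) (hpP : (p : A) ∈ P) (hpn : ¬ p ∣ n)
    (hpb : ∀ i, ¬ p ∣ b i) (hone : IsFrobenius P p (1 : G)) : AllPowerResidues n b p := by
  have hzn := h.isPrimitiveRoot.pow_eq_one
  have hzP : z ∉ P := fun hz ↦
    hP.ne_top (P.eq_top_iff_one.2 (hzn ▸ P.pow_mem_of_mem hz n h.pos))
  have hzp : z ^ p = z := by
    refine eq_of_pow_eq_pow_of_sub_mem ((natCast_mem_iff_dvd hp hpP n).not.2 hpn) ?_ hzP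
      (isFrobenius_one_iff.1 hone z)
    rw [← pow_mul, mul_comm, pow_mul, hzn, one_pow]
  have hz_one : z ^ (p - 1) = 1 := by
    refine mul_right_cancel₀ (h.isPrimitiveRoot.ne_zero h.pos.ne') ?_
    rw [← pow_succ, Nat.sub_add_cancel hp.one_lt.le, hzp, one_mul]
  obtain ⟨k, hk⟩ := (h.isPrimitiveRoot.pow_eq_one_iff_dvd _).1 hz_one
  have hpk : p = k * n + 1 := by
    rw [mul_comm, ← hk, Nat.sub_add_cancel hp.one_lt.le]
  exact ⟨k, hpk, fun i ↦
    (hone.smul_eq_self_iff hp hpP hpk (h.pow_eq i) (hpb i)).1 (one_smul _ _)⟩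

end KummerSystem

section FiniteRings

lemma natCard_le_of_forall_pow_eq {F : Type*} [Field F] [Finite F] {m : ℕ}
    (hm : 1 < m) (hpow : ∀ x : F, x ^ m = x) : Nat.card F ≤ m := by
  classical
  let _ := Fintype.ofFinite F
  have hne : (Polynomial.X ^ m - Polynomial.X : Polynomial F) ≠ 0 :=
    FiniteField.X_pow_card_sub_X_ne_zero F hm
  calc Nat.card F = (Finset.univ : Finset F).card := Nat.card_eq_fintype_card
    _ ≤ (Polynomial.X ^ m - Polynomial.X : Polynomial F).natDegree :=
      Polynomial.card_le_degree_of_subset_roots fun x _ ↦ by simp [Polynomial.mem_roots hne, hpow x]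
    _ = m := FiniteField.X_pow_card_sub_X_natDegree_eq F hm

lemma exists_natCast_eq_of_natCard_eq_prime {F : Type*} [CommRing F] {p : ℕ} (hp : p.Prime)
    (hcard : Nat.card F = p) (x : F) : ∃ m : ℕ, (m : F) = x := by
  have := Nat.finite_of_card_ne_zero (hcard ▸ hp.ne_zero)
  have := Fact.mk hp
  let _ := Fintype.ofFinite F
  let e := ZMod.ringEquivOfPrime F hp (by rw [← hcard, Nat.card_eq_fintype_card])
  obtain ⟨m, hm⟩ := ZMod.natCast_zmod_surjective (e.symm x)
  exact ⟨m, by rw [← map_natCast e, hm, e.apply_symm_apply]⟩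

end FiniteRings

section NumberFieldSplitting

variable {M : Type*} [Field M] [NumberField M] {P : PrimeIdeal M} {p : ℕ}

lemma exists_primeIdeal_natCast_mem (hp : p.Prime) : ∃ P : PrimeIdeal M, (p : 𝓞 M) ∈ P.1 := by
  have hne_top : Ideal.span {(p : 𝓞 M)} ≠ ⊤ := by
    intro h
    have hnorm := Ideal.absNorm_span_natCast (S := 𝓞 M) p
    rw [h, Ideal.absNorm_top, RingOfIntegers.rank] at hnorm
    exact (Nat.one_lt_pow Module.finrank_pos.ne' hp.one_lt).ne hnorm
  obtain ⟨Q, hQ, hle⟩ := Ideal.exists_le_maximal _ hne_top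
  have hmem : (p : 𝓞 M) ∈ Q := hle (Ideal.mem_span_singleton_self _)
  have hQ_ne_bot : Q ≠ ⊥ := by
    rintro rfl
    exact hp.ne_zero (by exact_mod_cast Ideal.mem_bot.1 hmem)
  exact ⟨⟨Q, Ideal.prime_of_isPrime hQ_ne_bot hQ.isPrime⟩, hmem⟩

lemma natCast_mem_of_primeNorm_eq (h : primeNorm P = p) : (p : 𝓞 M) ∈ P.1 :=
  h ▸ natCast_primeNorm_mem P

lemma isFrobenius_one_of_primeNorm_eq (h : primeNorm P = p) :
    IsFrobenius P.1 p (1 : M ≃ₐ[ℚ] M) := by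
  let _ := Fintype.ofFinite (𝓞 M ⧸ P.1)
  refine isFrobenius_one_iff.2 fun x ↦ ?_
  rw [← Ideal.Quotient.eq, map_pow, ← h, ← natCard_quotient, Nat.card_eq_fintype_card]
  exact FiniteField.pow_card _

lemma primeNorm_eq_of_isFrobenius_one (hp : p.Prime) (hpP : (p : 𝓞 M) ∈ P.1)
    (hone : IsFrobenius P.1 p (1 : M ≃ₐ[ℚ] M)) : primeNorm P = p := by
  refine le_antisymm ?_ (Nat.le_of_dvd (Nat.pos_of_ne_zero (primeNorm_ne_zero P))
    ((natCast_mem_iff_dvd hp hpP _).1 (natCast_primeNorm_mem P)))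
  rw [← natCard_quotient]
  refine natCard_le_of_forall_pow_eq hp.one_lt fun x ↦ ?_
  obtain ⟨y, rfl⟩ := Ideal.Quotient.mk_surjective x
  rw [← map_pow]
  exact Ideal.Quotient.eq.2 (isFrobenius_one_iff.1 hone y)

noncomputable instance : MulAction (M ≃ₐ[ℚ] M) (PrimeIdeal M) where
  smul τ P := ⟨τ • P.1, Ideal.prime_of_isPrime ((smul_eq_iff_eq_inv_smul τ).not.2
    ((Ideal.smul_bot (R := 𝓞 M) τ⁻¹).symm ▸ P.2.ne_zero)) inferInstance⟩
  one_smul P := Subtype.ext (one_smul _ P.1)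
  mul_smul τ ρ P := Subtype.ext (mul_smul τ ρ P.1)

lemma coe_smul (τ : M ≃ₐ[ℚ] M) (P : PrimeIdeal M) : (τ • P).1 = τ • P.1 := rfl

lemma primeNorm_smul (τ : M ≃ₐ[ℚ] M) (P : PrimeIdeal M) : primeNorm (τ • P) = primeNorm P := by
  rw [← natCard_quotient, ← natCard_quotient]
  exact Nat.card_congr (Ideal.quotientEquiv P.1 (τ • P).1
    (MulSemiringAction.toRingEquiv (M ≃ₐ[ℚ] M) (𝓞 M) τ) rfl).symm.toEquiv

lemma isFrobenius_of_smul_eq (hp : p.Prime) (hnorm : primeNorm P = p) {τ : M ≃ₐ[ℚ] M}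
    (hτ : τ • P = P) : IsFrobenius P.1 p τ := by
  intro x
  obtain ⟨m, hm⟩ := exists_natCast_eq_of_natCard_eq_prime hp (natCard_quotient P ▸ hnorm)
    (Ideal.Quotient.mk P.1 x)
  have hx : x - m ∈ P.1 := Ideal.Quotient.eq.1 (by rw [← hm, map_natCast])
  have hτx : τ • x - m ∈ P.1 := by
    have := Ideal.smul_mem_pointwise_smul τ _ _ hx
    rwa [← coe_smul, hτ, smul_sub, smul_natCast_eq] at this
  have hsplit : τ • x - x ^ p = (τ • x - m) - (x - m) - (x ^ p - x) := by ring
  rw [hsplit]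
  exact P.1.sub_mem (P.1.sub_mem hτx hx)
    (isFrobenius_one_iff.1 (isFrobenius_one_of_primeNorm_eq hnorm) x)

variable [IsGalois ℚ M]

lemma exists_isFrobenius (hp : p.Prime) (hpP : (p : 𝓞 M) ∈ P.1) :
    ∃ σ : M ≃ₐ[ℚ] M, IsFrobenius P.1 p σ := by
  obtain ⟨σ, hσ⟩ := IsArithFrobAt.exists_of_isInvariant ℤ (M ≃ₐ[ℚ] M) P.1
  refine ⟨σ, fun x ↦ ?_⟩
  have hx := hσ x
  rwa [under_int_eq_span hp hpP, Int.card_ideal_quot] at hx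

lemma exists_smul_eq (hp : p.Prime) {Q : PrimeIdeal M} (hpP : (p : 𝓞 M) ∈ P.1)
    (hpQ : (p : 𝓞 M) ∈ Q.1) : ∃ τ : M ≃ₐ[ℚ] M, τ • P = Q := by
  obtain ⟨τ, hτ⟩ := Algebra.IsInvariant.exists_smul_of_under_eq ℤ (𝓞 M) (M ≃ₐ[ℚ] M) P.1 Q.1
    (by rw [under_int_eq_span hp hpP, under_int_eq_span hp hpQ])
  exact ⟨τ, Subtype.ext hτ.symm⟩

/-- The Galois group acts simply transitively on the primes above a completely split prime. -/
lemma primeIdealCount_eq_finrank (hp : p.Prime) (hpP : (p : 𝓞 M) ∈ P.1)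
    (hfrob : ∀ σ : M ≃ₐ[ℚ] M, IsFrobenius P.1 p σ → σ = 1) :
    primeIdealCount M p = Module.finrank ℚ M := by
  obtain ⟨σ, hσ⟩ := exists_isFrobenius hp hpP
  have hnorm : primeNorm P = p := primeNorm_eq_of_isFrobenius_one hp hpP (hfrob σ hσ ▸ hσ)
  rw [← IsGalois.card_aut_eq_finrank, primeIdealCount]
  symm
  refine Nat.card_eq_of_bijective (fun τ ↦ ⟨τ • P, (primeNorm_smul τ P).trans hnorm⟩)
    ⟨fun τ ρ h ↦ ?_, fun Q ↦ ?_⟩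
  · have heq : τ • P = ρ • P := congrArg Subtype.val h
    have hstab : (ρ⁻¹ * τ) • P = P := by rw [mul_smul, heq, inv_smul_smul]
    exact (inv_mul_eq_one.1 (hfrob _ (isFrobenius_of_smul_eq hp hnorm hstab))).symm
  · obtain ⟨τ, hτ⟩ := exists_smul_eq hp hpP (natCast_mem_of_primeNorm_eq Q.2)
    exact ⟨τ, Subtype.ext hτ⟩

variable {ι : Type*} {n : ℕ} {z : 𝓞 M} {β : ι → 𝓞 M} {b : ι → ℕ}

open scoped Classical in
theorem IsKummerSystem.primeIdealCount_eq (h : IsKummerSystem n z β b)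
    (hfaithful : ∀ σ : M ≃ₐ[ℚ] M, σ • z = z → (∀ i, σ • β i = β i) → σ = 1)
    (hp : p.Prime) (hpn : ¬ p ∣ n) (hpb : ∀ i, ¬ p ∣ b i) :
    primeIdealCount M p = if AllPowerResidues n b p then Module.finrank ℚ M else 0 := by
  split_ifs with hres
  · obtain ⟨P, hpP⟩ := exists_primeIdeal_natCast_mem (M := M) hp
    exact primeIdealCount_eq_finrank hp hpP fun σ ↦
      h.eq_one_of_isFrobenius hfaithful hp hpP hpb hres
  · rw [primeIdealCount, Nat.card_eq_zero]
    exact .inl ⟨fun P ↦ hres <| h.allPowerResidues_of_isFrobenius_one hp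
      (natCast_mem_of_primeNorm_eq P.2) hpn hpb (isFrobenius_one_of_primeNorm_eq P.2)⟩

end NumberFieldSplitting

/-! ### Densities of sets of primes -/

section MeanValue

/-- The arithmetic function `f` has mean value `A`; for a weighted indicator of a set of primes such
as `log p · 1_S(p)`, this is the natural density of `S`, by the prime number theorem. -/
def HasMeanValue (f : ℕ → ℝ) (A : ℝ) : Prop :=
  Tendsto (fun x : ℕ ↦ (∑ p ∈ Finset.Icc 1 x, f p) / x) atTop (𝓝 A)

lemma HasMeanValue.congr' {f g : ℕ → ℝ} {A : ℝ} (hf : HasMeanValue f A) (hfg : f =ᶠ[atTop] g) :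
    HasMeanValue g A := by
  obtain ⟨N, hN⟩ := eventually_atTop.1 hfg
  have hconst : Tendsto (fun x : ℕ ↦ (∑ p ∈ Finset.Icc 1 N, (g p - f p)) / (x : ℝ)) atTop (𝓝 0) :=
    tendsto_const_nhds.div_atTop tendsto_natCast_atTop_atTop
  have hadd := Tendsto.add hf hconst
  rw [add_zero] at hadd
  refine hadd.congr' ?_
  filter_upwards [eventually_ge_atTop N] with x hx
  have htail : ∑ p ∈ Finset.Icc 1 N, (g p - f p) = ∑ p ∈ Finset.Icc 1 x, (g p - f p) := by
    refine Finset.sum_subset (Finset.Icc_subset_Icc_right hx) fun p hp hpN ↦ ?_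
    rw [Finset.mem_Icc] at hp hpN
    rw [hN p (by omega), sub_self]
  rw [← add_div, htail, ← Finset.sum_add_distrib]
  simp only [add_sub_cancel]

lemma HasMeanValue.const_mul {f : ℕ → ℝ} {A : ℝ} (hf : HasMeanValue f A) (c : ℝ) :
    HasMeanValue (fun p ↦ c * f p) (c * A) :=
  (Tendsto.const_mul c hf).congr fun x ↦ by rw [← Finset.mul_sum, mul_div_assoc]

lemma HasMeanValue.sum {ι : Type*} {s : Finset ι} {f : ι → ℕ → ℝ} {A : ι → ℝ}
    (hf : ∀ i ∈ s, HasMeanValue (f i) (A i)) :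
    HasMeanValue (fun p ↦ ∑ i ∈ s, f i p) (∑ i ∈ s, A i) :=
  (tendsto_finsetSum s hf).congr fun x ↦ by rw [← Finset.sum_div, Finset.sum_comm]

variable (K : Type*) [Field K] [NumberField K]

lemma hasMeanValue_primeVonMangoldt : HasMeanValue (primeVonMangoldt K) 1 :=
  ((tendsto_sum_primeVonMangoldt_div K).comp tendsto_natCast_atTop_atTop).congr fun x ↦ by
    simp only [Function.comp_apply, Nat.floor_natCast]

end MeanValue

section PrimeCount

open scoped Classical in
/-- The function equal to `log p` at the primes `p` satisfying `C`, and to zero elsewhere. Its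
mean value is the natural density of these primes among all primes. -/
noncomputable def primeLog (C : ℕ → Prop) (p : ℕ) : ℝ := if p.Prime ∧ C p then Real.log p else 0

open scoped Classical in
/-- The number of primes `p ≤ x` satisfying `C`. -/
noncomputable def primeCount (C : ℕ → Prop) (x : ℕ) : ℕ :=
  ((Finset.Icc 1 x).filter fun p ↦ p.Prime ∧ C p).card

variable (C : ℕ → Prop) (x : ℕ)

lemma primeCount_eq_ncard : primeCount C x = {p ∈ {p | p.Prime ∧ C p} | p ≤ x}.ncard := by
  rw [primeCount, ← Set.ncard_coe_finset]
  congr 1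
  ext p
  simp only [Finset.coe_filter, Finset.mem_Icc, Set.mem_ofPred_eq]
  exact ⟨fun h ↦ ⟨h.2, h.1.2⟩, fun h ↦ ⟨⟨h.1.1.one_lt.le, h.2⟩, h.1⟩⟩

lemma primeCount_true : primeCount (fun _ ↦ True) x = x.primeCounting := by
  rw [primeCount, Nat.primeCounting, Nat.primeCounting', Nat.count_eq_card_filter_range]
  congr 1
  ext p
  simp only [Finset.mem_filter, Finset.mem_range, Finset.mem_Icc, and_true]
  exact ⟨fun h ↦ ⟨by omega, h.2⟩, fun h ↦ ⟨⟨h.2.one_lt.le, by omega⟩, h.2⟩⟩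

lemma sum_primeLog_true : ∑ p ∈ Finset.Icc 1 x, primeLog (fun _ ↦ True) p = Chebyshev.theta x := by
  rw [Chebyshev.theta_eq_sum_Icc, Nat.floor_natCast, Finset.sum_filter]
  refine Finset.sum_subset_zero_on_sdiff (Finset.Icc_subset_Icc_left zero_le_one) ?_ ?_
  · intro p hp
    simp only [Finset.mem_sdiff, Finset.mem_Icc] at hp
    simp [show p = 0 by omega]
  · simp [primeLog]

open scoped Classical in
lemma primeCount_mul_log_sub_sum_primeLog :
    primeCount C x * Real.log x - ∑ p ∈ Finset.Icc 1 x, primeLog C p =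
      ∑ p ∈ (Finset.Icc 1 x).filter fun p ↦ p.Prime ∧ C p, (Real.log x - Real.log p) := by
  simp only [primeCount, primeLog, Finset.sum_sub_distrib, Finset.sum_const, nsmul_eq_mul,
    Finset.sum_filter]

variable {x} in
lemma log_sub_log_nonneg_of_mem_Icc {p : ℕ} (hp : p ∈ Finset.Icc 1 x) :
    0 ≤ Real.log x - Real.log p := by
  rw [Finset.mem_Icc] at hp
  exact sub_nonneg.2 (Real.log_le_log (by exact_mod_cast hp.1) (by exact_mod_cast hp.2))

lemma primeCount_mul_log_sub_sum_primeLog_nonneg :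
    0 ≤ primeCount C x * Real.log x - ∑ p ∈ Finset.Icc 1 x, primeLog C p := by
  classical
  rw [primeCount_mul_log_sub_sum_primeLog]
  exact Finset.sum_nonneg fun p hp ↦ log_sub_log_nonneg_of_mem_Icc (Finset.filter_subset _ _ hp)

lemma primeCount_mul_log_sub_sum_primeLog_le :
    primeCount C x * Real.log x - ∑ p ∈ Finset.Icc 1 x, primeLog C p ≤
      x.primeCounting * Real.log x - Chebyshev.theta x := by
  rw [← primeCount_true, ← sum_primeLog_true, primeCount_mul_log_sub_sum_primeLog,
    primeCount_mul_log_sub_sum_primeLog]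
  refine Finset.sum_le_sum_of_subset_of_nonneg (fun p hp ↦ ?_) fun p hp _ ↦ ?_ <;>
    simp only [Finset.mem_filter] at hp ⊢
  · exact ⟨hp.1, hp.2.1, trivial⟩
  · exact log_sub_log_nonneg_of_mem_Icc hp.1

lemma tendsto_primeCounting_mul_log_sub_theta_div :
    Tendsto (fun x : ℕ ↦ ((x.primeCounting : ℝ) * Real.log x - Chebyshev.theta x) / x) atTop
      (𝓝 0) := by
  have hO := (Chebyshev.primeCounting_sub_theta_div_log_isBigO.comp_tendsto
    tendsto_natCast_atTop_atTop).mul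
      (Asymptotics.isBigO_refl (fun x : ℕ ↦ Real.log x / x) atTop)
  refine Asymptotics.IsBigO.trans_tendsto (g'' := fun x : ℕ ↦ (Real.log x)⁻¹) (hO.congr' ?_ ?_)
    (Real.tendsto_log_atTop.comp tendsto_natCast_atTop_atTop).inv_tendsto_atTop
  all_goals
    filter_upwards [eventually_gt_atTop 1] with x hx
    have hlog : Real.log x ≠ 0 := (Real.log_pos (by exact_mod_cast hx)).ne'
    have hx0 : (x : ℝ) ≠ 0 := by positivity
    simp only [Function.comp, Nat.floor_natCast]
    field_simp

variable {C}

lemma HasMeanValue.tendsto_primeCount_mul_log_div {A : ℝ} (h : HasMeanValue (primeLog C) A) :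
    Tendsto (fun x : ℕ ↦ primeCount C x * Real.log x / x) atTop (𝓝 A) := by
  have hsub : Tendsto (fun x : ℕ ↦ (primeCount C x * Real.log x -
      ∑ p ∈ Finset.Icc 1 x, primeLog C p) / x) atTop (𝓝 0) :=
    squeeze_zero
      (fun x ↦ div_nonneg (primeCount_mul_log_sub_sum_primeLog_nonneg C x) x.cast_nonneg)
      (fun x ↦ div_le_div_of_nonneg_right (primeCount_mul_log_sub_sum_primeLog_le C x)
        x.cast_nonneg) tendsto_primeCounting_mul_log_sub_theta_div
  have hadd := hsub.add h
  rw [zero_add] at hadd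
  exact hadd.congr fun x ↦ by rw [← add_div, sub_add_cancel]

end PrimeCount

section Kummer

lemma eventually_forall_not_dvd {ι : Type*} [Finite ι] {b : ι → ℕ} (hb : ∀ i, 0 < b i) :
    ∀ᶠ m : ℕ in atTop, ∀ i, ¬ m ∣ b i :=
  eventually_all.2 fun i ↦ (eventually_gt_atTop (b i)).mono fun _ hm ↦
    Nat.not_dvd_of_pos_of_lt (hb i) hm

variable {M : Type*} [Field M] {ι : Type*} {n : ℕ} {z : M} {β : ι → M} {b : ι → ℕ}

lemma IsKummerSystem.exists_ringOfIntegers (h : IsKummerSystem n z β b) :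
    ∃ (z' : 𝓞 M) (β' : ι → 𝓞 M), IsKummerSystem n z' β' b ∧ (z' : M) = z ∧
      ∀ i, (β' i : M) = β i := by
  have hz : IsIntegral ℤ z :=
    IsIntegral.of_pow h.pos (h.isPrimitiveRoot.pow_eq_one ▸ isIntegral_one)
  have hβ : ∀ i, IsIntegral ℤ (β i) := fun i ↦
    IsIntegral.of_pow h.pos (h.pow_eq i ▸ isIntegral_natCast _)
  exact ⟨⟨z, hz⟩, fun i ↦ ⟨β i, hβ i⟩, .of_map (algebraMap (𝓞 M) M) RingOfIntegers.coe_injective h,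
    rfl, fun _ ↦ rfl⟩

variable [NumberField M] [IsGalois ℚ M]

theorem IsKummerSystem.hasMeanValue_allPowerResidues [Finite ι] (h : IsKummerSystem n z β b)
    (hfaithful : ∀ σ : M ≃ₐ[ℚ] M, σ z = z → (∀ i, σ (β i) = β i) → σ = 1) :
    HasMeanValue (primeLog (AllPowerResidues n b)) (1 / Module.finrank ℚ M) := by
  obtain ⟨z', β', h', rfl, hβ'⟩ := h.exists_ringOfIntegers
  have hfaithful' : ∀ σ : M ≃ₐ[ℚ] M, σ • z' = z' → (∀ i, σ • β' i = β' i) → σ = 1 :=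
    fun σ hz hβ ↦ hfaithful σ (congrArg (algebraMap (𝓞 M) M) hz) fun i ↦
      hβ' i ▸ congrArg (algebraMap (𝓞 M) M) (hβ i)
  have hdeg : (Module.finrank ℚ M : ℝ) ≠ 0 := by exact_mod_cast Module.finrank_pos.ne'
  have hmean := (hasMeanValue_primeVonMangoldt M).const_mul (1 / (Module.finrank ℚ M : ℝ))
  rw [mul_one] at hmean
  refine hmean.congr' ?_
  filter_upwards [eventually_gt_atTop n, eventually_forall_not_dvd h.radicand_pos] with p hpn hpb
  rw [primeVonMangoldt, primeLog]
  by_cases hp : p.Prime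
  · rw [h'.primeIdealCount_eq hfaithful' hp (Nat.not_dvd_of_pos_of_lt h.pos hpn) hpb]
    by_cases hres : AllPowerResidues n b p
    · simp only [hp, hres, and_self, if_true]
      field_simp
    · simp [hres]
  · simp [hp]

/-- Prime number theorem, as the case `M = ℚ`, `n = 1` of the preceding result. -/
theorem hasMeanValue_primeLog_true : HasMeanValue (primeLog fun _ ↦ True) 1 := by
  have : @IsGalois ℚ _ ℚ _ DivisionRing.toRatAlgebra := by
    convert IsGalois.self ℚ
    exact Subsingleton.elim _ _
  have hsystem : IsKummerSystem 1 (1 : ℚ) (Empty.elim : Empty → ℚ) Empty.elim :=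
    ⟨one_pos, IsPrimitiveRoot.one, fun i ↦ i.elim, fun i ↦ i.elim⟩
  have hmean := hsystem.hasMeanValue_allPowerResidues fun σ _ _ ↦
    AlgEquiv.ext fun x ↦ map_ratCast σ x
  rw [Module.finrank_self, Nat.cast_one, div_one] at hmean
  refine hmean.congr' ?_
  filter_upwards [eventually_gt_atTop 0] with p hp
  have hres : AllPowerResidues 1 (Empty.elim : Empty → ℕ) p :=
    ⟨p - 1, by omega, fun i ↦ i.elim⟩
  simp [primeLog, hres]

theorem HasMeanValue.tendsto_primeCount_div_primeCounting {C : ℕ → Prop} {A : ℝ}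
    (h : HasMeanValue (primeLog C) A) :
    Tendsto (fun x : ℕ ↦ (primeCount C x : ℝ) / x.primeCounting) atTop (𝓝 A) := by
  have hquot := h.tendsto_primeCount_mul_log_div.div
    hasMeanValue_primeLog_true.tendsto_primeCount_mul_log_div one_ne_zero
  rw [div_one] at hquot
  refine hquot.congr' ?_
  filter_upwards [eventually_gt_atTop 1] with x hx
  have hlog : Real.log x ≠ 0 := (Real.log_pos (by exact_mod_cast hx)).ne'
  have hx0 : (x : ℝ) ≠ 0 := by positivity
  rw [Pi.div_apply, primeCount_true, div_div_div_cancel_right₀ hx0, mul_div_mul_right _ _ hlog]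

end Kummer

/-! ### Inclusion–exclusion over Kummer subextensions -/

section InclusionExclusion

variable {ι : Type*} [Fintype ι]

open scoped Classical in
lemma sum_neg_one_pow_card_mul_ite (u : ι → Prop) :
    ∑ T : Finset ι, (-1 : ℝ) ^ T.card * (if ∀ i ∈ T, u i then 1 else 0) =
      if ∀ i, ¬ u i then 1 else 0 := by
  have hprod : ∏ i, ((1 : ℝ) + -(if u i then 1 else 0)) = if ∀ i, ¬ u i then 1 else 0 := by
    have hfactor (i : ι) : (1 : ℝ) + -(if u i then 1 else 0) = if ¬ u i then 1 else 0 := by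
      split_ifs <;> simp
    simp only [hfactor, Finset.prod_boole, Finset.mem_univ, true_imp_iff]
  rw [← hprod, Finset.prod_one_add, Finset.powerset_univ]
  exact Finset.sum_congr rfl fun T _ ↦ by
    rw [Finset.prod_neg, Finset.prod_boole]
    congr!

open scoped Classical in
lemma sum_neg_one_pow_card_mul_natCard {G : Type*} [Finite G] (q : G → Prop) (u : ι → G → Prop) :
    ∑ T : Finset ι, (-1 : ℝ) ^ T.card * Nat.card {σ // q σ ∧ ∀ i ∈ T, u i σ} =
      Nat.card {σ // q σ ∧ ∀ i, ¬ u i σ} := by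
  let _ := Fintype.ofFinite G
  have hcard (r : G → Prop) : (Nat.card {σ // q σ ∧ r σ} : ℝ) =
      ∑ σ, (if q σ then 1 else 0) * if r σ then 1 else 0 := by
    rw [Nat.card_eq_fintype_card, Fintype.card_subtype, ← Finset.sum_boole]
    exact Finset.sum_congr rfl fun σ _ ↦ by split_ifs <;> simp_all
  simp only [hcard, Finset.mul_sum]
  rw [Finset.sum_comm]
  refine Finset.sum_congr rfl fun σ _ ↦ ?_
  simp only [mul_left_comm _ (if q σ then (1 : ℝ) else 0), ← Finset.mul_sum]
  convert! congrArg _ (sum_neg_one_pow_card_mul_ite fun i ↦ u i σ)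

end InclusionExclusion

section PowerResidues

variable {ι : Type*} {n p k : ℕ}

/-- The prime `p` is congruent to `1` modulo `n` and no `b i` is an `n`-th power residue
modulo `p`; the latter is expressed by Euler's criterion. -/
def NoPowerResidues (n : ℕ) (b : ι → ℕ) (p : ℕ) : Prop :=
  ∃ k, p = k * n + 1 ∧ ∀ i, (b i : ZMod p) ^ k ≠ 1

lemma exists_eq_mul_add_one_and_iff (hn : 0 < n) (hpk : p = k * n + 1) (D : ℕ → Prop) :
    (∃ l, p = l * n + 1 ∧ D l) ↔ D k := by
  refine ⟨?_, fun h ↦ ⟨k, hpk, h⟩⟩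
  rintro ⟨l, hpl, hl⟩
  rwa [← Nat.eq_of_mul_eq_mul_right hn (Nat.succ_injective (hpl.symm.trans hpk))]

lemma primeLog_noPowerResidues [Fintype ι] (hn : 0 < n) (b : ι → ℕ) (p : ℕ) :
    primeLog (NoPowerResidues n b) p = ∑ T : Finset ι,
      (-1 : ℝ) ^ T.card * primeLog (AllPowerResidues n fun i : T ↦ b i) p := by
  classical
  by_cases hp : p.Prime
  swap
  · simp [primeLog, hp]
  by_cases hk : ∃ k, p = k * n + 1
  swap
  · have hnone (D : ℕ → Prop) : ¬ ∃ k, p = k * n + 1 ∧ D k := fun ⟨k, hpk, _⟩ ↦ hk ⟨k, hpk⟩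
    simp [primeLog, NoPowerResidues, AllPowerResidues, hnone]
  obtain ⟨k, hpk⟩ := hk
  have hsum := congrArg (· * Real.log p)
    (sum_neg_one_pow_card_mul_ite fun i ↦ (b i : ZMod p) ^ k = 1)
  simp only [Finset.sum_mul, mul_assoc, ite_mul, one_mul, zero_mul] at hsum
  simp only [primeLog, NoPowerResidues, AllPowerResidues, hp, true_and, Subtype.forall, ne_eq,
    exists_eq_mul_add_one_and_iff hn hpk, hsum]

end PowerResidues

section KummerStabilizer

variable {L : Type*} [Field L] [NumberField L] {ι : Type*} {n : ℕ} {z : L} {β : ι → L} {b : ι → ℕ}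

/-- The Galois group of `L` over the subfield generated by `z` and the `β i`. -/
def kummerStabilizer (z : L) (β : ι → L) : Subgroup (L ≃ₐ[ℚ] L) :=
  fixingSubgroup (L ≃ₐ[ℚ] L) (insert z (range β))

lemma mem_kummerStabilizer {σ : L ≃ₐ[ℚ] L} :
    σ ∈ kummerStabilizer z β ↔ σ z = z ∧ ∀ i, σ (β i) = β i := by
  simp [kummerStabilizer, mem_fixingSubgroup_iff]

lemma IsKummerSystem.root_ne_zero (h : IsKummerSystem n z β b) (i : ι) : β i ≠ 0 := by
  intro h0
  have hpow := h.pow_eq i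
  rw [h0, zero_pow h.pos.ne'] at hpow
  exact (h.radicand_pos i).ne (by exact_mod_cast hpow)

lemma apply_eq_self_of_pow_eq_pow {σ : L ≃ₐ[ℚ] L} (hn : 0 < n) (hz : IsPrimitiveRoot z n)
    (hσz : σ z = z) {x y : L} (hx : x ≠ 0) (hpow : y ^ n = x ^ n) (hσx : σ x = x) : σ y = y := by
  have := NeZero.mk hn.ne'
  obtain ⟨i, -, hi⟩ := hz.eq_pow_of_pow_eq_one
    (show (y / x) ^ n = 1 by rw [div_pow, hpow, div_self (pow_ne_zero _ hx)])
  rw [← div_mul_cancel₀ y hx, ← hi, map_mul, map_pow, hσz, hσx]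

lemma IsKummerSystem.normal_kummerStabilizer (h : IsKummerSystem n z β b) :
    (kummerStabilizer z β).Normal := by
  refine ⟨fun σ hσ τ ↦ ?_⟩
  obtain ⟨hσz, hσβ⟩ := mem_kummerStabilizer.1 hσ
  have hconj {x : L} {m : ℕ} (hx : x ≠ 0) (hxn : x ^ n = m) (hσx : σ x = x) :
      (τ * σ * τ⁻¹) x = x := by
    rw [AlgEquiv.mul_apply, AlgEquiv.mul_apply, apply_eq_self_of_pow_eq_pow h.pos h.isPrimitiveRoot
      hσz hx (by rw [← map_pow, hxn, map_natCast]) hσx, ← AlgEquiv.mul_apply, mul_inv_cancel,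
      AlgEquiv.one_apply]
  exact mem_kummerStabilizer.2 ⟨hconj (m := 1) (h.isPrimitiveRoot.ne_zero h.pos.ne')
    (by simp [h.isPrimitiveRoot.pow_eq_one]) hσz,
    fun i ↦ hconj (h.root_ne_zero i) (h.pow_eq i) (hσβ i)⟩

variable [IsGalois ℚ L]

lemma one_div_finrank_fixedField (H : Subgroup (L ≃ₐ[ℚ] L)) :
    (1 : ℝ) / Module.finrank ℚ (IntermediateField.fixedField H) =
      Nat.card H / Nat.card (L ≃ₐ[ℚ] L) := by
  have hmul := Module.finrank_mul_finrank ℚ (IntermediateField.fixedField H) L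
  rw [IntermediateField.finrank_fixedField_eq_card, ← IsGalois.card_aut_eq_finrank ℚ L] at hmul
  have hH : (Nat.card H : ℝ) ≠ 0 := by exact_mod_cast Nat.card_pos.ne'
  rw [← hmul, Nat.cast_mul, div_mul_cancel_right₀ hH, one_div]

lemma eq_one_of_liftNormal_mem {H : Subgroup (L ≃ₐ[ℚ] L)}
    (σ : IntermediateField.fixedField H ≃ₐ[ℚ] IntermediateField.fixedField H)
    (hσ : σ.liftNormal L ∈ H) : σ = 1 := by
  ext x
  have hfix := (IntermediateField.mem_fixedField_iff _ _).1 x.2 _ hσ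
  exact (AlgEquiv.liftNormal_commutes σ L x).symm.trans hfix

theorem IsKummerSystem.hasMeanValue_allPowerResidues_card [Finite ι]
    (h : IsKummerSystem n z β b) :
    HasMeanValue (primeLog (AllPowerResidues n b))
      (Nat.card (kummerStabilizer z β) / Nat.card (L ≃ₐ[ℚ] L)) := by
  have := h.normal_kummerStabilizer
  let M := IntermediateField.fixedField (kummerStabilizer z β)
  have : IsGalois ℚ M := IsGalois.of_fixedField_normal_subgroup _
  have hz : z ∈ M := (IntermediateField.mem_fixedField_iff _ _).2 fun σ hσ ↦
    (mem_kummerStabilizer.1 hσ).1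
  have hβ (i : ι) : β i ∈ M := (IntermediateField.mem_fixedField_iff _ _).2 fun σ hσ ↦
    (mem_kummerStabilizer.1 hσ).2 i
  have hM : IsKummerSystem n (⟨z, hz⟩ : M) (fun i ↦ ⟨β i, hβ i⟩) b :=
    .of_map (algebraMap M L) (algebraMap M L).injective h
  rw [← one_div_finrank_fixedField]
  refine hM.hasMeanValue_allPowerResidues fun σ hσz hσβ ↦
    eq_one_of_liftNormal_mem σ (mem_kummerStabilizer.2 ⟨?_, fun i ↦ ?_⟩)
  · exact (AlgEquiv.liftNormal_commutes σ L ⟨z, hz⟩).trans (congrArg _ hσz)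
  · exact (AlgEquiv.liftNormal_commutes σ L ⟨β i, hβ i⟩).trans (congrArg _ (hσβ i))

theorem IsKummerSystem.hasMeanValue_noPowerResidues [Finite ι] (h : IsKummerSystem n z β b) :
    HasMeanValue (primeLog (NoPowerResidues n b))
      (Nat.card {σ : L ≃ₐ[ℚ] L // σ z = z ∧ ∀ i, σ (β i) ≠ β i} / Nat.card (L ≃ₐ[ℚ] L)) := by
  let _ := Fintype.ofFinite ι
  have hmean := HasMeanValue.sum fun (T : Finset ι) (_ : T ∈ Finset.univ) ↦
    ((h.comp fun i : T ↦ (i : ι)).hasMeanValue_allPowerResidues_card).const_mul ((-1) ^ T.card)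
  have hcard (T : Finset ι) : Nat.card (kummerStabilizer z fun i : T ↦ β i) =
      Nat.card {σ : L ≃ₐ[ℚ] L // σ z = z ∧ ∀ i ∈ T, σ (β i) = β i} :=
    Nat.card_congr (Equiv.subtypeEquivRight fun σ ↦ by simp [mem_kummerStabilizer])
  simp only [hcard, ← mul_div_assoc, ← Finset.sum_div, sum_neg_one_pow_card_mul_natCard,
    ← primeLog_noPowerResidues h.pos] at hmean
  exact hmean

/-- The automorphism is a Frobenius element at `p`. -/
lemma IsKummerSystem.exists_apply_ne (h : IsKummerSystem n z β b) {p : ℕ} (hp : p.Prime)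
    (hpb : ∀ i, ¬ p ∣ b i) (hres : NoPowerResidues n b p) :
    ∃ σ : L ≃ₐ[ℚ] L, σ z = z ∧ ∀ i, σ (β i) ≠ β i := by
  obtain ⟨k, hpk, hk⟩ := hres
  obtain ⟨z', β', h', rfl, hβ'⟩ := h.exists_ringOfIntegers
  obtain ⟨P, hpP⟩ := exists_primeIdeal_natCast_mem (M := L) hp
  obtain ⟨σ, hσ⟩ := exists_isFrobenius hp hpP
  refine ⟨σ, congrArg (algebraMap (𝓞 L) L) (h'.smul_root_of_unity_eq hσ hp hpP hpk), fun i hi ↦ ?_⟩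
  rw [← hβ' i] at hi
  exact hk i ((hσ.smul_eq_self_iff hp hpP hpk (h'.pow_eq i) (hpb i)).1
    (RingOfIntegers.coe_injective hi))

end KummerStabilizer

section Existence

open Polynomial

lemma exists_isGalois_splits (f : ℚ[X]) : ∃ (L : Type) (_ : Field L) (_ : NumberField L),
    IsGalois ℚ L ∧ (f.map (algebraMap ℚ L)).Splits := by
  obtain ⟨L, _, hAlg, hsplit⟩ : ∃ (L : Type) (_ : Field L) (_ : Algebra ℚ L),
      f.IsSplittingField ℚ L :=
    ⟨f.SplittingField, inferInstance, inferInstance, IsSplittingField.splittingField f⟩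
  have : CharZero L := algebraRat.charZero L
  obtain rfl : hAlg = DivisionRing.toRatAlgebra := Subsingleton.elim _ _
  have : FiniteDimensional ℚ L := IsSplittingField.finiteDimensional L f
  have : Normal ℚ L := Normal.of_isSplittingField f
  exact ⟨L, inferInstance, ⟨⟩, ⟨⟩, hsplit.splits'⟩

lemma exists_aeval_eq_zero_of_dvd {L : Type*} [Field L] [Algebra ℚ L] {f g : ℚ[X]} (hf : f ≠ 0)
    (hsplit : (f.map (algebraMap ℚ L)).Splits) (hgf : g ∣ f) (hg : 0 < g.natDegree) :
    ∃ x : L, aeval x g = 0 := by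
  obtain ⟨x, hx⟩ := (hsplit.of_dvd (map_ne_zero hf) (map_dvd _ hgf)).exists_eval_eq_zero
    (by rw [degree_map]; exact (natDegree_pos_iff_degree_pos.1 hg).ne')
  exact ⟨x, by rwa [eval_map_algebraMap] at hx⟩

theorem exists_isKummerSystem {ι : Type*} [Finite ι] {n : ℕ} (hn : 0 < n) {b : ι → ℕ}
    (hb : ∀ i, 0 < b i) : ∃ (L : Type) (_ : Field L) (_ : NumberField L),
      IsGalois ℚ L ∧ ∃ (z : L) (β : ι → L), IsKummerSystem n z β b := by
  let _ := Fintype.ofFinite ι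
  let f : ℚ[X] := cyclotomic n ℚ * ∏ i, (X ^ n - C (b i : ℚ))
  have hf : f ≠ 0 := mul_ne_zero (cyclotomic_ne_zero _ _)
    (Finset.prod_ne_zero_iff.2 fun i _ ↦ X_pow_sub_C_ne_zero hn _)
  obtain ⟨L, _, _, hGalois, hsplit⟩ := exists_isGalois_splits f
  obtain ⟨z, hz⟩ := exists_aeval_eq_zero_of_dvd hf hsplit (dvd_mul_right _ _)
    (by rw [natDegree_cyclotomic]; exact Nat.totient_pos.2 hn)
  have hroot (i : ι) : ∃ x : L, x ^ n = b i := by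
    obtain ⟨x, hx⟩ := exists_aeval_eq_zero_of_dvd (g := X ^ n - C (b i : ℚ)) hf hsplit
      ((Finset.dvd_prod_of_mem _ (Finset.mem_univ i)).mul_left _)
      (by rwa [natDegree_X_pow_sub_C])
    simp only [map_sub, map_pow, aeval_X, map_natCast] at hx
    exact ⟨x, sub_eq_zero.1 hx⟩
  choose β hβ using hroot
  have : NeZero (n : L) := ⟨by exact_mod_cast hn.ne'⟩
  refine ⟨L, inferInstance, inferInstance, hGalois, z, β, hn, ?_, hβ, hb⟩
  rwa [← isRoot_cyclotomic_iff, ← map_cyclotomic n (algebraMap ℚ L), IsRoot, eval_map_algebraMap]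

end Existence

/-! ### Strong representatives -/

section StrongRepresentatives

variable {n p k : ℕ}

/-- The pairs `1 ≤ i < j ≤ n`, which index the radicals adjoined to the Kummer field. -/
abbrev OrderedPair (n : ℕ) : Type := {t : ℕ × ℕ // 1 ≤ t.1 ∧ t.1 < t.2 ∧ t.2 ≤ n}

instance : Finite (OrderedPair n) :=
  Set.Finite.subset (s := Icc 1 n ×ˢ Icc 1 n) ((finite_Icc 1 n).prod (finite_Icc 1 n))
    fun _ ⟨hi, hij, hj⟩ ↦ ⟨⟨hi, by omega⟩, ⟨by omega, hj⟩⟩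

/-- A positive integer congruent to `i / j` up to `n`-th powers: `j ^ (n - 1)` stands for `j⁻¹`. -/
def ratioRadicand (n : ℕ) (t : OrderedPair n) : ℕ := t.1.1 * t.1.2 ^ (n - 1)

lemma ratioRadicand_pos (n : ℕ) (t : OrderedPair n) : 0 < ratioRadicand n t :=
  Nat.mul_pos t.2.1 (pow_pos (by omega) _)

lemma pos_of_eq_mul_add_one (hp : p.Prime) (hpk : p = k * n + 1) : 0 < k := by
  refine Nat.pos_of_ne_zero ?_
  rintro rfl
  exact hp.ne_one (by simpa using hpk)

lemma not_dvd_of_le (hp : p.Prime) (hpk : p = k * n + 1) {i : ℕ} (hi : 0 < i) (hin : i ≤ n) :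
    ¬ p ∣ i := by
  refine Nat.not_dvd_of_pos_of_lt hi ?_
  have := Nat.le_mul_of_pos_left n (pos_of_eq_mul_add_one hp hpk)
  omega

lemma not_dvd_ratioRadicand (hp : p.Prime) (hpk : p = k * n + 1) (t : OrderedPair n) :
    ¬ p ∣ ratioRadicand n t := by
  obtain ⟨⟨i, j⟩, hi, hij, hj⟩ := t
  exact hp.not_dvd_mul (not_dvd_of_le hp hpk hi (hij.le.trans hj)) fun h ↦
    not_dvd_of_le hp hpk (hi.trans hij.le) hj (hp.dvd_of_dvd_pow h)

lemma pow_eq_pow_iff_ratioRadicand_pow_eq_one (hp : p.Prime) (hpk : p = k * n + 1)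
    (t : OrderedPair n) :
    (t.1.1 : ZMod p) ^ k = (t.1.2 : ZMod p) ^ k ↔ (ratioRadicand n t : ZMod p) ^ k = 1 := by
  obtain ⟨⟨i, j⟩, hi, hij, hj⟩ := t
  have := Fact.mk hp
  have hj0 : (j : ZMod p) ≠ 0 :=
    (ZMod.natCast_eq_zero_iff _ _).not.2 (not_dvd_of_le hp hpk (hi.trans hij.le) hj)
  have hfermat : (j : ZMod p) ^ k * ((j : ZMod p) ^ (n - 1)) ^ k = 1 := by
    rw [← mul_pow, ← pow_succ', Nat.sub_add_cancel (by omega), ← pow_mul, mul_comm,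
      ← ZMod.pow_card_sub_one_eq_one hj0, (Nat.sub_eq_of_eq_add hpk : p - 1 = k * n)]
  simp only [ratioRadicand, Nat.cast_mul, Nat.cast_pow]
  rw [mul_pow, ← hfermat, mul_left_inj' (pow_ne_zero _ (pow_ne_zero _ hj0))]

/-- A prime `p = kn + 1` such that `1 ^ k, …, n ^ k` are pairwise incongruent modulo `p`. -/
def IsStrongRepresentative (n p : ℕ) : Prop :=
  p.Prime ∧ ∃ k : ℕ, 0 < k ∧ p = k * n + 1 ∧
    ∀ i j : ℕ, 1 ≤ i → i < j → j ≤ n → (i : ZMod p) ^ k ≠ (j : ZMod p) ^ k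

theorem isStrongRepresentative_iff :
    IsStrongRepresentative n p ↔ p.Prime ∧ NoPowerResidues n (ratioRadicand n) p := by
  refine and_congr_right fun hp ↦ exists_congr fun k ↦ ?_
  constructor
  · rintro ⟨-, hpk, hne⟩
    exact ⟨hpk, fun t ↦ (pow_eq_pow_iff_ratioRadicand_pow_eq_one hp hpk t).not.1
      (hne _ _ t.2.1 t.2.2.1 t.2.2.2)⟩
  · rintro ⟨hpk, hne⟩
    exact ⟨pos_of_eq_mul_add_one hp hpk, hpk, fun i j hi hij hj ↦
      (pow_eq_pow_iff_ratioRadicand_pow_eq_one hp hpk ⟨(i, j), hi, hij, hj⟩).not.2 (hne _)⟩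

end StrongRepresentatives

lemma infinite_of_tendsto_ncard_div_primeCounting {S : Set ℕ} {δ : ℝ} (hδ : δ ≠ 0)
    (hlim : Tendsto (fun x : ℕ ↦ ({p ∈ S | p ≤ x}.ncard : ℝ) / x.primeCounting) atTop (𝓝 δ)) :
    S.Infinite := by
  intro hfin
  have hbound : Tendsto (fun x : ℕ ↦ (S.ncard : ℝ) / x.primeCounting) atTop (𝓝 0) :=
    tendsto_const_nhds.div_atTop (tendsto_natCast_atTop_atTop.comp Nat.tendsto_primeCounting)
  refine hδ (tendsto_nhds_unique hlim (squeeze_zero (fun x ↦ by positivity) (fun x ↦ ?_) hbound))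
  gcongr
  exact sep_subset _ _

end StrongRepresentative

open StrongRepresentative in
/-- If `n` admits a strong representative, then the set `S` of strong representatives
of order `n` has positive natural density in the primes, and in particular `S` is
infinite. -/
theorem strong_representatives_positive_density (n : ℕ) (hn : 0 < n)
    (S : Set ℕ)
    (hS : S = {p : ℕ | p.Prime ∧ ∃ k : ℕ, 0 < k ∧ p = k * n + 1 ∧
      ∀ i j : ℕ, 1 ≤ i → i < j → j ≤ n →
        (i : ZMod p) ^ k ≠ (j : ZMod p) ^ k})
    (hex : S.Nonempty) :
    (∃ δ : ℝ, 0 < δ ∧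
      Filter.Tendsto
        (fun x : ℕ => (({p ∈ S | p ≤ x}.ncard : ℝ)) / (Nat.primeCounting x : ℝ))
        Filter.atTop (nhds δ)) ∧
    S.Infinite := by
  have hS' : S = {p | p.Prime ∧ NoPowerResidues n (ratioRadicand n) p} :=
    hS.trans (Set.ext fun p ↦ isStrongRepresentative_iff)
  obtain ⟨L, _, _, _, z, β, hKummer⟩ := exists_isKummerSystem hn (ratioRadicand_pos n)
  have hlim := hKummer.hasMeanValue_noPowerResidues.tendsto_primeCount_div_primeCounting
  simp only [primeCount_eq_ncard, ← hS'] at hlim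
  have hδ : (0 : ℝ) < Nat.card {σ : L ≃ₐ[ℚ] L // σ z = z ∧ ∀ i, σ (β i) ≠ β i} /
      Nat.card (L ≃ₐ[ℚ] L) := by
    obtain ⟨p, hp, hres⟩ := hS' ▸ hex
    have hdvd := not_dvd_ratioRadicand hp hres.choose_spec.1
    obtain ⟨σ, hσ⟩ := hKummer.exists_apply_ne hp hdvd hres
    have : Nonempty {σ : L ≃ₐ[ℚ] L // σ z = z ∧ ∀ i, σ (β i) ≠ β i} := ⟨⟨σ, hσ⟩⟩
    exact div_pos (Nat.cast_pos.2 Nat.card_pos) (Nat.cast_pos.2 Nat.card_pos)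
  exact ⟨⟨_, hδ, hlim⟩, infinite_of_tendsto_ncard_div_primeCounting hδ.ne' hlim⟩
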